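/- arXiv:1301.6826 — 5 statements merged into one kernel-verified Lean document; each statement's English description precedes it below -/
import Mathlib

section
/- A finite group G is a solvable SST-group (resp. a solvable BT-group) if and only if G has a normal subgroup N such that N is a solvable PST-group and G/N'' is a solvable SST-group (resp. a solvable BT-group), where N'' denotes the second derived subgroup of N. -/
open scoped Pointwise

section Defs

variable {G : Type*} [Group G]

/-- `K` is an SS-permutable supplement of `H` in `G`: `HK = G` and `H` permutes with
every Sylow subgroup of `K`. -/
def IsSSSupplement (H K : Subgroup G) : Prop :=
  (H : Set G) * (K : Set G) = Set.univ ∧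
    ∀ (p : ℕ) [Fact p.Prime] (P : Sylow p K),
      (H : Set G) * ((P.toSubgroup.map K.subtype : Subgroup G) : Set G) =
        ((P.toSubgroup.map K.subtype : Subgroup G) : Set G) * (H : Set G)

/-- `H` is SS-permutable in `G`: `H` has a supplement `K` such that `H` permutes with
every Sylow subgroup of `K`. -/
def IsSSPermutable (H : Subgroup G) : Prop :=
  ∃ K : Subgroup G, IsSSSupplement H K

/-- `H` is NSS-permutable in `G`: `H` has a normal supplement `K` such that `H` permutes
with every Sylow subgroup of `K`. -/
def IsNSSPermutable (H : Subgroup G) : Prop :=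
  ∃ K : Subgroup G, K.Normal ∧ IsSSSupplement H K

/-- `H` is S-permutable in `G`: it permutes with every Sylow subgroup of `G`. -/
def IsSPermutable (H : Subgroup G) : Prop :=
  ∀ (p : ℕ) [Fact p.Prime] (P : Sylow p G),
    (H : Set G) * ((P : Subgroup G) : Set G) = ((P : Subgroup G) : Set G) * (H : Set G)

/-- `H` is semipermutable in `G`: `HX = XH` for every subgroup `X` with `gcd(|H|,|X|) = 1`. -/
def IsSemipermutable (H : Subgroup G) : Prop :=
  ∀ X : Subgroup G, Nat.Coprime (Nat.card H) (Nat.card X) →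
    (H : Set G) * (X : Set G) = (X : Set G) * (H : Set G)

/-- `H` is S-semipermutable in `G`: `HQ = QH` for every Sylow `q`-subgroup `Q` of `G`
with `q` a prime not dividing `|H|`. -/
def IsSSemipermutable (H : Subgroup G) : Prop :=
  ∀ (q : ℕ) [Fact q.Prime], ¬ q ∣ Nat.card H → ∀ Q : Sylow q G,
    (H : Set G) * ((Q : Subgroup G) : Set G) = ((Q : Subgroup G) : Set G) * (H : Set G)

end Defs

/-- `G` is an SST-group: SS-permutability is a transitive relation. -/
def IsSSTGroup (G : Type*) [Group G] : Prop :=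
  ∀ H K : Subgroup G, H ≤ K → IsSSPermutable (H.subgroupOf K) → IsSSPermutable K →
    IsSSPermutable H

/-- `G` is an NSST-group: NSS-permutability is a transitive relation. -/
def IsNSSTGroup (G : Type*) [Group G] : Prop :=
  ∀ H K : Subgroup G, H ≤ K → IsNSSPermutable (H.subgroupOf K) → IsNSSPermutable K →
    IsNSSPermutable H

/-- `G` is a PST-group: S-permutability is a transitive relation. -/
def IsPSTGroup (G : Type*) [Group G] : Prop :=
  ∀ H K : Subgroup G, H ≤ K → IsSPermutable (H.subgroupOf K) → IsSPermutable K →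
    IsSPermutable H

/-- `G` is a BT-group: semipermutability is a transitive relation. -/
def IsBTGroup (G : Type*) [Group G] : Prop :=
  ∀ H K : Subgroup G, H ≤ K → IsSemipermutable (H.subgroupOf K) → IsSemipermutable K →
    IsSemipermutable H

/-! ### Elements of prime power order -/

set_option linter.unusedSectionVars false

section PElements

variable {G : Type*} [Group G]

/-- The order of `x` is a power of `p`. -/
def IsPElement (p : ℕ) (x : G) : Prop := ∃ n : ℕ, x ^ p ^ n = 1

namespace IsPElement

theorem one (p : ℕ) : IsPElement p (1 : G) := ⟨0, one_pow _⟩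

theorem map {H : Type*} [Group H] (f : G →* H) {p : ℕ} {x : G} (hx : IsPElement p x) :
    IsPElement p (f x) := by
  obtain ⟨n, hn⟩ := hx
  exact ⟨n, by rw [← map_pow, hn, map_one]⟩

theorem of_map {H : Type*} [Group H] {f : G →* H} (hf : Function.Injective f) {p : ℕ} {x : G}
    (hx : IsPElement p (f x)) : IsPElement p x := by
  obtain ⟨n, hn⟩ := hx
  exact ⟨n, hf (by rw [map_pow, hn, map_one])⟩

theorem coe_iff {H : Subgroup G} {p : ℕ} {x : H} : IsPElement p (x : G) ↔ IsPElement p x :=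
  ⟨of_map H.subtype_injective, map H.subtype⟩

theorem conj {p : ℕ} {x : G} (hx : IsPElement p x) (g : G) : IsPElement p (g * x * g⁻¹) :=
  hx.map (MulAut.conj g).toMonoidHom

theorem inv {p : ℕ} {x : G} (hx : IsPElement p x) : IsPElement p x⁻¹ := by
  obtain ⟨n, hn⟩ := hx
  exact ⟨n, by rw [inv_pow, hn, inv_one]⟩

theorem zpow {p : ℕ} {x : G} (hx : IsPElement p x) (k : ℤ) : IsPElement p (x ^ k) := by
  obtain ⟨n, hn⟩ := hx
  refine ⟨n, ?_⟩
  rw [← zpow_natCast, ← zpow_mul, mul_comm, zpow_mul, zpow_natCast, hn, one_zpow]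

theorem mul_of_commute {p : ℕ} {x y : G} (hx : IsPElement p x) (hy : IsPElement p y)
    (h : Commute x y) : IsPElement p (x * y) := by
  obtain ⟨n, hn⟩ := hx
  obtain ⟨m, hm⟩ := hy
  refine ⟨n + m, ?_⟩
  rw [h.mul_pow, pow_add, pow_mul, hn, one_pow, one_mul, mul_comm, pow_mul, hm, one_pow]

theorem eq_one {p q : ℕ} (hp : p.Prime) (hq : q.Prime) (hpq : p ≠ q) {x : G}
    (hx : IsPElement p x) (hx' : IsPElement q x) : x = 1 := by
  obtain ⟨n, hn⟩ := hx
  obtain ⟨m, hm⟩ := hx'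
  exact orderOf_eq_one_iff.1 (Nat.eq_one_of_dvd_coprimes
    (Nat.Coprime.pow n m ((Nat.coprime_primes hp hq).2 hpq)) (orderOf_dvd_of_pow_eq_one hn)
    (orderOf_dvd_of_pow_eq_one hm))

theorem isPGroup_zpowers {p : ℕ} {x : G} (hx : IsPElement p x) :
    IsPGroup p (Subgroup.zpowers x) := by
  rintro ⟨_, k, rfl⟩
  exact coe_iff.1 (hx.zpow k)

theorem of_mem {p : ℕ} {P : Subgroup G} (hP : IsPGroup p P) {x : G} (hx : x ∈ P) :
    IsPElement p x :=
  coe_iff (x := ⟨x, hx⟩).2 (hP ⟨x, hx⟩)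

theorem mem_of_mem_zpowers {p : ℕ} {x y : G} (hx : IsPElement p x)
    (hy : y ∈ Subgroup.zpowers x) : IsPElement p y := of_mem hx.isPGroup_zpowers hy

theorem orderOf_eq {p : ℕ} (hp : p.Prime) {x : G} (hx : IsPElement p x) :
    ∃ n, orderOf x = p ^ n := by
  obtain ⟨n, hn⟩ := hx
  obtain ⟨m, -, hm⟩ := (Nat.dvd_prime_pow hp).1 (orderOf_dvd_of_pow_eq_one hn)
  exact ⟨m, hm⟩

theorem dvd_of_zpow_eq_one {p : ℕ} (hp : p.Prime) {x : G} (hx : IsPElement p x) (h1 : x ≠ 1)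
    {k : ℤ} (hk : x ^ k = 1) : (p : ℤ) ∣ k := by
  obtain ⟨n, hn⟩ := hx.orderOf_eq hp
  have : n ≠ 0 := by
    rintro rfl
    exact h1 (orderOf_eq_one_iff.1 (by simpa using hn))
  have h2 : (orderOf x : ℤ) ∣ k := orderOf_dvd_iff_zpow_eq_one.2 hk
  rw [hn] at h2
  refine dvd_trans ?_ h2
  exact_mod_cast dvd_pow_self p this

theorem mem_zpowers_zpow {p : ℕ} (hp : p.Prime) {x : G} (hx : IsPElement p x) {k : ℤ}
    (hk : ¬ (p : ℤ) ∣ k) : x ∈ Subgroup.zpowers (x ^ k) := by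
  obtain ⟨n, hn⟩ := hx
  have hc : IsCoprime k ((p ^ n : ℕ) : ℤ) := by
    push_cast
    refine IsCoprime.pow_right ?_
    exact ((Nat.prime_iff_prime_int.1 hp).coprime_iff_not_dvd.2 hk).symm
  obtain ⟨a, b, hab⟩ := hc
  refine ⟨a, ?_⟩
  simp only
  rw [← zpow_mul]
  have h1 : x ^ ((p ^ n : ℕ) : ℤ) = 1 := by rw [zpow_natCast, hn]
  calc x ^ (k * a) = x ^ (k * a) * (x ^ ((p ^ n : ℕ) : ℤ)) ^ b := by rw [h1, one_zpow, mul_one]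
    _ = x ^ (a * k + b * ((p ^ n : ℕ) : ℤ)) := by rw [← zpow_mul, ← zpow_add]; ring_nf
    _ = x := by rw [hab, zpow_one]

theorem dvd_card {p : ℕ} (hp : p.Prime) {H : Subgroup G} {x : G} (hH : x ∈ H)
    (hx : IsPElement p x) (h1 : x ≠ 1) : p ∣ Nat.card H := by
  have h : x ^ Nat.card H = 1 := congrArg Subtype.val (pow_card_eq_one' (x := (⟨x, hH⟩ : H)))
  have := hx.dvd_of_zpow_eq_one hp h1 (k := Nat.card H) (by rw [zpow_natCast, h])
  exact_mod_cast this

theorem exists_lift [Finite G] {H : Type*} [Group H] {f : G →* H} (hf : Function.Surjective f)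
    {p : ℕ} (hp : p.Prime) {z : H} (hz : IsPElement p z) :
    ∃ x : G, IsPElement p x ∧ f x = z := by
  obtain ⟨g, rfl⟩ := hf z
  obtain ⟨k, hk⟩ := hz
  obtain ⟨a, m, hm, hord⟩ := Nat.exists_eq_pow_mul_and_not_dvd (orderOf_pos g).ne' p hp.ne_one
  have hc : Nat.Coprime m (p ^ k) := (Nat.Coprime.pow_left k ((hp.coprime_iff_not_dvd).2 hm)).symm
  obtain ⟨c, hc0, hc1⟩ := Nat.chineseRemainder hc 0 1
  refine ⟨g ^ c, ⟨a, ?_⟩, ?_⟩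
  · obtain ⟨d, rfl⟩ := (Nat.modEq_zero_iff_dvd).1 hc0
    rw [← pow_mul]
    apply orderOf_dvd_iff_pow_eq_one.1
    rw [hord]
    exact ⟨d, by ring⟩
  · rw [map_pow]
    have : c ≡ 1 [MOD orderOf (f g)] := hc1.of_dvd (orderOf_dvd_of_pow_eq_one hk)
    rw [pow_eq_pow_iff_modEq.2 this, pow_one]

end IsPElement

theorem isPGroup_iff_forall_isPElement {p : ℕ} {P : Subgroup G} :
    IsPGroup p P ↔ ∀ x ∈ P, IsPElement p x :=
  ⟨fun h _ hx => IsPElement.of_mem h hx, fun h x => IsPElement.coe_iff.1 (h x x.2)⟩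

/-- `P` is a Sylow `p`-subgroup of the subgroup `K`. -/
structure IsSylowIn (p : ℕ) (P K : Subgroup G) : Prop where
  le : P ≤ K
  isPGroup : IsPGroup p P
  not_dvd : ¬ p ∣ P.relIndex K

theorem IsSylowIn.of_sylow [Finite G] {p : ℕ} [Fact p.Prime] {K : Subgroup G} (P : Sylow p K) :
    IsSylowIn p (P.toSubgroup.map K.subtype) K where
  le := Subgroup.map_subtype_le _
  isPGroup := P.2.map _
  not_dvd := by
    rw [Subgroup.relIndex, ← Subgroup.comap_subtype,
      Subgroup.comap_map_eq_self_of_injective K.subtype_injective]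
    exact P.not_dvd_index

theorem IsSylowIn.exists_sylow {p : ℕ} [Fact p.Prime] {P K : Subgroup G} (h : IsSylowIn p P K) :
    ∃ S : Sylow p K, S.toSubgroup.map K.subtype = P := by
  refine ⟨IsPGroup.toSylow (P := P.subgroupOf K) h.isPGroup.comap_subtype h.not_dvd, ?_⟩
  exact Subgroup.map_subgroupOf_eq_of_le h.le

theorem IsPGroup.exists_isSylowIn [Finite G] {p : ℕ} (hp : p.Prime) {A K : Subgroup G}
    (hA : IsPGroup p A)
    (hAK : A ≤ K) : ∃ P, IsSylowIn p P K ∧ A ≤ P := by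
  have := Fact.mk hp
  obtain ⟨S, hS⟩ := (hA.comap_subtype (K := K)).exists_le_sylow
  refine ⟨_, IsSylowIn.of_sylow S, ?_⟩
  intro a ha
  exact ⟨⟨a, hAK ha⟩, hS ha, rfl⟩

theorem IsSylowIn.eq_of_le [Finite G] {p : ℕ} (hp : p.Prime) {P Q K : Subgroup G}
    (h : IsSylowIn p P K)
    (hQ : IsPGroup p Q) (hQK : Q ≤ K) (hPQ : P ≤ Q) : Q = P := by
  have := Fact.mk hp
  refine le_antisymm (Subgroup.relIndex_eq_one.1 ?_) hPQ
  obtain ⟨n, hn⟩ := hQ.index (P.subgroupOf Q)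
  change P.relIndex Q = _ at hn
  have h1 : P.relIndex Q ∣ P.relIndex K :=
    ⟨_, (Subgroup.relIndex_mul_relIndex P Q K hPQ hQK).symm⟩
  cases n with
  | zero => simpa using hn
  | succ n =>
    exact absurd ((dvd_pow_self p n.succ_ne_zero).trans (hn ▸ h1)) h.not_dvd

theorem IsSylowIn.trans {p : ℕ} (hp : p.Prime) {P K L : Subgroup G} (h : IsSylowIn p P K)
    (hKL : K ≤ L) (hd : ¬ p ∣ K.relIndex L) : IsSylowIn p P L where
  le := h.le.trans hKL
  isPGroup := h.isPGroup
  not_dvd := by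
    rw [← Subgroup.relIndex_mul_relIndex P K L h.le hKL]
    exact hp.not_dvd_mul h.not_dvd hd

theorem IsSylowIn.le_of_normal [Finite G] {p : ℕ} (hp : p.Prime) {P K B : Subgroup G}
    (h : IsSylowIn p P K)
    [B.Normal] (hB : IsPGroup p B) (hBK : B ≤ K) : B ≤ P := by
  have := h.eq_of_le hp (h.isPGroup.to_sup_of_normal_right hB) (sup_le h.le hBK) le_sup_left
  exact this ▸ le_sup_right

/-- A subgroup containing a Sylow subgroup of `H` for every prime contains `H`. -/
theorem Subgroup.le_of_forall_isSylowIn {H S : Subgroup G}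
    (h : ∀ p : ℕ, p.Prime → ∃ P, IsSylowIn p P H ∧ P ≤ S) : H ≤ S := by
  refine Subgroup.relIndex_eq_one.1 (Nat.eq_one_iff_not_exists_prime_dvd.2 fun p hp hd => ?_)
  obtain ⟨P, hP, hPS⟩ := h p hp
  exact hP.not_dvd (hd.trans (Subgroup.relIndex_dvd_of_le_left H hPS))

theorem Subgroup.le_of_forall_isPElement [Finite G] {H S : Subgroup G}
    (h : ∀ p : ℕ, p.Prime → ∀ x ∈ H, IsPElement p x → x ∈ S) : H ≤ S := by
  refine Subgroup.le_of_forall_isSylowIn fun p hp => ?_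
  obtain ⟨P, hP, -⟩ := (IsPGroup.of_bot (p := p) (G := G)).exists_isSylowIn hp (bot_le (a := H))
  exact ⟨P, hP, fun x hx => h p hp x (hP.le hx) (IsPElement.of_mem hP.isPGroup hx)⟩

/-- Coprime action: if `x` normalizes a subgroup `S` of order prime to that of `x` and centralizes
`v` modulo `S`, then the coset `vS` contains an element centralized by `x`. -/
theorem IsPElement.exists_commute_mul [Finite G] {p : ℕ} (hp : p.Prime) {x v : G}
    (hx : IsPElement p x)
    {S : Subgroup G} (hS : ¬ p ∣ Nat.card S) (hn : ∀ s ∈ S, x * s * x⁻¹ ∈ S)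
    (hv : v⁻¹ * (x * v * x⁻¹) ∈ S) : ∃ s ∈ S, Commute x (v * s) := by
  have := Fact.mk hp
  let C : Set G := {g | v⁻¹ * g ∈ S}
  have hstep : ∀ g ∈ C, x * g * x⁻¹ ∈ C := by
    intro g hg
    have := S.mul_mem hv (hn _ hg)
    simp only [C, Set.mem_ofPred_eq]
    convert this using 1
    group
  have hpow : ∀ n : ℕ, ∀ g ∈ C, x ^ n * g * (x ^ n)⁻¹ ∈ C := by
    intro n
    induction n with
    | zero => intro g hg; simpa using hg
    | succ n ih =>
      intro g hg
      have := hstep _ (ih g hg)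
      convert this using 1
      rw [pow_succ' x n]; group
  have hz : ∀ y ∈ Subgroup.zpowers x, ∀ g ∈ C, y * g * y⁻¹ ∈ C := by
    intro y hy g hg
    obtain ⟨n, rfl⟩ := (mem_powers_iff_mem_zpowers (x := x)).2 hy
    exact hpow n g hg
  let _ : MulAction (Subgroup.zpowers x) C :=
    { smul := fun y g => ⟨y * g * (y : G)⁻¹, hz y y.2 g g.2⟩
      one_smul := fun g => Subtype.ext (by change (1 : G) * g * (1 : G)⁻¹ = g; simp)
      mul_smul := fun a b g => Subtype.ext (by
        change (a * b : G) * g * (a * b : G)⁻¹ = a * (b * g * (b : G)⁻¹) * (a : G)⁻¹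
        group) }
  have hcard : Nat.card C = Nat.card S := by
    refine Nat.card_congr ⟨fun g => ⟨v⁻¹ * g, g.2⟩, fun s => ⟨v * s, ?_⟩, ?_, ?_⟩
    · simp [C]
    · intro g; simp
    · intro s; simp
  obtain ⟨g, hg⟩ := hx.isPGroup_zpowers.nonempty_fixed_point_of_prime_not_dvd_card C
    (by rwa [hcard])
  refine ⟨v⁻¹ * g, g.2, ?_⟩
  have h1 : x * g * x⁻¹ = g := congrArg Subtype.val (hg ⟨x, Subgroup.mem_zpowers x⟩)
  rw [mul_inv_cancel_left]
  exact mul_inv_eq_iff_eq_mul.1 h1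

end PElements

/-! ### Permutability relative to a subgroup -/

section Permutability

variable {G : Type*} [Group G]

/-- The subgroups `A` and `B` permute. -/
def Permutes (A B : Subgroup G) : Prop :=
  ∀ a ∈ A, ∀ b ∈ B, ∃ a' ∈ A, ∃ b' ∈ B, b * a = a' * b'

theorem Permutes.symm {A B : Subgroup G} (h : Permutes A B) : Permutes B A := by
  intro b hb a ha
  obtain ⟨a', ha', b', hb', e⟩ := h a⁻¹ (A.inv_mem ha) b⁻¹ (B.inv_mem hb)
  refine ⟨b'⁻¹, B.inv_mem hb', a'⁻¹, A.inv_mem ha', ?_⟩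
  rw [← mul_inv_rev, ← e, mul_inv_rev, inv_inv, inv_inv]

theorem permutes_iff {A B : Subgroup G} :
    Permutes A B ↔ (A : Set G) * (B : Set G) = (B : Set G) * (A : Set G) := by
  constructor
  · intro h
    apply subset_antisymm
    · rintro _ ⟨a, ha, b, hb, rfl⟩
      obtain ⟨b', hb', a', ha', e⟩ := h.symm b hb a ha
      exact ⟨b', hb', a', ha', e.symm⟩
    · rintro _ ⟨b, hb, a, ha, rfl⟩
      obtain ⟨a', ha', b', hb', e⟩ := h a ha b hb
      exact ⟨a', ha', b', hb', e.symm⟩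
  · intro h a ha b hb
    have : b * a ∈ (A : Set G) * (B : Set G) := h ▸ ⟨b, hb, a, ha, rfl⟩
    obtain ⟨a', ha', b', hb', e⟩ := this
    exact ⟨a', ha', b', hb', e.symm⟩

theorem Permutes.of_normalizes {A B : Subgroup G} (h : ∀ b ∈ B, ∀ a ∈ A, b * a * b⁻¹ ∈ A) :
    Permutes A B := fun a ha b hb =>
  ⟨b * a * b⁻¹, h b hb a ha, b, hb, by group⟩

theorem Permutes.of_normal (A B : Subgroup G) [hA : A.Normal] : Permutes A B :=
  .of_normalizes fun b _ a ha => hA.conj_mem a ha b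

theorem Permutes.of_le {A B : Subgroup G} (h : A ≤ B) : Permutes A B := fun a ha b hb =>
  ⟨1, A.one_mem, b * a, B.mul_mem hb (h ha), by group⟩

/-- An element of `B` conjugates an element of `A` into `A` if `A` permutes with `B` and is
contained in a normal subgroup meeting `B` trivially. -/
theorem Permutes.conj_mem {A B N : Subgroup G} (h : Permutes A B) [hN : N.Normal] (hA : A ≤ N)
    (hd : ∀ x ∈ N, x ∈ B → x = 1) {a b : G} (ha : a ∈ A) (hb : b ∈ B) : b * a * b⁻¹ ∈ A := by
  obtain ⟨a', ha', b', hb', e⟩ := h a ha b hb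
  have h1 : b' * b⁻¹ = 1 := by
    refine hd _ ?_ (B.mul_mem hb' (B.inv_mem hb))
    have : b' * b⁻¹ = a'⁻¹ * (b * a * b⁻¹) := by rw [e]; group
    rw [this]
    exact N.mul_mem (N.inv_mem (hA ha')) (hN.conj_mem a (hA ha) b)
  have : b * a * b⁻¹ = a' * (b' * b⁻¹) := by rw [e]; group
  rwa [this, h1, mul_one]

section Maps

variable {G' : Type*} [Group G'] {f : G →* G'}

theorem Permutes.map {A B : Subgroup G} (h : Permutes A B) (f : G →* G') :
    Permutes (A.map f) (B.map f) := by
  rintro _ ⟨a, ha, rfl⟩ _ ⟨b, hb, rfl⟩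
  obtain ⟨a', ha', b', hb', e⟩ := h a ha b hb
  exact ⟨f a', ⟨a', ha', rfl⟩, f b', ⟨b', hb', rfl⟩, by rw [← map_mul, e, map_mul]⟩

theorem permutes_comap {A : Subgroup G'} {B : Subgroup G} :
    Permutes A (B.map f) → Permutes (A.comap f) B := by
  intro h a ha b hb
  obtain ⟨a', ha', _, ⟨b', hb', rfl⟩, e⟩ := h (f a) ha (f b) ⟨b, hb, rfl⟩
  refine ⟨b * a * b'⁻¹, ?_, b', hb', by group⟩
  rw [Subgroup.mem_comap, map_mul, map_mul, e, map_inv]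
  simpa using ha'

theorem permutes_map_iff (hf : Function.Injective f) {A B : Subgroup G} :
    Permutes (A.map f) (B.map f) ↔ Permutes A B := by
  refine ⟨fun h => ?_, fun h => h.map f⟩
  have := permutes_comap h
  rwa [Subgroup.comap_map_eq_self_of_injective hf] at this

theorem IsSylowIn.map {p : ℕ} {P K : Subgroup G} (h : IsSylowIn p P K) (f : G →* G') :
    IsSylowIn p (P.map f) (K.map f) where
  le := Subgroup.map_mono h.le
  isPGroup := h.isPGroup.map f
  not_dvd hd := by
    rw [← Subgroup.relIndex_comap] at hd
    exact h.not_dvd (hd.trans (Subgroup.relIndex_dvd_of_le_left _ (Subgroup.le_comap_map _ _)))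

theorem IsSylowIn.exists_map_eq [Finite G] [Finite G'] {p : ℕ} (hp : p.Prime) {K : Subgroup G}
    {P' : Subgroup G'} (h : IsSylowIn p P' (K.map f)) : ∃ P, IsSylowIn p P K ∧ P.map f = P' := by
  obtain ⟨P, hP, -⟩ :=
    (IsPGroup.of_bot (p := p) (G := G)).exists_isSylowIn hp (bot_le (a := P'.comap f ⊓ K))
  have h1 : (P'.comap f ⊓ K).map f = P' := by
    apply le_antisymm
    · rintro _ ⟨x, hx, rfl⟩
      exact hx.1
    · intro y hy
      obtain ⟨x, hx, rfl⟩ := h.le hy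
      exact ⟨x, ⟨hy, hx⟩, rfl⟩
  refine ⟨P, hP.trans hp inf_le_right ?_, ?_⟩
  · rw [Subgroup.inf_relIndex_right, Subgroup.relIndex_comap]
    exact h.not_dvd
  · have h2 := hP.map f
    rw [h1] at h2
    exact (h2.eq_of_le hp h.isPGroup le_rfl h2.le).symm

end Maps

/-- `H` permutes with the Sylow subgroups of `K`. -/
def SPermIn (H K : Subgroup G) : Prop :=
  ∀ p : ℕ, p.Prime → ∀ P, IsSylowIn p P K → Permutes H P

/-- `H` is SS-permutable in `K`. -/
def SSPermIn (H K : Subgroup G) : Prop :=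
  ∃ L ≤ K, (∀ k ∈ K, ∃ h ∈ H, ∃ l ∈ L, k = h * l) ∧ SPermIn H L

/-- `H` is semipermutable in `K`. -/
def SemiIn (H K : Subgroup G) : Prop :=
  ∀ X ≤ K, Nat.Coprime (Nat.card H) (Nat.card X) → Permutes H X

theorem SPermIn.of_normal (H K : Subgroup G) [H.Normal] : SPermIn H K :=
  fun _ _ P _ => Permutes.of_normal H P

theorem SPermIn.ssPermIn {H K : Subgroup G} (h : SPermIn H K) : SSPermIn H K :=
  ⟨K, le_rfl, fun k hk => ⟨1, H.one_mem, k, hk, (one_mul k).symm⟩, h⟩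

theorem SemiIn.of_normal (H K : Subgroup G) [H.Normal] : SemiIn H K :=
  fun X _ _ => Permutes.of_normal H X

theorem SemiIn.mono {H K L : Subgroup G} (h : SemiIn H L) (hKL : K ≤ L) : SemiIn H K :=
  fun X hX hc => h X (hX.trans hKL) hc

section Finite

variable [Finite G] {G' : Type*} [Group G'] [Finite G'] {f : G →* G'}

theorem sPermIn_map (hf : Function.Injective f) {H K : Subgroup G} :
    SPermIn (H.map f) (K.map f) ↔ SPermIn H K := by
  constructor
  · intro h p hp P hP
    exact (permutes_map_iff hf).1 (h p hp _ (hP.map f))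
  · intro h p hp P' hP'
    obtain ⟨P, hP, rfl⟩ := hP'.exists_map_eq hp
    exact (h p hp P hP).map f

theorem ssPermIn_map (hf : Function.Injective f) {H K : Subgroup G} :
    SSPermIn (H.map f) (K.map f) ↔ SSPermIn H K := by
  constructor
  · rintro ⟨L', hL', hs, hp⟩
    obtain ⟨L, rfl⟩ : ∃ L : Subgroup G, L.map f = L' :=
      ⟨L'.comap f, Subgroup.map_comap_eq_self (hL'.trans (Subgroup.map_le_range f K))⟩
    refine ⟨L, (Subgroup.map_le_map_iff_of_injective hf).1 hL', fun k hk => ?_,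
      (sPermIn_map hf).1 hp⟩
    obtain ⟨_, ⟨h, hh, rfl⟩, _, ⟨l, hl, rfl⟩, e⟩ := hs (f k) (Subgroup.mem_map_of_mem f hk)
    exact ⟨h, hh, l, hl, hf (by rw [e, map_mul])⟩
  · rintro ⟨L, hL, hs, hp⟩
    refine ⟨L.map f, Subgroup.map_mono hL, ?_, (sPermIn_map hf).2 hp⟩
    rintro _ ⟨k, hk, rfl⟩
    obtain ⟨h, hh, l, hl, e⟩ := hs k hk
    exact ⟨f h, ⟨h, hh, rfl⟩, f l, ⟨l, hl, rfl⟩, by rw [e, map_mul]⟩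

theorem semiIn_map (hf : Function.Injective f) {H K : Subgroup G} :
    SemiIn (H.map f) (K.map f) ↔ SemiIn H K := by
  constructor
  · intro h X hX hc
    refine (permutes_map_iff hf).1 (h _ (Subgroup.map_mono hX) ?_)
    rwa [Subgroup.card_map_of_injective hf, Subgroup.card_map_of_injective hf]
  · intro h X' hX' hc
    obtain ⟨X, rfl⟩ : ∃ X : Subgroup G, X.map f = X' :=
      ⟨X'.comap f, Subgroup.map_comap_eq_self (hX'.trans (Subgroup.map_le_range f K))⟩
    rw [Subgroup.card_map_of_injective hf, Subgroup.card_map_of_injective hf] at hc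
    exact (h X ((Subgroup.map_le_map_iff_of_injective hf).1 hX') hc).map f

theorem isSPermutable_iff {H : Subgroup G} : IsSPermutable H ↔ SPermIn H ⊤ := by
  constructor
  · intro h p hp P hP
    have := Fact.mk hp
    exact permutes_iff.2
      (h p (IsPGroup.toSylow hP.isPGroup (by simpa using hP.not_dvd)))
  · intro h p _ P
    exact permutes_iff.1 (h p Fact.out P ⟨le_top, P.2, by simpa using P.not_dvd_index⟩)

theorem isSSPermutable_iff {H : Subgroup G} : IsSSPermutable H ↔ SSPermIn H ⊤ := by
  constructor
  · rintro ⟨K, h, hp⟩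
    refine ⟨K, le_top, fun k _ => ?_, fun p hp' P hP => ?_⟩
    · obtain ⟨a, ha, b, hb, e⟩ : k ∈ (H : Set G) * (K : Set G) := h ▸ Set.mem_univ k
      exact ⟨a, ha, b, hb, e.symm⟩
    · have := Fact.mk hp'
      obtain ⟨S, rfl⟩ := hP.exists_sylow
      exact permutes_iff.2 (hp p S)
  · rintro ⟨K, -, h, hp⟩
    refine ⟨K, Set.eq_univ_of_forall fun k => ?_, fun p _ P => ?_⟩
    · obtain ⟨a, ha, b, hb, e⟩ := h k trivial
      exact ⟨a, ha, b, hb, e.symm⟩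
    · exact permutes_iff.1 (hp p Fact.out _ (IsSylowIn.of_sylow P))

theorem isSemipermutable_iff {H : Subgroup G} : IsSemipermutable H ↔ SemiIn H ⊤ :=
  ⟨fun h X _ hc => permutes_iff.2 (h X hc), fun h X hc => permutes_iff.1 (h X le_top hc)⟩

theorem isPSTGroup_iff : IsPSTGroup G ↔
    ∀ H K : Subgroup G, H ≤ K → SPermIn H K → SPermIn K ⊤ → SPermIn H ⊤ := by
  refine forall₂_congr fun H K => forall_congr' fun h => ?_
  rw [isSPermutable_iff, isSPermutable_iff, isSPermutable_iff,
    ← sPermIn_map K.subtype_injective, Subgroup.map_subgroupOf_eq_of_le h, ← K.subtype.range_eq_map,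
    K.range_subtype]

theorem isSSTGroup_iff : IsSSTGroup G ↔
    ∀ H K : Subgroup G, H ≤ K → SSPermIn H K → SSPermIn K ⊤ → SSPermIn H ⊤ := by
  refine forall₂_congr fun H K => forall_congr' fun h => ?_
  rw [isSSPermutable_iff, isSSPermutable_iff, isSSPermutable_iff,
    ← ssPermIn_map K.subtype_injective, Subgroup.map_subgroupOf_eq_of_le h,
    ← K.subtype.range_eq_map, K.range_subtype]

theorem isBTGroup_iff : IsBTGroup G ↔
    ∀ H K : Subgroup G, H ≤ K → SemiIn H K → SemiIn K ⊤ → SemiIn H ⊤ := by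
  refine forall₂_congr fun H K => forall_congr' fun h => ?_
  rw [isSemipermutable_iff, isSemipermutable_iff, isSemipermutable_iff,
    ← semiIn_map K.subtype_injective, Subgroup.map_subgroupOf_eq_of_le h,
    ← K.subtype.range_eq_map, K.range_subtype]

/-! ### Quotients and normal subgroups -/

theorem sPermIn_comap (hf : Function.Surjective f) {H K : Subgroup G'} (h : SPermIn H K) :
    SPermIn (H.comap f) (K.comap f) := by
  intro p hp P hP
  have := hP.map f
  rw [Subgroup.map_comap_eq_self_of_surjective hf] at this
  exact permutes_comap (h p hp _ this)

theorem sPermIn_of_comap (hf : Function.Surjective f) {H : Subgroup G'} {K : Subgroup G}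
    (h : SPermIn (H.comap f) K) : SPermIn H (K.map f) := by
  intro p hp P' hP'
  obtain ⟨P, hP, rfl⟩ := hP'.exists_map_eq hp
  have := (h p hp P hP).map f
  rwa [Subgroup.map_comap_eq_self_of_surjective hf] at this

theorem ssPermIn_comap (hf : Function.Surjective f) {H K : Subgroup G'} (h : SSPermIn H K) :
    SSPermIn (H.comap f) (K.comap f) := by
  obtain ⟨L, hL, hs, hp⟩ := h
  refine ⟨L.comap f, Subgroup.comap_mono hL, fun k hk => ?_, sPermIn_comap hf hp⟩
  obtain ⟨h, hh, l, hl, e⟩ := hs (f k) hk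
  obtain ⟨g, rfl⟩ := hf l
  refine ⟨k * g⁻¹, ?_, g, hl, by group⟩
  rw [Subgroup.mem_comap, map_mul, e, map_inv, mul_inv_cancel_right]
  exact hh

theorem ssPermIn_of_comap (hf : Function.Surjective f) {H : Subgroup G'}
    (h : SSPermIn (H.comap f) ⊤) : SSPermIn H ⊤ := by
  obtain ⟨L, hL, hs, hp⟩ := h
  refine ⟨L.map f, le_top, fun k _ => ?_, sPermIn_of_comap hf hp⟩
  obtain ⟨g, rfl⟩ := hf k
  obtain ⟨h, hh, l, hl, e⟩ := hs g trivial
  exact ⟨f h, hh, f l, ⟨l, hl, rfl⟩, by rw [e, map_mul]⟩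

theorem IsPSTGroup.of_surjective (h : IsPSTGroup G) (hf : Function.Surjective f) :
    IsPSTGroup G' := by
  rw [isPSTGroup_iff] at h ⊢
  intro H K hHK h1 h2
  have := h (H.comap f) (K.comap f) (Subgroup.comap_mono hHK) (sPermIn_comap hf h1)
    (by simpa using sPermIn_comap hf h2)
  have := sPermIn_of_comap hf this
  rwa [Subgroup.map_top_of_surjective f hf] at this

theorem IsSSTGroup.of_surjective (h : IsSSTGroup G) (hf : Function.Surjective f) :
    IsSSTGroup G' := by
  rw [isSSTGroup_iff] at h ⊢
  intro H K hHK h1 h2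
  exact ssPermIn_of_comap hf (h (H.comap f) (K.comap f) (Subgroup.comap_mono hHK)
    (ssPermIn_comap hf h1) (by simpa using ssPermIn_comap hf h2))

theorem semiIn_comap (hf : Function.Surjective f) {H K : Subgroup G'} (h : SemiIn H K) :
    SemiIn (H.comap f) (K.comap f) := by
  intro X hX hc
  refine permutes_comap (h _ (Subgroup.map_le_iff_le_comap.2 hX) ?_)
  have h1 := Subgroup.card_map_dvd (H.comap f) f
  rw [Subgroup.map_comap_eq_self_of_surjective hf] at h1
  exact (hc.coprime_dvd_left h1).coprime_dvd_right (Subgroup.card_map_dvd X f)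

theorem semiIn_of_comap (hf : Function.Surjective f)
    (hM : Nat.Coprime (Nat.card f.ker) f.ker.index) {H : Subgroup G'}
    (h : SemiIn (H.comap f) ⊤) : SemiIn H ⊤ := by
  have hcard : ∀ Y : Subgroup G', Nat.card (Y.comap f) = Nat.card f.ker * Nat.card Y := by
    intro Y
    have h1 := Subgroup.relIndex_ker (K := Y.comap f) f
    rw [Subgroup.map_comap_eq_self_of_surjective hf] at h1
    rw [← h1, ← Subgroup.relIndex_bot_left, ← Subgroup.relIndex_bot_left,
      Subgroup.relIndex_mul_relIndex _ _ _ bot_le (MonoidHom.ker_le_comap f Y)]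
  intro X' _ hc
  have hX : Nat.Coprime (Nat.card f.ker) (Nat.card X') := by
    refine hM.coprime_dvd_right ?_
    rw [Subgroup.index_ker, MonoidHom.range_eq_top.2 hf, Subgroup.card_top]
    exact Subgroup.card_subgroup_dvd_card X'
  let C := X'.comap f
  have hker : f.ker ≤ C := MonoidHom.ker_le_comap f X'
  have hN : Nat.card (f.ker.subgroupOf C) = Nat.card f.ker :=
    Nat.card_congr (Subgroup.subgroupOfEquivOfLe hker).toEquiv
  have hCc : Nat.card C = Nat.card f.ker * Nat.card X' := hcard X'
  have hpos : 0 < Nat.card f.ker := Nat.card_pos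
  have hidx : (f.ker.subgroupOf C).index = Nat.card X' := by
    have := Subgroup.card_mul_index (f.ker.subgroupOf C)
    rw [hN, hCc] at this
    exact Nat.eq_of_mul_eq_mul_left hpos this
  obtain ⟨T, hT⟩ := Subgroup.exists_right_complement'_of_coprime
    (N := f.ker.subgroupOf C) (by rwa [hN, hidx])
  have hTcard : Nat.card T = Nat.card X' := by
    have := hT.card_mul_card
    rw [hN, hCc] at this
    exact Nat.eq_of_mul_eq_mul_left hpos this
  have hmap : (T.map C.subtype).map f = X' := by
    apply le_antisymm
    · rintro _ ⟨_, ⟨t, -, rfl⟩, rfl⟩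
      exact t.2
    · intro x' hx'
      obtain ⟨g, rfl⟩ := hf x'
      obtain ⟨⟨n, t⟩, hnt⟩ := hT.2 ⟨g, hx'⟩
      refine ⟨(t : C), ⟨t, t.2, rfl⟩, ?_⟩
      have h1 : (n : C) * (t : G) = g := congrArg Subtype.val hnt
      have h2 : f (n : C) = 1 := n.2
      rw [← h1, map_mul, h2, one_mul]
  have hperm := (h (T.map C.subtype) le_top (by
    rw [hcard, Subgroup.card_map_of_injective C.subtype_injective, hTcard]
    exact Nat.Coprime.mul_left hX hc)).map f
  rwa [hmap, Subgroup.map_comap_eq_self_of_surjective hf] at hperm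

theorem IsBTGroup.of_surjective (h : IsBTGroup G) (hf : Function.Surjective f)
    (hM : Nat.Coprime (Nat.card f.ker) f.ker.index) : IsBTGroup G' := by
  rw [isBTGroup_iff] at h ⊢
  intro H K hHK h1 h2
  exact semiIn_of_comap hf hM (h (H.comap f) (K.comap f) (Subgroup.comap_mono hHK)
    (semiIn_comap hf h1) (by simpa using semiIn_comap hf h2))

theorem IsBTGroup.subgroup (h : IsBTGroup G) (T : Subgroup G) [T.Normal] : IsBTGroup T := by
  rw [isBTGroup_iff] at h ⊢
  intro H K hHK h1 h2
  have hTt : (⊤ : Subgroup T).map T.subtype = T := by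
    rw [← T.subtype.range_eq_map, T.range_subtype]
  have hK := (semiIn_map T.subtype_injective).2 h2
  rw [hTt] at hK
  have hK' := h _ T (Subgroup.map_subtype_le K) hK (SemiIn.of_normal T ⊤)
  have hH := h _ _ (Subgroup.map_mono hHK) ((semiIn_map T.subtype_injective).2 h1) hK'
  rw [← semiIn_map T.subtype_injective, hTt]
  exact hH.mono le_top

end Finite

end Permutability

/-! ### Coprime automorphisms normalizing cyclic subgroups -/

section CoprimeAction

variable {G : Type*} [Group G]

theorem conj_zpow_eq {x y : G} {i : ℤ} (h : y * x * y⁻¹ = x ^ i) (k : ℤ) :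
    y * x ^ k * y⁻¹ = x ^ (i * k) := by
  rw [← conj_zpow, h, zpow_mul]

theorem pow_conj_eq {x y : G} {i : ℤ} (h : y * x * y⁻¹ = x ^ i) (n : ℕ) :
    y ^ n * x * (y ^ n)⁻¹ = x ^ (i ^ n) := by
  induction n with
  | zero => simp
  | succ n ih =>
    have : y ^ (n + 1) * x * (y ^ (n + 1))⁻¹ = y * (y ^ n * x * (y ^ n)⁻¹) * y⁻¹ := by
      rw [pow_succ']; group
    rw [this, ih, conj_zpow_eq h, pow_succ']

theorem commute_of_mem_zpowers {x y z : G} (h : Commute y x) (hz : z ∈ Subgroup.zpowers x) :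
    Commute y z := by
  obtain ⟨k, rfl⟩ := hz
  exact h.zpow_right k

theorem IsPElement.not_dvd_card_zpowers {p q : ℕ} (hp : p.Prime) (hq : q.Prime) (hpq : p ≠ q)
    {x : G} (hx : IsPElement p x) : ¬ q ∣ Nat.card (Subgroup.zpowers x) := by
  rw [Nat.card_zpowers]
  obtain ⟨n, hn⟩ := hx.orderOf_eq hp
  rw [hn]
  exact fun h => hpq ((Nat.prime_dvd_prime_iff_eq hq hp).1 (hq.dvd_of_dvd_pow h)).symm

variable [Finite G]

/-- A coprime automorphism of a cyclic `p`-group which is trivial modulo `p` is trivial. -/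
theorem commute_of_conj_eq_zpow {p q : ℕ} (hp : p.Prime) (hq : q.Prime) (hpq : p ≠ q) {x y : G}
    (hx : IsPElement p x) (hy : IsPElement q y) {i : ℤ} (h : y * x * y⁻¹ = x ^ i)
    (hi : (p : ℤ) ∣ i - 1) : Commute y x := by
  obtain ⟨c, hc⟩ := hi
  have hnorm : ∀ s ∈ Subgroup.zpowers (x ^ (p : ℤ)), y * s * y⁻¹ ∈ Subgroup.zpowers (x ^ (p : ℤ)) := by
    rintro _ ⟨k, rfl⟩
    refine ⟨i * k, ?_⟩
    simp only
    rw [← zpow_mul, ← zpow_mul, conj_zpow_eq h]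
    congr 1; ring
  obtain ⟨_, ⟨k, rfl⟩, hcomm⟩ := hy.exists_commute_mul hq (v := x)
    ((hx.zpow (p : ℤ)).not_dvd_card_zpowers hp hq hpq) hnorm ⟨c, by
      simp only
      rw [h, ← zpow_mul, ← zpow_neg_one, ← zpow_add, ← hc]
      congr 1; ring⟩
  simp only at hcomm
  rw [← zpow_mul, ← zpow_one_add] at hcomm
  refine commute_of_mem_zpowers hcomm (hx.mem_zpowers_zpow hp fun hd => ?_)
  have : (p : ℤ) ∣ 1 := (dvd_add_left (Dvd.intro k rfl)).1 hd
  exact hp.one_lt.ne' (by exact_mod_cast Int.eq_one_of_dvd_one (by positivity) this)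

/-- An element of order a power of `p` normalizing a cyclic `r`-subgroup with `r < p`
centralizes it. -/
theorem commute_of_conj_mem_zpowers_of_lt {p r : ℕ} (hp : p.Prime) (hr : r.Prime) (hrp : r < p)
    {a m : G} (ha : IsPElement p a) (hm : IsPElement r m)
    (h : a * m * a⁻¹ ∈ Subgroup.zpowers m) : Commute a m := by
  rcases eq_or_ne m 1 with rfl | h1
  · exact Commute.one_right a
  obtain ⟨i, hi⟩ := h
  simp only at hi
  refine commute_of_conj_eq_zpow hr hp hrp.ne hm ha hi.symm ?_
  obtain ⟨b, hb⟩ := ha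
  have h2 := pow_conj_eq hi.symm (p ^ b)
  rw [hb, one_mul, inv_one, mul_one] at h2
  have h3 : m ^ (i ^ p ^ b - 1) = 1 := by rw [zpow_sub, ← h2, zpow_one, mul_inv_cancel]
  have h4 := hm.dvd_of_zpow_eq_one hr h1 h3
  have := Fact.mk hr
  have h5 : (i : ZMod r) ^ p ^ b = 1 := by
    have := (ZMod.intCast_zmod_eq_zero_iff_dvd _ r).2 h4
    push_cast at this
    exact sub_eq_zero.1 this
  have h6 : (i : ZMod r) ≠ 0 := by
    intro h0
    rw [h0, zero_pow (pow_ne_zero _ hp.ne_zero)] at h5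
    exact zero_ne_one h5
  have h7 := ZMod.pow_card_sub_one_eq_one h6
  have hcop : Nat.Coprime (p ^ b) (r - 1) := by
    refine Nat.Coprime.pow_left b ((hp.coprime_iff_not_dvd).2 fun hd => ?_)
    have := Nat.le_of_dvd (Nat.sub_pos_of_lt hr.one_lt) hd
    omega
  have h8 : (i : ZMod r) = 1 := orderOf_eq_one_iff.1
    (Nat.eq_one_of_dvd_coprimes hcop (orderOf_dvd_of_pow_eq_one h5) (orderOf_dvd_of_pow_eq_one h7))
  rw [← ZMod.intCast_zmod_eq_zero_iff_dvd]
  push_cast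
  rw [h8, sub_self]

/-- If conjugation by `y` raises `x`, `z` and `xz` to powers, then the exponents for `x` and `z`
agree modulo `p`. -/
theorem dvd_sub_of_conj_eq_zpow {p : ℕ} (hp : p.Prime) {x y z : G} (hx : IsPElement p x)
    (hx1 : x ≠ 1) (hz1 : z ≠ 1) (hzp : z ^ p = 1) (hxz : Commute x z) {i k m : ℤ}
    (hi : y * x * y⁻¹ = x ^ i) (hk : y * z * y⁻¹ = z ^ k)
    (hm : y * (x * z) * y⁻¹ = (x * z) ^ m) : (p : ℤ) ∣ i - k := by
  have hz : IsPElement p z := ⟨1, by rwa [pow_one]⟩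
  have h1 : x ^ (i - m) = z ^ (m - k) := by
    have h2 : x ^ i * z ^ k = x ^ m * z ^ m := by
      rw [← hxz.mul_zpow, ← hm, ← hi, ← hk]; group
    rw [sub_eq_neg_add, zpow_add, zpow_sub, zpow_neg, inv_mul_eq_iff_eq_mul, ← mul_assoc, ← h2,
      mul_inv_cancel_right]
  by_cases hd : (p : ℤ) ∣ m - k
  · obtain ⟨c, hc⟩ := hd
    have h3 : z ^ (m - k) = 1 := by rw [hc, zpow_mul, zpow_natCast, hzp, one_zpow]
    have h4 := hx.dvd_of_zpow_eq_one hp hx1 (h1.trans h3)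
    have := dvd_add h4 ⟨c, hc⟩
    rwa [sub_add_sub_cancel] at this
  · obtain ⟨t, ht⟩ : z ∈ Subgroup.zpowers x := by
      have := hz.mem_zpowers_zpow hp hd
      rw [← h1] at this
      exact (Subgroup.zpowers_le.2 (Subgroup.zpow_mem_zpowers x _)) this
    simp only at ht
    refine hz.dvd_of_zpow_eq_one hp hz1 ?_
    rw [zpow_sub, ← hk, ← ht, conj_zpow_eq hi, ← zpow_mul, mul_comm, mul_inv_cancel]

theorem commute_or_mem_zpowers {p q : ℕ} (hp : p.Prime) (hq : q.Prime) (hpq : p ≠ q) {x y : G}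
    (hx : IsPElement p x) (hy : IsPElement q y) (h : y * x * y⁻¹ ∈ Subgroup.zpowers x) :
    Commute y x ∨ x ∈ Subgroup.zpowers (y * x * y⁻¹ * x⁻¹) := by
  obtain ⟨i, hi⟩ := h
  simp only at hi
  by_cases hd : (p : ℤ) ∣ i - 1
  · exact .inl (commute_of_conj_eq_zpow hp hq hpq hx hy hi.symm hd)
  · right
    rw [← hi, ← zpow_sub_one]
    exact hx.mem_zpowers_zpow hp hd

theorem commute_of_normalizes {a b u : G} (ha : a * u * a⁻¹ ∈ Subgroup.zpowers u)
    (hb : b * u * b⁻¹ ∈ Subgroup.zpowers u) : Commute (a⁻¹ * b⁻¹ * a * b) u := by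
  obtain ⟨i, hi⟩ := ha
  obtain ⟨j, hj⟩ := hb
  simp only at hi hj
  have h1 : (a * b) * u * (a * b)⁻¹ = (b * a) * u * (b * a)⁻¹ := by
    calc (a * b) * u * (a * b)⁻¹ = a * (b * u * b⁻¹) * a⁻¹ := by group
      _ = b * (a * u * a⁻¹) * b⁻¹ := by
        rw [← hj, ← hi, conj_zpow_eq hi.symm, conj_zpow_eq hj.symm, mul_comm]
      _ = (b * a) * u * (b * a)⁻¹ := by group
  have h2 : (a⁻¹ * b⁻¹ * a * b) * u * (a⁻¹ * b⁻¹ * a * b)⁻¹ = u := by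
    calc (a⁻¹ * b⁻¹ * a * b) * u * (a⁻¹ * b⁻¹ * a * b)⁻¹
        = (b * a)⁻¹ * ((a * b) * u * (a * b)⁻¹) * (b * a) := by group
      _ = u := by rw [h1]; group
  exact mul_inv_eq_iff_eq_mul.1 h2

theorem IsPElement.exists_pow_prime {p : ℕ} {x : G} (hx : IsPElement p x) (h1 : x ≠ 1) :
    ∃ z ∈ Subgroup.zpowers x, z ≠ 1 ∧ z ^ p = 1 := by
  classical
  have hx' : ∃ n, x ^ p ^ n = 1 := hx
  obtain ⟨n, hn⟩ : ∃ n, Nat.find hx' = n + 1 := by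
    refine Nat.exists_eq_succ_of_ne_zero fun h0 => h1 ?_
    have := Nat.find_spec hx'
    rwa [h0, pow_zero, pow_one] at this
  refine ⟨x ^ p ^ n, Subgroup.npow_mem_zpowers x _, Nat.find_min hx' (by omega), ?_⟩
  rw [← pow_mul, ← pow_succ, ← hn]
  exact Nat.find_spec hx'

theorem commute_of_commute_of_isPGroup {p q : ℕ} (hp : p.Prime) (hq : q.Prime) (hpq : p ≠ q)
    {P : Subgroup G} (hP : IsPGroup p P) {y : G} (hy : IsPElement q y)
    (hn : ∀ x ∈ P, y * x * y⁻¹ ∈ Subgroup.zpowers x) (hc : ∀ a ∈ P, ∀ b ∈ P, Commute a b)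
    {w : G} (hw : w ∈ P) (hw1 : w ≠ 1) (hyw : Commute y w) {x : G} (hx : x ∈ P) :
    Commute y x := by
  obtain ⟨z, hz, hz1, hzp⟩ := (IsPElement.of_mem hP hw).exists_pow_prime hw1
  have hzP : z ∈ P := Subgroup.zpowers_le.2 hw hz
  rcases eq_or_ne x 1 with rfl | hx1
  · exact Commute.one_right y
  obtain ⟨i, hi⟩ := hn x hx
  obtain ⟨m, hm⟩ := hn (x * z) (P.mul_mem hx hzP)
  refine commute_of_conj_eq_zpow hp hq hpq (IsPElement.of_mem hP hx) hy hi.symm ?_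
  refine dvd_sub_of_conj_eq_zpow hp (IsPElement.of_mem hP hx) hx1 hz1 hzp (hc x hx z hzP)
    hi.symm (k := 1) ?_ hm.symm
  rw [zpow_one, mul_inv_eq_iff_eq_mul]
  exact commute_of_mem_zpowers hyw hz

theorem zpow_commutator_zpow {x g z : G} (hz : x * g * x⁻¹ = z * g) (hxz : Commute x z)
    (hgz : Commute g z) (i j : ℤ) : x ^ i * g ^ j * (x ^ i)⁻¹ * (g ^ j)⁻¹ = z ^ (i * j) := by
  have h1 : x * g ^ j * x⁻¹ = z ^ j * g ^ j := by
    rw [← conj_zpow, hz, hgz.symm.mul_zpow]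
  have h2 : g ^ j * x * (g ^ j)⁻¹ = z ^ (-j) * x := by
    have : x * g ^ j = z ^ j * g ^ j * x := mul_inv_eq_iff_eq_mul.1 h1
    rw [zpow_neg, eq_inv_mul_iff_mul_eq, ← mul_assoc, ← mul_assoc, ← this, mul_inv_cancel_right]
  have h3 : g ^ j * x ^ (-i) * (g ^ j)⁻¹ = z ^ (i * j) * x ^ (-i) := by
    rw [← conj_zpow, h2, (hxz.symm.zpow_left (-j)).mul_zpow, ← zpow_mul]
    congr 2; ring
  calc x ^ i * g ^ j * (x ^ i)⁻¹ * (g ^ j)⁻¹ = x ^ i * (g ^ j * x ^ (-i) * (g ^ j)⁻¹) := by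
        rw [zpow_neg]; group
    _ = z ^ (i * j) := by
        rw [h3, ← mul_assoc, (hxz.zpow_zpow i (i * j)).eq, mul_assoc, ← zpow_add, add_neg_cancel,
          zpow_zero, mul_one]

theorem IsPGroup.exists_second_center {p : ℕ} (hp : p.Prime) {P : Type*} [Group P] [Finite P]
    (hP : IsPGroup p P) (hc : ¬ ∀ a b : P, Commute a b) :
    ∃ x : P, x ∉ Subgroup.center P ∧ x ^ p ∈ Subgroup.center P ∧
      ∀ g : P, x * g * x⁻¹ * g⁻¹ ∈ Subgroup.center P := by
  have := Fact.mk hp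
  have hnt : Nontrivial (P ⧸ Subgroup.center P) := by
    rw [QuotientGroup.nontrivial_iff]
    intro h
    exact hc fun a b => (Subgroup.mem_center_iff.1 (h ▸ Subgroup.mem_top b) a)
  have hQ := hP.to_quotient (Subgroup.center P)
  have := hQ.center_nontrivial
  obtain ⟨⟨w, hw⟩, hw1⟩ := exists_ne (1 : Subgroup.center (P ⧸ Subgroup.center P))
  have hw1' : w ≠ 1 := fun h => hw1 (Subtype.ext h)
  obtain ⟨v, hv, hv1, hvp⟩ := IsPElement.exists_pow_prime (hQ w) hw1'
  have hvc := Subgroup.zpowers_le.2 hw hv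
  obtain ⟨x, rfl⟩ := QuotientGroup.mk_surjective v
  refine ⟨x, fun h => hv1 ((QuotientGroup.eq_one_iff x).2 h),
    (QuotientGroup.eq_one_iff _).1 hvp, fun g => (QuotientGroup.eq_one_iff _).1 ?_⟩
  have := Subgroup.mem_center_iff.1 hvc g
  rw [QuotientGroup.mk_mul, QuotientGroup.mk_mul, QuotientGroup.mk_mul, ← this,
    QuotientGroup.mk_inv, QuotientGroup.mk_inv]
  group

/-- A coprime power automorphism of a `p`-group `P` is trivial unless `P` is abelian. -/
theorem commute_or_commute_of_isPGroup {p q : ℕ} (hp : p.Prime) (hq : q.Prime) (hpq : p ≠ q)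
    {P : Subgroup G} (hP : IsPGroup p P) {y : G} (hy : IsPElement q y)
    (hn : ∀ x ∈ P, y * x * y⁻¹ ∈ Subgroup.zpowers x) :
    (∀ a ∈ P, ∀ b ∈ P, Commute a b) ∨ ∀ a ∈ P, Commute y a := by
  by_cases hc : ∀ a b : P, Commute a b
  · exact .inl fun a ha b hb => congrArg Subtype.val (hc ⟨a, ha⟩ ⟨b, hb⟩)
  right
  obtain ⟨⟨x, hx⟩, hxc, hxp, hxg⟩ := hP.exists_second_center hp hc
  have hcen : ∀ z ∈ Subgroup.center P, ∀ g ∈ P, Commute g (z : G) := fun z hz g hg =>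
    congrArg Subtype.val (Subgroup.mem_center_iff.1 hz ⟨g, hg⟩)
  have key : ∀ g ∈ P, ¬ Commute x g → Commute y g := by
    intro g hg hxg'
    have hzc := hxg ⟨g, hg⟩
    obtain ⟨z, hz⟩ : ∃ z, z = x * g * x⁻¹ * g⁻¹ := ⟨_, rfl⟩
    have hzP : z ∈ P := by
      rw [hz]
      exact P.mul_mem (P.mul_mem (P.mul_mem hx hg) (P.inv_mem hx)) (P.inv_mem hg)
    have hzcomm : ∀ a ∈ P, Commute a z := by
      intro a ha
      rw [hz]
      exact hcen _ hzc a ha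
    have hz1 : z ≠ 1 := by
      rintro rfl
      refine hxg' ?_
      have h2 := mul_inv_eq_one.1 hz.symm
      exact mul_inv_eq_iff_eq_mul.1 h2
    have hzg : x * g * x⁻¹ = z * g := by rw [hz]; group
    have hzp : z ^ p = 1 := by
      have h1 := zpow_commutator_zpow hzg (hzcomm x hx) (hzcomm g hg) p 1
      have h2 : Commute g (x ^ p) := hcen _ hxp g hg
      rw [mul_one, zpow_natCast, zpow_natCast, zpow_one, ← h2.eq] at h1
      rw [← h1]; group
    obtain ⟨i, hi⟩ := hn x hx
    obtain ⟨j, hj⟩ := hn g hg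
    obtain ⟨k, hk⟩ := hn z hzP
    obtain ⟨m, hm⟩ := hn (x * z) (P.mul_mem hx hzP)
    obtain ⟨l, hl⟩ := hn (g * z) (P.mul_mem hg hzP)
    simp only at hi hj hk hm hl
    have hx1 : x ≠ 1 := by rintro rfl; exact hxg' (Commute.one_left g)
    have hg1 : g ≠ 1 := by rintro rfl; exact hxg' (Commute.one_right x)
    have hxe := IsPElement.of_mem hP hx
    have hge := IsPElement.of_mem hP hg
    have hze := IsPElement.of_mem hP hzP
    have h1 := dvd_sub_of_conj_eq_zpow hp hxe hx1 hz1 hzp (hzcomm x hx) hi.symm hk.symm hm.symm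
    have h2 := dvd_sub_of_conj_eq_zpow hp hge hg1 hz1 hzp (hzcomm g hg) hj.symm hk.symm hl.symm
    have h3 : z ^ k = z ^ (i * j) := by
      rw [← zpow_commutator_zpow hzg (hzcomm x hx) (hzcomm g hg) i j, hk, hi, hj, hz]
      group
    have h4 : (p : ℤ) ∣ i * j - k := by
      refine hze.dvd_of_zpow_eq_one hp hz1 ?_
      rw [zpow_sub, ← h3, mul_inv_cancel]
    have h5 : ¬ (p : ℤ) ∣ k := by
      rintro ⟨c, rfl⟩
      rw [zpow_mul, zpow_natCast, hzp, one_zpow] at hk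
      refine hz1 ?_
      have : y * z = y := by simpa using mul_inv_eq_one.1 hk.symm
      simpa using this
    have h6 : (p : ℤ) ∣ k * (k - 1) := by
      have : k * (k - 1) = (i * j - k) - (i - k) * j - k * (j - k) := by ring
      rw [this]
      exact dvd_sub (dvd_sub h4 (Dvd.dvd.mul_right h1 j)) (Dvd.dvd.mul_left h2 k)
    have h7 := ((Nat.prime_iff_prime_int.1 hp).dvd_or_dvd h6).resolve_left h5
    refine commute_of_conj_eq_zpow hp hq hpq hge hy hj.symm ?_
    have := dvd_add h2 h7
    rwa [sub_add_sub_cancel] at this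
  obtain ⟨g, hg, hxg'⟩ : ∃ g ∈ P, ¬ Commute x g := by
    by_contra! hall
    exact hxc (Subgroup.mem_center_iff.2 fun g => Subtype.ext (hall g g.2).symm.eq)
  intro h hh
  by_cases hxh : Commute x h
  · have h1 : ¬ Commute x (h * g) := fun h2 => hxg' (by
      simpa using hxh.inv_right.mul_right h2)
    have h2 := (key _ (P.mul_mem hh hg) h1).mul_right (key g hg hxg').inv_right
    rwa [mul_inv_cancel_right] at h2
  · exact key h hh hxh

end CoprimeAction

/-! ### Subgroups generated by elements of prime power order -/

section Closure

variable {G : Type*} [Group G]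

/-- The subgroup generated by the `p`-elements of `T`. -/
def pClosure (p : ℕ) (T : Subgroup G) : Subgroup G :=
  Subgroup.closure {x | x ∈ T ∧ IsPElement p x}

/-- The subgroup generated by the `q`-elements of `T` for the primes `q ≠ p`. -/
def primeToClosure (p : ℕ) (T : Subgroup G) : Subgroup G :=
  Subgroup.closure {x | x ∈ T ∧ ∃ q : ℕ, q.Prime ∧ q ≠ p ∧ IsPElement q x}

theorem mem_pClosure {p : ℕ} {T : Subgroup G} {x : G} (hx : x ∈ T) (h : IsPElement p x) :
    x ∈ pClosure p T := Subgroup.subset_closure ⟨hx, h⟩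

theorem mem_primeToClosure {p q : ℕ} {T : Subgroup G} {x : G} (hx : x ∈ T) (hq : q.Prime)
    (hqp : q ≠ p) (h : IsPElement q x) : x ∈ primeToClosure p T :=
  Subgroup.subset_closure ⟨hx, q, hq, hqp, h⟩

theorem pClosure_le (p : ℕ) (T : Subgroup G) : pClosure p T ≤ T :=
  (Subgroup.closure_le T).2 fun _ hx => hx.1

theorem primeToClosure_le (p : ℕ) (T : Subgroup G) : primeToClosure p T ≤ T :=
  (Subgroup.closure_le T).2 fun _ hx => hx.1

theorem closure_normal_of_conj_mem {S : Set G} (h : ∀ x ∈ S, ∀ g : G, g * x * g⁻¹ ∈ S) :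
    (Subgroup.closure S).Normal := by
  refine ⟨fun n hn g => ?_⟩
  have : Subgroup.closure S ≤ (Subgroup.closure S).comap (MulAut.conj g).toMonoidHom :=
    (Subgroup.closure_le _).2 fun x hx => Subgroup.subset_closure (h x hx g)
  exact this hn

instance pClosure_normal (p : ℕ) (T : Subgroup G) [hT : T.Normal] : (pClosure p T).Normal :=
  closure_normal_of_conj_mem fun x hx g => ⟨hT.conj_mem x hx.1 g, hx.2.conj g⟩

instance primeToClosure_normal (p : ℕ) (T : Subgroup G) [hT : T.Normal] :
    (primeToClosure p T).Normal :=
  closure_normal_of_conj_mem fun x hx g => ⟨hT.conj_mem x hx.1 g, by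
    obtain ⟨-, q, hq, hqp, h⟩ := hx
    exact ⟨q, hq, hqp, h.conj g⟩⟩

theorem commute_of_mem_closure {S : Set G} {y : G} (h : ∀ x ∈ S, Commute y x) {x : G}
    (hx : x ∈ Subgroup.closure S) : Commute y x := by
  have : Subgroup.closure S ≤ Subgroup.centralizer {y} :=
    (Subgroup.closure_le _).2 fun s hs =>
      Subgroup.mem_centralizer_singleton_iff.2 (h s hs).symm.eq
  exact (Subgroup.mem_centralizer_singleton_iff.1 (this hx)).symm

variable [Finite G]

theorem IsSylowIn.mem_of_le_normalizer {p : ℕ} (hp : p.Prime) {P L : Subgroup G}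
    (h : IsSylowIn p P L) (hL : ∀ l ∈ L, ∀ a ∈ P, l * a * l⁻¹ ∈ P) {x : G} (hx : x ∈ L)
    (hxp : IsPElement p x) : x ∈ P := by
  have hn : Subgroup.zpowers x ≤ Subgroup.normalizer (P : Set G) := by
    rw [Subgroup.zpowers_le, Subgroup.mem_normalizer_iff]
    intro a
    refine ⟨hL x hx a, fun ha => ?_⟩
    have := hL _ (L.inv_mem hx) _ ha
    convert this using 1; group
  have h1 := h.eq_of_le hp (IsPGroup.to_sup_of_normal_right' hxp.isPGroup_zpowers h.isPGroup hn)
    (sup_le (Subgroup.zpowers_le.2 hx) h.le) le_sup_right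
  rw [← h1]
  exact Subgroup.mem_sup_left (Subgroup.mem_zpowers x)

/-- If the `p`-elements of `T` commute with its `q`-elements for `q ≠ p`, then the `p`-elements of
`T` generate a `p`-group. -/
theorem isPGroup_pClosure {p : ℕ} (hp : p.Prime) {T : Subgroup G}
    (h : ∀ q : ℕ, q.Prime → q ≠ p → ∀ y ∈ pClosure p T, IsPElement q y → ∀ x ∈ T,
      IsPElement p x → Commute y x) : IsPGroup p (pClosure p T) := by
  obtain ⟨P, hP, -⟩ :=
    (IsPGroup.of_bot (p := p) (G := G)).exists_isSylowIn hp (bot_le (a := pClosure p T))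
  have hn : pClosure p T ≤ Subgroup.normalizer (P : Set G) := by
    refine Subgroup.le_of_forall_isSylowIn fun q hq => ?_
    rcases eq_or_ne q p with rfl | hqp
    · exact ⟨P, hP, Subgroup.le_normalizer⟩
    · obtain ⟨Q, hQ, -⟩ :=
        (IsPGroup.of_bot (p := q) (G := G)).exists_isSylowIn hq (bot_le (a := pClosure p T))
      refine ⟨Q, hQ, fun y hy => Subgroup.mem_normalizer_iff.2 fun a => ?_⟩
      have hc : ∀ x ∈ pClosure p T, Commute y x := fun x hx =>
        commute_of_mem_closure (fun x hx => h q hq hqp y (hQ.le hy)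
          (IsPElement.of_mem hQ.isPGroup hy) x hx.1 hx.2) hx
      constructor
      · intro ha
        rwa [(hc a (hP.le ha)).eq, mul_inv_cancel_right]
      · intro ha
        have := (hc _ (hP.le ha)).eq
        have h2 : y * a * y⁻¹ = a := by
          have h3 : y * (y * a * y⁻¹) = y * a := by rw [this]; group
          exact mul_left_cancel h3
        rwa [h2] at ha
  refine hP.isPGroup.to_le ((Subgroup.closure_le P).2 fun x hx => ?_)
  exact hP.mem_of_le_normalizer hp
    (fun l hl a ha => (Subgroup.mem_normalizer_iff.1 (hn hl) a).1 ha) (mem_pClosure hx.1 hx.2) hx.2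

/-- If the `p`-elements of `primeToClosure p T` commute with the `q`-elements of `T` for `q ≠ p`,
then there are none but the identity. -/
theorem eq_one_of_mem_primeToClosure {p : ℕ} (hp : p.Prime) {T : Subgroup G}
    (h : ∀ q : ℕ, q.Prime → q ≠ p → ∀ y ∈ T, IsPElement q y → ∀ x ∈ primeToClosure p T,
      IsPElement p x → Commute y x) {x : G} (hx : x ∈ primeToClosure p T)
    (hxp : IsPElement p x) : x = 1 := by
  have := Fact.mk hp
  by_contra hx1
  let E := primeToClosure p T
  have hcen : ∀ x ∈ E, IsPElement p x → ∀ y ∈ E, Commute x y := fun x hx hxp y hy =>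
    commute_of_mem_closure (fun y hy' => by
      obtain ⟨hy, q, hq, hqp, hyq⟩ := hy'
      exact (h q hq hqp y hy hyq x hx hxp).symm) hy
  let P : Sylow p E := default
  have hP : Subgroup.normalizer (P : Set E) ≤ Subgroup.centralizer (P : Set E) := by
    intro n _
    rw [Subgroup.mem_centralizer_iff]
    intro a ha
    exact Subtype.ext (hcen a a.2 (IsPElement.coe_iff.2 (IsPElement.of_mem P.2 ha)) n n.2)
  have hK := MonoidHom.not_dvd_card_ker_transferSylow P hP
  have hle : E ≤ (MonoidHom.transferSylow P hP).ker.map E.subtype := by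
    refine (Subgroup.closure_le _).2 fun y ⟨hy, q, hq, hqp, hyq⟩ => ?_
    have hyE : y ∈ E := mem_primeToClosure hy hq hqp hyq
    refine ⟨⟨y, hyE⟩, ?_, rfl⟩
    refine MonoidHom.mem_ker.2 (IsPElement.eq_one hq hp hqp ?_ (P.2 _))
    exact IsPElement.map _ (IsPElement.coe_iff.1 hyq)
  refine hK ?_
  have hd := hxp.dvd_card hp (hle hx) hx1
  rwa [Subgroup.card_map_of_injective E.subtype_injective] at hd

theorem isPGroup_pClosure_of_quotient {p r : ℕ} (hp : p.Prime) {G' : Type*} [Group G']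
    {f : G →* G'} (hM : IsPGroup r f.ker)
    (hr : r = p ∨ ∀ x : G, IsPElement p x → ∀ m ∈ f.ker, Commute m x)
    (h : IsPGroup p (pClosure p (⊤ : Subgroup G'))) : IsPGroup p (pClosure p (⊤ : Subgroup G)) := by
  have hmap : ∀ x ∈ pClosure p (⊤ : Subgroup G), IsPElement p (f x) := by
    intro x hx
    have : pClosure p (⊤ : Subgroup G) ≤ (pClosure p (⊤ : Subgroup G')).comap f :=
      (Subgroup.closure_le _).2 fun y hy => mem_pClosure trivial (hy.2.map f)
    exact IsPElement.of_mem h (this hx)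
  rcases hr with rfl | hr
  · refine isPGroup_iff_forall_isPElement.2 fun x hx => ?_
    obtain ⟨n, hn⟩ := hmap x hx
    rw [← map_pow] at hn
    obtain ⟨m, hm⟩ := IsPElement.of_mem hM (x := x ^ r ^ n) hn
    exact ⟨n + m, by rw [pow_add, pow_mul, hm]⟩
  · refine isPGroup_pClosure hp fun q hq hqp y hy hyq x _ hx => ?_
    exact hr x hx y ((hyq.map f).eq_one hq hp hqp (hmap y hy))

end Closure

/-! ### Local conditions at a prime -/

section Types

/-- All subgroups of the (abelian) Sylow `p`-subgroup of `G` are normal in `G`. -/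
def AbelianNormalAt (p : ℕ) (G : Type*) [Group G] : Prop :=
  (∀ x : G, IsPElement p x → ∀ g : G, g * x * g⁻¹ ∈ Subgroup.zpowers x) ∧
    ∀ x y : G, IsPElement p x → IsPElement p y → Commute x y

/-- `K` is a normal `p`-complement of `G`. -/
structure IsNormalCompl {G : Type*} [Group G] (p : ℕ) (K : Subgroup G) : Prop where
  normal : K.Normal
  eq_one : ∀ x ∈ K, IsPElement p x → x = 1
  mem : ∀ q : ℕ, q.Prime → q ≠ p → ∀ x : G, IsPElement q x → x ∈ K

/-- At every prime `p`, `G` has a normal `p`-complement or satisfies `AbelianNormalAt p`. -/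
def HasLocalStructure (G : Type*) [Group G] : Prop :=
  ∀ p : ℕ, p.Prime → AbelianNormalAt p G ∨ ∃ K : Subgroup G, IsNormalCompl p K

/-- For primes `q < p`, elements of `q`-power order normalize cyclic `p`-subgroups. -/
def SmallerNormalizes (G : Type*) [Group G] : Prop :=
  ∀ p q : ℕ, p.Prime → q.Prime → q < p → ∀ x y : G, IsPElement p x → IsPElement q y →
    y * x * y⁻¹ ∈ Subgroup.zpowers x

/-- Elements of order prime to `p` normalize the cyclic subgroups of normal `p`-subgroups. -/
def CoprimeNormalizes (G : Type*) [Group G] : Prop :=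
  ∀ p q : ℕ, p.Prime → q.Prime → q ≠ p → ∀ B : Subgroup G, B.Normal → IsPGroup p B →
    ∀ y : G, IsPElement q y → ∀ b ∈ B, y * b * y⁻¹ ∈ Subgroup.zpowers b

variable {G : Type*} [Group G] [Finite G]

theorem exists_isNormalCompl {p : ℕ} (hp : p.Prime)
    (h : ∀ q : ℕ, q.Prime → q ≠ p → ∀ x y : G, IsPElement p x → IsPElement q y → Commute y x) :
    ∃ K : Subgroup G, IsNormalCompl p K :=
  ⟨primeToClosure p ⊤, inferInstance,
    fun _ hx hxp => eq_one_of_mem_primeToClosure hp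
      (fun q hq hqp y _ hy x _ hx => h q hq hqp x y hx hy) hx hxp,
    fun _ hq hqp _ hx => mem_primeToClosure trivial hq hqp hx⟩

end Types

/-! ### The local structure theorem -/

section LocalStructure

variable {G : Type*} [Group G]

theorem conj_mem_zpowers_of_mem {x y a : G} (h : y * x * y⁻¹ ∈ Subgroup.zpowers x)
    (ha : a ∈ Subgroup.zpowers x) : y * a * y⁻¹ ∈ Subgroup.zpowers x := by
  obtain ⟨k, rfl⟩ := ha
  simp only
  rw [← conj_zpow]
  exact Subgroup.zpow_mem _ h k

theorem conj_mem_zpowers_of_forall [Finite G] {x : G}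
    (h : ∀ q : ℕ, q.Prime → ∀ y : G, IsPElement q y → y * x * y⁻¹ ∈ Subgroup.zpowers x) (g : G) :
    g * x * g⁻¹ ∈ Subgroup.zpowers x := by
  have : (⊤ : Subgroup G) ≤ Subgroup.normalizer (Subgroup.zpowers x : Set G) := by
    refine Subgroup.le_of_forall_isPElement fun q hq y _ hy => ?_
    refine Subgroup.mem_normalizer_iff.2 fun a => ⟨conj_mem_zpowers_of_mem (h q hq y hy), ?_⟩
    intro ha
    have := conj_mem_zpowers_of_mem (h q hq _ hy.inv) ha
    convert this using 1; group
  exact (Subgroup.mem_normalizer_iff.1 (this (Subgroup.mem_top g)) x).1 (Subgroup.mem_zpowers x)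

theorem IsNormalCompl.comap {p r : ℕ} (hp : p.Prime) (hr : r.Prime) (hrp : r ≠ p) {G' : Type*}
    [Group G'] {f : G →* G'} (hker : IsPGroup r f.ker) {K : Subgroup G'} (h : IsNormalCompl p K) :
    IsNormalCompl p (K.comap f) where
  normal := h.normal.comap f
  eq_one x hx hxp := IsPElement.eq_one hp hr hrp.symm hxp
    (IsPElement.of_mem hker (h.eq_one (f x) hx (hxp.map f)))
  mem q hq hqp x hx := h.mem q hq hqp (f x) (hx.map f)

variable [Finite G]

theorem isPGroup_pClosure_of_commute {p : ℕ} (hp : p.Prime)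
    (h : ∀ x y : G, IsPElement p x → IsPElement p y → Commute x y) :
    IsPGroup p (pClosure p (⊤ : Subgroup G)) :=
  isPGroup_pClosure hp fun _ _ _ _ hy _ x _ hx =>
    (commute_of_mem_closure (fun z hz => h x z hx hz.2) hy).symm

/-- The local structure lifts from the quotient by a normal Sylow subgroup. -/
theorem hasLocalStructure_of_quotient {p : ℕ} (hp : p.Prime) {P : Subgroup G} [hPn : P.Normal]
    (hP : IsPGroup p P) (hmemP : ∀ x : G, IsPElement p x → x ∈ P) (hG : CoprimeNormalizes G)
    (hQ : HasLocalStructure (G ⧸ P)) : HasLocalStructure G := by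
  have hnorm : ∀ q : ℕ, q.Prime → q ≠ p → ∀ y : G, IsPElement q y → ∀ b ∈ P,
      y * b * y⁻¹ ∈ Subgroup.zpowers b :=
    fun q hq hqp y hy b hb => hG p q hp hq hqp P hPn hP y hy b hb
  let π : G →* G ⧸ P := QuotientGroup.mk' P
  have hker : π.ker = P := QuotientGroup.ker_mk' P
  have hπ : Function.Surjective π := QuotientGroup.mk'_surjective P
  have hπ1 : ∀ x, π x = 1 ↔ x ∈ P := fun x => by rw [← MonoidHom.mem_ker, hker]
  have hkerp : IsPGroup p π.ker := by rwa [hker]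
  intro q hq
  rcases eq_or_ne q p with rfl | hqp
  · by_cases hc : ∀ a ∈ P, ∀ b ∈ P, Commute a b
    · left
      refine ⟨fun x hx => conj_mem_zpowers_of_forall fun r hr y hy => ?_,
        fun x y hx hy => hc x (hmemP x hx) y (hmemP y hy)⟩
      rcases eq_or_ne r q with rfl | hrq
      · rw [(hc y (hmemP y hy) x (hmemP x hx)).eq, mul_inv_cancel_right]
        exact Subgroup.mem_zpowers x
      · exact hnorm r hr hrq y hy x (hmemP x hx)
    · right
      refine exists_isNormalCompl hq fun r hr hrq x y hx hy => ?_
      exact ((commute_or_commute_of_isPGroup hq hr hrq.symm hP hy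
        (hnorm r hr hrq y hy)).resolve_left hc) x (hmemP x hx)
  have hcompl : (∃ K : Subgroup (G ⧸ P), IsNormalCompl q K) →
      ∃ K : Subgroup G, IsNormalCompl q K := fun ⟨K, hK⟩ =>
    ⟨K.comap π, hK.comap hq hp hqp.symm hkerp⟩
  rcases hQ q hq with ⟨hQ1, hQ2⟩ | hQ'
  swap
  · exact .inr (hcompl hQ')
  by_cases hc : ∀ x : G, IsPElement q x → ∀ u ∈ P, Commute u x
  · left
    have hL : IsPGroup q (pClosure q (⊤ : Subgroup G)) :=
      isPGroup_pClosure_of_quotient hq hkerp (.inr fun x hx u hu => hc x hx u (hker ▸ hu))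
        (isPGroup_pClosure_of_commute hq hQ2)
    have hLP : ∀ x ∈ pClosure q (⊤ : Subgroup G), π x = 1 → x = 1 := fun x hx hx1 =>
      IsPElement.eq_one hq hp hqp (IsPElement.of_mem hL hx) (IsPElement.of_mem hP ((hπ1 x).1 hx1))
    constructor
    · intro x hx g
      obtain ⟨k, hk⟩ := hQ1 (π x) (hx.map π) (π g)
      simp only at hk
      have hxL := mem_pClosure (Subgroup.mem_top x) hx
      refine ⟨k, ?_⟩
      have h1 : x ^ k * (g * x * g⁻¹)⁻¹ = 1 := by
        refine hLP _ (Subgroup.mul_mem _ (Subgroup.zpow_mem _ hxL k) (Subgroup.inv_mem _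
          ((pClosure_normal q ⊤).conj_mem x hxL g))) ?_
        rw [map_mul, map_zpow, map_inv, map_mul, map_mul, map_inv, ← hk, mul_inv_cancel]
      exact mul_inv_eq_one.1 h1
    · intro x y hx hy
      have h1 : x * y * (y * x)⁻¹ = 1 := by
        have hxL := mem_pClosure (Subgroup.mem_top x) hx
        have hyL := mem_pClosure (Subgroup.mem_top y) hy
        refine hLP _ (Subgroup.mul_mem _ (Subgroup.mul_mem _ hxL hyL)
          (Subgroup.inv_mem _ (Subgroup.mul_mem _ hyL hxL))) ?_
        rw [map_mul, map_mul, map_inv, map_mul, (hQ2 _ _ (hx.map π) (hy.map π)).eq,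
          mul_inv_cancel]
      exact mul_inv_eq_one.1 h1
  · right
    push Not at hc
    obtain ⟨x₀, hx₀, u₀, hu₀, hxu⟩ := hc
    have hPc : ∀ a ∈ P, ∀ b ∈ P, Commute a b :=
      (commute_or_commute_of_isPGroup hp hq hqp.symm hP hx₀ (hnorm q hq hqp x₀ hx₀)).resolve_right
        fun h => hxu (h u₀ hu₀).symm
    refine hcompl (exists_isNormalCompl hq fun r hr hrq x' y' hx' hy' => ?_)
    obtain ⟨y, hy, rfl⟩ := hy'.exists_lift hπ hr
    rcases eq_or_ne r p with rfl | hrp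
    · rw [(hπ1 y).2 (hmemP y hy)]
      exact Commute.one_left _
    let D : Subgroup (G ⧸ P) := (Subgroup.centralizer (P : Set G)).map π
    have hD : ∀ x : G ⧸ P, IsPElement q x → Commute (π y) x ∨ x ∈ D := by
      intro x hx
      refine (commute_or_mem_zpowers hq hr hrq.symm hx hy' (hQ1 x hx (π y))).imp id fun h => ?_
      obtain ⟨z, hz, rfl⟩ := hx.exists_lift hπ hq
      refine (Subgroup.zpowers_le.2 ?_) h
      refine ⟨y * z * y⁻¹ * z⁻¹, Subgroup.mem_centralizer_iff.2 fun u hu => ?_, by simp⟩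
      have := commute_of_normalizes (hnorm r hr hrp _ hy.inv u hu) (hnorm q hq hqp _ hz.inv u hu)
      rw [inv_inv, inv_inv] at this
      exact this.symm.eq
    have hx₀D : π x₀ ∉ D := by
      rintro ⟨d, hd, hdx⟩
      have h1 : d⁻¹ * x₀ ∈ P := (hπ1 _).1 (by rw [map_mul, map_inv, hdx, inv_mul_cancel])
      have h2 : Commute u₀ (d * (d⁻¹ * x₀)) :=
        Commute.mul_right (Subgroup.mem_centralizer_iff.1 hd u₀ hu₀) (hPc _ hu₀ _ h1)
      rw [mul_inv_cancel_left] at h2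
      exact hxu h2
    have hy₀ := (hD (π x₀) (hx₀.map π)).resolve_right hx₀D
    rcases hD x' hx' with h | h
    · exact h
    · have h1 : x' * π x₀ ∉ D := fun h2 => hx₀D ((Subgroup.mul_mem_cancel_left D h).1 h2)
      have h2 := (hD _ (hx'.mul_of_commute (hx₀.map π) (hQ2 _ _ hx' (hx₀.map π)))).resolve_right h1
      have h3 := h2.mul_right hy₀.inv_right
      rwa [mul_inv_cancel_right] at h3

end LocalStructure

/-! ### Coprime elements normalize cyclic subgroups of normal `p`-subgroups -/

section Classes

variable {G : Type*} [Group G] [Finite G]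

theorem SPermIn.of_isPGroup {p : ℕ} (hp : p.Prime) {A B : Subgroup G} (hB : IsPGroup p B)
    (hAB : A ≤ B) : SPermIn A B := by
  intro r hr Q hQ
  rcases eq_or_ne r p with rfl | hrp
  · have := hQ.eq_of_le hr hB le_rfl hQ.le
    exact Permutes.of_le (this ▸ hAB)
  · refine Permutes.of_normalizes fun b hb a ha => ?_
    rw [IsPElement.eq_one hr hp hrp (.of_mem hQ.isPGroup hb) (.of_mem hB (hQ.le hb))]
    simpa using ha

theorem SemiIn.of_isPGroup {p : ℕ} (hp : p.Prime) {A B : Subgroup G} (hB : IsPGroup p B)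
    (hAB : A ≤ B) : SemiIn A B := by
  intro X hX hc
  rcases eq_or_ne A ⊥ with rfl | hA
  · exact Permutes.of_normal _ _
  refine Permutes.of_normalizes fun b hb a ha => ?_
  obtain rfl : b = 1 := by
    by_contra hb1
    obtain ⟨c, hcA, hc1⟩ := A.bot_or_exists_ne_one.resolve_left hA
    exact Nat.not_coprime_of_dvd_of_dvd hp.one_lt
      ((IsPElement.of_mem hB (hAB hcA)).dvd_card hp hcA hc1)
      ((IsPElement.of_mem hB (hX hb)).dvd_card hp hb hb1) hc
  simpa using ha

theorem IsPGroup.index_eq_pow_of_mul {p : ℕ} (hp : p.Prime) {A L : Subgroup G} (hA : IsPGroup p A)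
    (h : ∀ k : G, ∃ a ∈ A, ∃ l ∈ L, k = a * l) : ∃ n, L.index = p ^ n := by
  have := Fact.mk hp
  have : MulAction.IsPretransitive A (G ⧸ L) := by
    refine (MulAction.isPretransitive_iff_base (QuotientGroup.mk (1 : G))).2 fun x => ?_
    obtain ⟨g, rfl⟩ := QuotientGroup.mk_surjective x
    obtain ⟨a, ha, l, hl, rfl⟩ := h g
    refine ⟨⟨a, ha⟩, ?_⟩
    change ((a * 1 : G) : G ⧸ L) = _
    rw [QuotientGroup.eq]
    simpa using hl
  rw [Subgroup.index, ← MulAction.index_stabilizer_of_transitive A (QuotientGroup.mk (1 : G) : G ⧸ L)]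
  exact hA.index _

/-- An SS-permutable `p`-subgroup permutes with a `q`-subgroup containing a given `q`-element. -/
theorem SSPermIn.exists_permutes {p q : ℕ} (hp : p.Prime) (hq : q.Prime) (hqp : q ≠ p)
    {A : Subgroup G} (hA : IsPGroup p A) (h : SSPermIn A ⊤) {y : G} (hy : IsPElement q y) :
    ∃ Q : Subgroup G, IsPGroup q Q ∧ y ∈ Q ∧ Permutes A Q := by
  have := Fact.mk hq
  obtain ⟨L, -, hL, hperm⟩ := h
  obtain ⟨n, hn⟩ := hA.index_eq_pow_of_mul hp fun k => hL k trivial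
  have hnd : ¬ q ∣ Nat.card (G ⧸ L) := by
    rw [← Subgroup.index, hn]
    exact fun hd => hqp ((Nat.prime_dvd_prime_iff_eq hq hp).1 (hq.dvd_of_dvd_pow hd))
  obtain ⟨x, hx⟩ := hy.isPGroup_zpowers.nonempty_fixed_point_of_prime_not_dvd_card (G ⧸ L) hnd
  obtain ⟨g, rfl⟩ := QuotientGroup.mk_surjective x
  have hg : g⁻¹ * y * g ∈ L := by
    have h1 : ((g : G) : G ⧸ L) = ((y * g : G) : G ⧸ L) := (hx ⟨y, Subgroup.mem_zpowers y⟩).symm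
    rw [QuotientGroup.eq] at h1
    rwa [mul_assoc]
  obtain ⟨a, ha, l, hl, rfl⟩ := hL g trivial
  have hyL : a⁻¹ * y * a ∈ L := by
    have := L.mul_mem (L.mul_mem hl hg) (L.inv_mem hl)
    convert this using 1; group
  have hy' : IsPElement q (a⁻¹ * y * a) := by simpa using hy.conj a⁻¹
  obtain ⟨Q, hQ, hle⟩ := hy'.isPGroup_zpowers.exists_isSylowIn hq (Subgroup.zpowers_le.2 hyL)
  refine ⟨Q.map (MulAut.conj a).toMonoidHom, hQ.isPGroup.map _,
    ⟨_, hle (Subgroup.mem_zpowers _), ?_⟩, ?_⟩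
  · simp [mul_assoc]
  · rintro c hc _ ⟨b, hb, rfl⟩
    obtain ⟨a', ha', b', hb', e⟩ := hperm q hq Q hQ (a⁻¹ * c * a)
      (A.mul_mem (A.mul_mem (A.inv_mem ha) hc) ha) b hb
    refine ⟨a * a' * a⁻¹, A.mul_mem (A.mul_mem ha ha') (A.inv_mem ha), _, ⟨b', hb', rfl⟩, ?_⟩
    simp only [MulEquiv.toMonoidHom_eq_coe, MonoidHom.coe_coe, MulAut.conj_apply]
    calc a * b * a⁻¹ * c = a * (b * (a⁻¹ * c * a)) * a⁻¹ := by group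
      _ = _ := by rw [e]; group

theorem Permutes.conj_mem_zpowers {p q : ℕ} (hp : p.Prime) (hq : q.Prime) (hqp : q ≠ p)
    {A B Q : Subgroup G} [B.Normal] (hB : IsPGroup p B) (hQ : IsPGroup q Q) (hAB : A ≤ B)
    (h : Permutes A Q) {a y : G} (ha : a ∈ A) (hy : y ∈ Q) : y * a * y⁻¹ ∈ A :=
  h.conj_mem hAB (fun _ hx hxQ => IsPElement.eq_one hq hp hqp (.of_mem hQ hxQ) (.of_mem hB hx))
    ha hy

theorem IsPSTGroup.coprimeNormalizes (h : IsPSTGroup G) : CoprimeNormalizes G := by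
  rw [isPSTGroup_iff] at h
  intro p q hp hq hqp B hBn hB y hy b hb
  have hle := Subgroup.zpowers_le.2 hb
  have h1 := h _ B hle (.of_isPGroup hp hB hle) (.of_normal B ⊤)
  obtain ⟨Q, hQ, hyQ⟩ := hy.isPGroup_zpowers.exists_isSylowIn hq le_top
  exact (h1 q hq Q hQ).conj_mem_zpowers hp hq hqp hB hQ.isPGroup hle (Subgroup.mem_zpowers b)
    (hyQ (Subgroup.mem_zpowers y))

theorem IsSSTGroup.coprimeNormalizes (h : IsSSTGroup G) : CoprimeNormalizes G := by
  rw [isSSTGroup_iff] at h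
  intro p q hp hq hqp B hBn hB y hy b hb
  have hle := Subgroup.zpowers_le.2 hb
  have h1 := h _ B hle (SPermIn.of_isPGroup hp hB hle).ssPermIn (SPermIn.of_normal B ⊤).ssPermIn
  obtain ⟨Q, hQ, hyQ, hperm⟩ := h1.exists_permutes hp hq hqp (hB.to_le hle) hy
  exact hperm.conj_mem_zpowers hp hq hqp hB hQ hle (Subgroup.mem_zpowers b) hyQ

theorem coprime_card_of_isPGroup {p q : ℕ} (hp : p.Prime) (hq : q.Prime) (hqp : q ≠ p)
    {A B : Subgroup G} (hA : IsPGroup p A) (hB : IsPGroup q B) :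
    Nat.Coprime (Nat.card A) (Nat.card B) := by
  have := Fact.mk hp
  have := Fact.mk hq
  exact IsPGroup.coprime_card_of_ne p q hqp.symm A B hA hB

theorem IsBTGroup.coprimeNormalizes (h : IsBTGroup G) : CoprimeNormalizes G := by
  rw [isBTGroup_iff] at h
  intro p q hp hq hqp B hBn hB y hy b hb
  have hle := Subgroup.zpowers_le.2 hb
  have h1 := h _ B hle (.of_isPGroup hp hB hle) (.of_normal B ⊤)
  exact (h1 (Subgroup.zpowers y) le_top (coprime_card_of_isPGroup hp hq hqp (hB.to_le hle)
    hy.isPGroup_zpowers)).conj_mem_zpowers hp hq hqp hB hy.isPGroup_zpowers hle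
    (Subgroup.mem_zpowers b) (Subgroup.mem_zpowers y)

theorem exists_normal_isPGroup [Group.IsSolvable G] [Nontrivial G] :
    ∃ r : ℕ, r.Prime ∧ ∃ M : Subgroup G, M.Normal ∧ IsPGroup r M ∧ M ≠ ⊥ := by
  classical
  have hs := Group.IsSolvable.solvable (G := G)
  let n := Nat.find hs
  have hn : derivedSeries G n = ⊥ := Nat.find_spec hs
  have hn0 : n ≠ 0 := by
    intro h0
    rw [h0, derivedSeries_zero] at hn
    exact top_ne_bot hn
  obtain ⟨m, hm⟩ := Nat.exists_eq_succ_of_ne_zero hn0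
  let A := derivedSeries G m
  have hA : A ≠ ⊥ := Nat.find_min hs (m := m) (by omega)
  have hcomm : ∀ a ∈ A, ∀ b ∈ A, Commute a b := by
    intro a ha b hb
    rw [hm, Nat.succ_eq_add_one, derivedSeries_succ, Subgroup.commutator_eq_bot_iff_le_centralizer] at hn
    exact (Subgroup.mem_centralizer_iff.1 (hn ha) b hb).symm
  have hAn : A.Normal := derivedSeries_normal G m
  have hc1 : Nat.card A ≠ 1 := fun h => hA (Subgroup.card_eq_one.1 h)
  obtain ⟨r, hr, hd⟩ := Nat.exists_prime_and_dvd hc1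
  have := Fact.mk hr
  refine ⟨r, hr, pClosure r A, inferInstance, ?_, ?_⟩
  · exact isPGroup_pClosure hr fun q hq hqr y hy _ x hx _ => hcomm y (pClosure_le r A hy) x hx
  · obtain ⟨x, hx⟩ := exists_prime_orderOf_dvd_card' r hd
    intro hbot
    have : (x : G) ∈ pClosure r A := mem_pClosure x.2 ⟨1, by
      rw [pow_one, ← hx]; exact_mod_cast congrArg Subtype.val (pow_orderOf_eq_one x)⟩
    rw [hbot, Subgroup.mem_bot] at this
    have h1 : x = 1 := Subtype.ext this
    rw [h1, orderOf_one] at hx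
    exact hr.one_lt.ne hx

end Classes

/-! ### Existence of normal Sylow subgroups -/

section NormalSylow

section

variable {G : Type*} [Group G] [Finite G]

theorem card_quotient_lt {M : Subgroup G} (hM : M ≠ ⊥) : Nat.card (G ⧸ M) < Nat.card G := by
  rw [Subgroup.card_eq_card_quotient_mul_card_subgroup M]
  exact lt_mul_of_one_lt_right Nat.card_pos ((Subgroup.one_lt_card_iff_ne_bot M).2 hM)

theorem card_subgroup_lt {T : Subgroup G} (hT : T ≠ ⊤) : Nat.card T < Nat.card G :=
  lt_of_le_of_ne (Nat.le_of_dvd Nat.card_pos T.card_subgroup_dvd_card)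
    fun h => hT (T.eq_top_of_card_eq h)

theorem exists_isPElement_ne_one {p : ℕ} (hp : p.Prime) {T : Subgroup G} (hd : p ∣ Nat.card T) :
    ∃ x ∈ T, IsPElement p x ∧ x ≠ 1 := by
  have := Fact.mk hp
  obtain ⟨x, hx⟩ := exists_prime_orderOf_dvd_card' p hd
  refine ⟨x, x.2, ⟨1, ?_⟩, fun h => ?_⟩
  · rw [pow_one, ← hx]
    exact_mod_cast congrArg Subtype.val (pow_orderOf_eq_one x)
  · rw [← Subgroup.orderOf_coe, h, orderOf_one] at hx
    exact hp.one_lt.ne hx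

theorem IsPGroup.pClosure_of_subgroup {p : ℕ} {T : Subgroup G}
    (h : IsPGroup p (pClosure p (⊤ : Subgroup T))) : IsPGroup p (pClosure p T) := by
  refine (h.map T.subtype).to_le ((Subgroup.closure_le _).2 fun x hx => ?_)
  exact ⟨⟨x, hx.1⟩, mem_pClosure trivial (IsPElement.coe_iff.1 hx.2), rfl⟩

theorem coprime_card_index_of_forall_mem {p : ℕ} (hp : p.Prime) {P : Subgroup G}
    (hP : IsPGroup p P) (h : ∀ x : G, IsPElement p x → x ∈ P) :
    Nat.Coprime (Nat.card P) P.index := by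
  have := Fact.mk hp
  obtain ⟨S, hS, hPS⟩ := hP.exists_isSylowIn hp le_top
  have hSP : S = P := le_antisymm (fun x hx => h x (.of_mem hS.isPGroup hx)) hPS
  have hnd := hS.not_dvd
  rw [hSP, Subgroup.relIndex_top_right] at hnd
  obtain ⟨n, hn⟩ := hP.exists_card_eq
  rw [hn]
  exact Nat.Coprime.pow_left n (hp.coprime_iff_not_dvd.2 hnd)

/-- A `p`-group `X` centralizes an element of order `p` of any nontrivial normal `p`-subgroup. -/
theorem IsPGroup.exists_commute_of_normal {p : ℕ} (hp : p.Prime) {X P : Subgroup G}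
    (hX : IsPGroup p X) (hP : IsPGroup p P) [P.Normal] (hP1 : P ≠ ⊥) :
    ∃ z ∈ P, z ≠ 1 ∧ z ^ p = 1 ∧ ∀ x ∈ X, Commute x z := by
  have := Fact.mk hp
  obtain ⟨b, hbP, hb1⟩ := P.bot_or_exists_ne_one.resolve_left hP1
  have hd : p ∣ Nat.card P := (IsPElement.of_mem hP hbP).dvd_card hp hbP hb1
  let : MulAction X P :=
    MulAction.compHom P ((MulAut.conjNormal (H := P)).comp X.subtype)
  have hsmul : ∀ (x : X) (a : P), ((x • a : P) : G) = x * a * (x : G)⁻¹ := fun x a => rfl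
  obtain ⟨w, hw, hw1⟩ := hX.exists_fixed_point_of_prime_dvd_card_of_fixed_point P hd
    (a := 1) (fun x => Subtype.ext (by rw [hsmul]; simp))
  obtain ⟨z, hz, hz1, hzp⟩ := (IsPElement.of_mem hP w.2).exists_pow_prime
    (fun h => hw1 (Subtype.ext h.symm))
  refine ⟨z, Subgroup.zpowers_le.2 w.2 hz, hz1, hzp, fun x hx => commute_of_mem_zpowers ?_ hz⟩
  have := congrArg Subtype.val (hw ⟨x, hx⟩)
  rw [hsmul] at this
  exact mul_inv_eq_iff_eq_mul.1 this

end

universe u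

theorem isPGroup_pClosure_top_of_class {C : ∀ (G : Type u) [Group G], Prop}
    (hnorm : ∀ (G : Type u) [Group G] [Finite G], C G → CoprimeNormalizes G)
    (hquot : ∀ (G : Type u) [Group G] [Finite G] (N : Subgroup G) [N.Normal], C G → C (G ⧸ N))
    {p : ℕ} (hp : p.Prime) (n : ℕ) : ∀ (G : Type u) [Group G] [Finite G] [Group.IsSolvable G],
      Nat.card G = n → C G → (∀ q : ℕ, q.Prime → q ∣ Nat.card G → q ≤ p) →
      IsPGroup p (pClosure p (⊤ : Subgroup G)) := by
  induction n using Nat.strong_induction_on with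
  | _ n ih =>
  intro G _ _ _ hn hC hle
  rcases subsingleton_or_nontrivial G with hs | hs
  · exact fun x => ⟨0, Subsingleton.elim _ _⟩
  obtain ⟨r, hr, M, hMn, hM, hM1⟩ := exists_normal_isPGroup (G := G)
  have hker : (QuotientGroup.mk' M).ker = M := QuotientGroup.ker_mk' M
  refine isPGroup_pClosure_of_quotient (f := QuotientGroup.mk' M) hp (r := r) (by rwa [hker]) ?_
    (ih _ (hn ▸ card_quotient_lt hM1) (G ⧸ M) rfl (hquot G M hC)
      fun q hq hd => hle q hq (hd.trans M.card_quotient_dvd_card))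
  rw [hker]
  refine or_iff_not_imp_left.2 fun hrp x hx m hm => (commute_of_conj_mem_zpowers_of_lt hp hr
    (lt_of_le_of_ne (hle r hr ?_) hrp) hx (.of_mem hM hm) ?_).symm
  · obtain ⟨b, hbM, hb1⟩ := M.bot_or_exists_ne_one.resolve_left hM1
    exact ((IsPElement.of_mem hM hbM).dvd_card hr hbM hb1).trans M.card_subgroup_dvd_card
  · exact hnorm G hC r p hr hp (Ne.symm hrp) M hMn hM x hx m hm

theorem IsPElement.mem_of_pClosure_eq_top {G : Type*} [Group G] [Finite G] {p q : ℕ} (hp : p.Prime)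
    (hq : q.Prime) (hqp : q ≠ p) (hT : pClosure p (⊤ : Subgroup G) = ⊤) {y : G}
    (hy : IsPElement q y) : y ∈ commutator G := by
  let f := Abelianization.of (G := G)
  have hA : IsPGroup p (pClosure p (⊤ : Subgroup (Abelianization G))) :=
    isPGroup_pClosure hp fun _ _ _ y _ _ x _ _ => Commute.all y x
  have h1 : pClosure p (⊤ : Subgroup G) ≤ (pClosure p ⊤).comap f :=
    (Subgroup.closure_le _).2 fun x hx => mem_pClosure trivial (hx.2.map f)
  have h2 : f y ∈ pClosure p ⊤ := h1 (by rw [hT]; trivial)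
  have h3 : f y = 1 := IsPElement.eq_one hq hp hqp (hy.map f) (.of_mem hA h2)
  rwa [← MonoidHom.mem_ker, Abelianization.ker_of] at h3

theorem commute_of_pClosure_eq_top {G : Type*} [Group G] [Finite G] (hG : CoprimeNormalizes G)
    {p q : ℕ} (hp : p.Prime) (hq : q.Prime) (hqp : q ≠ p)
    (hT : pClosure p (⊤ : Subgroup G) = ⊤) {P : Subgroup G} (hP : IsPGroup p P) [hPn : P.Normal]
    {y : G} (hy : IsPElement q y) {a : G} (ha : a ∈ P) : Commute y a := by
  have hn : ∀ x ∈ P, y * x * y⁻¹ ∈ Subgroup.zpowers x := hG p q hp hq hqp P hPn hP y hy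
  rcases commute_or_commute_of_isPGroup hp hq hqp.symm hP hy hn with hc | hc
  · rcases eq_or_ne P ⊥ with rfl | hP1
    · rw [Subgroup.mem_bot.1 ha]
      exact Commute.one_right y
    obtain ⟨S, hS, -⟩ :=
      (IsPGroup.of_bot (p := p) (G := G)).exists_isSylowIn hp (bot_le (a := ⊤))
    obtain ⟨z, hzP, hz1, hzp, hSz⟩ := hS.isPGroup.exists_commute_of_normal hp hP hP1
    have hzn : (⊤ : Subgroup G) ≤ Subgroup.normalizer (Subgroup.zpowers z : Set G) := by
      refine Subgroup.le_of_forall_isSylowIn fun r hr => ?_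
      rcases eq_or_ne r p with rfl | hrp
      · refine ⟨S, hS, fun s hs => Subgroup.mem_normalizer_iff.2 fun g => ?_⟩
        constructor
        · intro hg
          rwa [(commute_of_mem_zpowers (hSz s hs) hg).eq, mul_inv_cancel_right]
        · intro hg
          have := (commute_of_mem_zpowers (hSz _ (S.inv_mem hs)) hg).eq
          have h2 : s * g * s⁻¹ = g := by
            calc s * g * s⁻¹ = (s * g * s⁻¹) * s⁻¹ * s := by group
              _ = g := by rw [← this]; group
          rwa [h2] at hg
      · obtain ⟨Q, hQ, -⟩ :=
          (IsPGroup.of_bot (p := r) (G := G)).exists_isSylowIn hr (bot_le (a := ⊤))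
        refine ⟨Q, hQ, fun s hs => Subgroup.mem_normalizer_iff.2 fun g => ?_⟩
        have key : ∀ s ∈ Q, ∀ g ∈ Subgroup.zpowers z, s * g * s⁻¹ ∈ Subgroup.zpowers z :=
          fun s hs g hg => conj_mem_zpowers_of_mem
            (hG p r hp hr hrp P hPn hP s (.of_mem hQ.isPGroup hs) z hzP) hg
        refine ⟨key s hs g, fun hg => ?_⟩
        have := key s⁻¹ (Q.inv_mem hs) _ hg
        convert this using 1; group
    have hZn : (Subgroup.zpowers z).Normal := Subgroup.normalizer_eq_top_iff.1 (top_le_iff.1 hzn)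
    have hzc : ∀ x : G, IsPElement p x → Commute z x := by
      intro x hx
      obtain ⟨w, ⟨k, rfl⟩, hw1, -, hxw⟩ := hx.isPGroup_zpowers.exists_commute_of_normal hp
        (IsPElement.of_mem hP hzP).isPGroup_zpowers (P := Subgroup.zpowers z)
        (fun h => hz1 (Subgroup.zpowers_eq_bot.1 h))
      simp only at hw1 hxw
      have hk : ¬ (p : ℤ) ∣ k := by
        rintro ⟨m, rfl⟩
        exact hw1 (by rw [zpow_mul, zpow_natCast, hzp, one_zpow])
      exact (commute_of_mem_zpowers (hxw x (Subgroup.mem_zpowers x))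
        ((IsPElement.of_mem hP hzP).mem_zpowers_zpow hp hk)).symm
    refine commute_of_commute_of_isPGroup hp hq hqp.symm hP hy hn hc hzP hz1 ?_ ha
    exact (commute_of_mem_closure (fun x hx => hzc x hx.2)
      (show y ∈ pClosure p (⊤ : Subgroup G) by rw [hT]; trivial)).symm
  · exact hc a ha

theorem IsBTGroup.isPGroup_pClosure_top (n : ℕ) : ∀ (G : Type u) [Group G] [Finite G]
    [Group.IsSolvable G], Nat.card G = n → IsBTGroup G → ∀ p : ℕ, p.Prime →
      (∀ q : ℕ, q.Prime → q ∣ Nat.card G → q ≤ p) → IsPGroup p (pClosure p (⊤ : Subgroup G)) := by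
  induction n using Nat.strong_induction_on with
  | _ n ih =>
  intro G _ _ _ hn hG p hp hle
  rcases subsingleton_or_nontrivial G with hs | hs
  · exact fun x => ⟨0, Subsingleton.elim _ _⟩
  have hsub : ∀ (T : Subgroup G) [T.Normal], T ≠ ⊤ → ∀ r : ℕ, r.Prime →
      (∀ q : ℕ, q.Prime → q ∣ Nat.card T → q ≤ r) → IsPGroup r (pClosure r T) :=
    fun T _ hT r hr hler => IsPGroup.pClosure_of_subgroup
      (ih _ (hn ▸ card_subgroup_lt hT) T rfl (hG.subgroup T) r hr hler)
  have hdvd : ∀ T : Subgroup G, ∀ q : ℕ, q.Prime → q ∣ Nat.card T → q ≤ p :=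
    fun T q hq hd => hle q hq (hd.trans T.card_subgroup_dvd_card)
  by_cases hT : pClosure p (⊤ : Subgroup G) = ⊤
  swap
  · refine (hsub _ hT p hp (hdvd _)).to_le ((Subgroup.closure_le _).2 fun x hx => ?_)
    exact mem_pClosure (mem_pClosure hx.1 hx.2) hx.2
  have hD : commutator G ≠ ⊤ := (Group.IsSolvable.commutator_lt_top_of_nontrivial G).ne
  have hP0 : IsPGroup p (pClosure p (commutator G)) := hsub _ hD p hp (hdvd _)
  have hED : primeToClosure p (⊤ : Subgroup G) ≤ commutator G :=
    (Subgroup.closure_le _).2 fun x ⟨_, q, hq, hqp, hx⟩ => hx.mem_of_pClosure_eq_top hp hq hqp hT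
  have hE1 : ∀ x ∈ primeToClosure p (⊤ : Subgroup G), IsPElement p x → x = 1 := fun x hx hxp =>
    eq_one_of_mem_primeToClosure hp (fun q hq hqp y _ hy x hx hxp =>
      commute_of_pClosure_eq_top hG.coprimeNormalizes hp hq hqp hT hP0 hy
        (mem_pClosure (hED hx) hxp)) hx hxp
  by_cases hE : primeToClosure p (⊤ : Subgroup G) = ⊥
  · refine isPGroup_pClosure hp fun q hq hqp y hy hyq x _ hx => ?_
    have : y ∈ primeToClosure p (⊤ : Subgroup G) := mem_primeToClosure trivial hq hqp hyq
    rw [hE, Subgroup.mem_bot] at this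
    rw [this]
    exact Commute.one_left x
  generalize hEdef : primeToClosure p (⊤ : Subgroup G) = E at *
  have hEn : E.Normal := hEdef ▸ inferInstance
  have hc1 : (Nat.card E).primeFactors.Nonempty := by
    rw [Nat.nonempty_primeFactors]
    exact (Subgroup.one_lt_card_iff_ne_bot E).2 hE
  obtain ⟨r, hrE, hmax⟩ := (Nat.card E).primeFactors.exists_max_image id hc1
  have hr := Nat.prime_of_mem_primeFactors hrE
  have hrd := Nat.dvd_of_mem_primeFactors hrE
  obtain ⟨z, hzE, hzr, hz1⟩ := exists_isPElement_ne_one hr hrd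
  have hrp : r ≠ p := by
    rintro rfl
    exact hz1 (hE1 z hzE hzr)
  have hrlt : r < p := lt_of_le_of_ne (hdvd E r hr hrd) hrp
  have hR : IsPGroup r (pClosure r E) :=
    hsub E (fun h => hD (top_le_iff.1 (h ▸ hED))) r hr fun q hq hd =>
      hmax q (Nat.mem_primeFactors.2 ⟨hq, hd, Nat.card_pos.ne'⟩)
  have hRmem : ∀ x : G, IsPElement r x → x ∈ pClosure r E := fun x hx =>
    mem_pClosure (hEdef ▸ mem_primeToClosure trivial hr hrp hx) hx
  have hRbot : pClosure r E ≠ ⊥ := fun h => hz1 (by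
    have := hRmem z hzr
    rwa [h, Subgroup.mem_bot] at this)
  have hker : (QuotientGroup.mk' (pClosure r E)).ker = pClosure r E := QuotientGroup.ker_mk' _
  refine isPGroup_pClosure_of_quotient (f := QuotientGroup.mk' (pClosure r E)) hp (r := r)
    (by rwa [hker]) ?_
    (ih _ (hn ▸ card_quotient_lt hRbot) (G ⧸ pClosure r E) rfl
      (hG.of_surjective (QuotientGroup.mk'_surjective _) ?_) p hp
      fun q hq hd => hle q hq (hd.trans (Subgroup.card_quotient_dvd_card _)))
  · right
    rw [hker]
    intro x hx m hm
    exact (commute_of_conj_mem_zpowers_of_lt hp hr hrlt hx (.of_mem hR hm)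
      (hG.coprimeNormalizes r p hr hp hrp.symm _ inferInstance hR x hx m hm)).symm
  · rw [hker]
    exact coprime_card_index_of_forall_mem hr hR hRmem

theorem hasLocalStructure_of_class {C : ∀ (G : Type u) [Group G], Prop}
    (hnorm : ∀ (G : Type u) [Group G] [Finite G], C G → CoprimeNormalizes G)
    (hquot : ∀ (G : Type u) [Group G] [Finite G] (N : Subgroup G) [N.Normal],
      Nat.Coprime (Nat.card N) N.index → C G → C (G ⧸ N))
    (hsylow : ∀ (G : Type u) [Group G] [Finite G] [Group.IsSolvable G], C G → ∀ p : ℕ, p.Prime →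
      (∀ q : ℕ, q.Prime → q ∣ Nat.card G → q ≤ p) → IsPGroup p (pClosure p (⊤ : Subgroup G)))
    (n : ℕ) : ∀ (G : Type u) [Group G] [Finite G] [Group.IsSolvable G], Nat.card G = n → C G →
      HasLocalStructure G := by
  induction n using Nat.strong_induction_on with
  | _ n ih =>
  intro G _ _ _ hn hG
  rcases subsingleton_or_nontrivial G with hs | hs
  · exact fun p hp => .inl ⟨fun x _ g => by rw [Subsingleton.elim (g * x * g⁻¹) 1]; exact one_mem _,
      fun x y _ _ => Subsingleton.elim _ _⟩
  have hc1 : (Nat.card G).primeFactors.Nonempty := by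
    rw [Nat.nonempty_primeFactors]
    exact Finite.one_lt_card
  obtain ⟨p, hpG, hmax⟩ := (Nat.card G).primeFactors.exists_max_image id hc1
  have hp := Nat.prime_of_mem_primeFactors hpG
  have hP := hsylow G hG p hp fun q hq hd =>
    hmax q (Nat.mem_primeFactors.2 ⟨hq, hd, Nat.card_pos.ne'⟩)
  have hmem : ∀ x : G, IsPElement p x → x ∈ pClosure p (⊤ : Subgroup G) :=
    fun x hx => mem_pClosure trivial hx
  obtain ⟨z, -, hzp, hz1⟩ := exists_isPElement_ne_one (T := (⊤ : Subgroup G)) hp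
    (by rw [Subgroup.card_top]; exact Nat.dvd_of_mem_primeFactors hpG)
  have hbot : pClosure p (⊤ : Subgroup G) ≠ ⊥ := fun h => hz1 (by
    have := hmem z hzp
    rwa [h, Subgroup.mem_bot] at this)
  exact hasLocalStructure_of_quotient hp hP hmem (hnorm G hG)
    (ih _ (hn ▸ card_quotient_lt hbot) (G ⧸ pClosure p (⊤ : Subgroup G)) rfl
      (hquot G _ (coprime_card_index_of_forall_mem hp hP hmem) hG))

variable {G : Type u} [Group G] [Finite G] [Group.IsSolvable G]

theorem IsPSTGroup.hasLocalStructure (h : IsPSTGroup G) : HasLocalStructure G :=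
  hasLocalStructure_of_class (C := fun G _ => IsPSTGroup G) (fun _ _ _ h => h.coprimeNormalizes)
    (fun _ _ _ _ _ _ h => h.of_surjective (QuotientGroup.mk'_surjective _))
    (fun G _ _ _ h _ hp hle => isPGroup_pClosure_top_of_class (C := fun G _ => IsPSTGroup G)
      (fun _ _ _ h => h.coprimeNormalizes)
      (fun _ _ _ _ _ h => h.of_surjective (QuotientGroup.mk'_surjective _)) hp _ G rfl h hle)
    _ G rfl h

theorem IsSSTGroup.hasLocalStructure (h : IsSSTGroup G) : HasLocalStructure G :=
  hasLocalStructure_of_class (C := fun G _ => IsSSTGroup G) (fun _ _ _ h => h.coprimeNormalizes)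
    (fun _ _ _ _ _ _ h => h.of_surjective (QuotientGroup.mk'_surjective _))
    (fun G _ _ _ h _ hp hle => isPGroup_pClosure_top_of_class (C := fun G _ => IsSSTGroup G)
      (fun _ _ _ h => h.coprimeNormalizes)
      (fun _ _ _ _ _ h => h.of_surjective (QuotientGroup.mk'_surjective _)) hp _ G rfl h hle)
    _ G rfl h

theorem IsBTGroup.hasLocalStructure (h : IsBTGroup G) : HasLocalStructure G :=
  hasLocalStructure_of_class (C := fun G _ => IsBTGroup G) (fun _ _ _ h => h.coprimeNormalizes)
    (fun _ _ _ N _ hc h => h.of_surjective (QuotientGroup.mk'_surjective N)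
      (by rwa [QuotientGroup.ker_mk']))
    (fun G _ _ _ h p hp hle => h.isPGroup_pClosure_top _ G rfl p hp hle) _ G rfl h

end NormalSylow

/-! ### From local structure to normalization by smaller primes -/

section SmallerNormalizes

variable {G : Type*} [Group G] [Finite G]

theorem AbelianNormalAt.normal {p : ℕ} (h : AbelianNormalAt p G) {A : Subgroup G}
    (hA : IsPGroup p A) : A.Normal :=
  ⟨fun a ha g => Subgroup.zpowers_le.2 ha (h.1 a (.of_mem hA ha) g)⟩

/-- The intersection of the normal `q`-complements for the primes `q ≠ p`. -/
def complInf (p : ℕ) (G : Type*) [Group G] : Subgroup G :=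
  sInf {K | ∃ q : ℕ, q.Prime ∧ q ≠ p ∧ IsNormalCompl q K}

theorem complInf_normal (p : ℕ) (G : Type*) [Group G] : (complInf p G).Normal := by
  refine ⟨fun x hx g => Subgroup.mem_sInf.2 fun K hK => ?_⟩
  obtain ⟨q, -, -, h⟩ := id hK
  exact h.normal.conj_mem x (Subgroup.mem_sInf.1 hx K hK) g

theorem IsPElement.mem_complInf {p : ℕ} (hp : p.Prime) {x : G} (hx : IsPElement p x) :
    x ∈ complInf p G :=
  Subgroup.mem_sInf.2 fun _ ⟨_, _, hqp, h⟩ => h.mem p hp hqp.symm x hx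

theorem HasLocalStructure.conj_mem_zpowers (h : HasLocalStructure G) {p r : ℕ} (hr : r.Prime)
    (hrp : r ≠ p) {x : G} (hx : x ∈ complInf p G) (hxr : IsPElement r x) (g : G) :
    g * x * g⁻¹ ∈ Subgroup.zpowers x := by
  rcases h r hr with h1 | ⟨K, hK⟩
  · exact h1.1 x hxr g
  · rw [hK.eq_one x (Subgroup.mem_sInf.1 hx K ⟨r, hr, hrp, hK⟩) hxr]
    simp

theorem IsBTGroup.semiIn_of_isPGroup (hG : IsBTGroup G) (h : HasLocalStructure G) {p : ℕ}
    (hp : p.Prime) {A : Subgroup G} (hA : IsPGroup p A) : SemiIn A ⊤ := by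
  rw [isBTGroup_iff] at hG
  obtain ⟨P, hP, hAP⟩ := hA.exists_isSylowIn hp le_top
  have := complInf_normal p G
  refine hG A P hAP (.of_isPGroup hp hP.isPGroup hAP) (hG P (complInf p G) ?_ ?_ (.of_normal _ _))
  · exact fun x hx => (IsPElement.of_mem hP.isPGroup hx).mem_complInf hp
  intro X hX hc
  rcases eq_or_ne P ⊥ with rfl | hP1
  · exact Permutes.of_normal _ _
  refine (Permutes.of_normalizes fun g hg => ?_).symm
  change X ≤ X.comap (MulAut.conj g).toMonoidHom
  refine Subgroup.le_of_forall_isPElement fun r hr x hx hxr => ?_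
  change g * x * g⁻¹ ∈ X
  rcases eq_or_ne r p with rfl | hrp
  · obtain ⟨b, hbP, hb1⟩ := P.bot_or_exists_ne_one.resolve_left hP1
    obtain rfl : x = 1 := by
      by_contra hx1
      exact Nat.not_coprime_of_dvd_of_dvd hp.one_lt
        ((IsPElement.of_mem hP.isPGroup hbP).dvd_card hp hbP hb1) (hxr.dvd_card hp hx hx1) hc
    simp
  · exact Subgroup.zpowers_le.2 hx (h.conj_mem_zpowers hr hrp (hX hx) hxr g)

theorem IsSSTGroup.ssPermIn_of_isPGroup (hG : IsSSTGroup G) (h : HasLocalStructure G) {p : ℕ}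
    (hp : p.Prime) {A : Subgroup G} (hA : IsPGroup p A) : SSPermIn A ⊤ := by
  rw [isSSTGroup_iff] at hG
  rcases h p hp with h1 | ⟨K, hK⟩
  · have := h1.normal hA
    exact (SPermIn.of_normal A ⊤).ssPermIn
  obtain ⟨P, hP, hAP⟩ := hA.exists_isSylowIn hp le_top
  have := complInf_normal p G
  have := hK.normal
  refine hG A P hAP (SPermIn.of_isPGroup hp hP.isPGroup hAP).ssPermIn
    (hG P (complInf p G) ?_ ?_ (SPermIn.of_normal _ _).ssPermIn)
  · exact fun x hx => (IsPElement.of_mem hP.isPGroup hx).mem_complInf hp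
  refine ⟨K ⊓ complInf p G, inf_le_right, fun k hk => ?_, fun r hr R hR => ?_⟩
  · have hle : complInf p G ≤ P ⊔ (K ⊓ complInf p G) := by
      refine Subgroup.le_of_forall_isSylowIn fun q hq => ?_
      obtain ⟨Q, hQ, -⟩ := (IsPGroup.of_bot (p := q) (G := G)).exists_isSylowIn hq
        (bot_le (a := complInf p G))
      rcases eq_or_ne q p with rfl | hqp
      · refine ⟨P, ⟨fun x hx => (IsPElement.of_mem hP.isPGroup hx).mem_complInf hp, hP.isPGroup,
          fun hd => hP.not_dvd ?_⟩, le_sup_left⟩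
        rw [Subgroup.relIndex_top_right]
        exact hd.trans (Subgroup.relIndex_dvd_index_of_le
          fun x hx => (IsPElement.of_mem hP.isPGroup hx).mem_complInf hp)
      · exact ⟨Q, hQ, fun x hx => Subgroup.mem_sup_right
          ⟨hK.mem q hq hqp x (.of_mem hQ.isPGroup hx), hQ.le hx⟩⟩
    obtain ⟨a, ha, l, hl, e⟩ := Subgroup.mem_sup_of_normal_right.1 (hle hk)
    exact ⟨a, ha, l, hl, e.symm⟩
  · refine (Permutes.of_normalizes fun g hg x hx => ?_).symm
    have hxr := IsPElement.of_mem hR.isPGroup hx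
    rcases eq_or_ne r p with rfl | hrp
    · rw [hK.eq_one x (hR.le hx).1 hxr]
      simp
    · exact Subgroup.zpowers_le.2 hx (h.conj_mem_zpowers hr hrp (hR.le hx).2 hxr g)

theorem HasLocalStructure.smallerNormalizes (h : HasLocalStructure G)
    (hperm : ∀ p q : ℕ, p.Prime → q.Prime → q ≠ p → ∀ x y : G, IsPElement p x → IsPElement q y →
      ∃ Q : Subgroup G, IsPGroup q Q ∧ y ∈ Q ∧ Permutes (Subgroup.zpowers x) Q) :
    SmallerNormalizes G := by
  intro p q hp hq hqp x y hx hy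
  rcases h q hq with h1 | ⟨K, hK⟩
  · have := commute_of_conj_mem_zpowers_of_lt hp hq hqp hx hy (h1.1 y hy x)
    rw [← this.eq, mul_inv_cancel_right]
    exact Subgroup.mem_zpowers x
  · obtain ⟨Q, hQ, hyQ, hPQ⟩ := hperm p q hp hq hqp.ne x y hx hy
    have := hK.normal
    exact hPQ.conj_mem (Subgroup.zpowers_le.2 (hK.mem p hp hqp.ne' x hx))
      (fun z hz hzQ => hK.eq_one z hz (.of_mem hQ hzQ)) (Subgroup.mem_zpowers x) hyQ

theorem IsBTGroup.smallerNormalizes [Group.IsSolvable G] (hG : IsBTGroup G) :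
    SmallerNormalizes G :=
  hG.hasLocalStructure.smallerNormalizes fun _ _ hp hq hqp _ y hx hy =>
    ⟨Subgroup.zpowers y, hy.isPGroup_zpowers, Subgroup.mem_zpowers y,
      hG.semiIn_of_isPGroup hG.hasLocalStructure hp hx.isPGroup_zpowers _ le_top
        (coprime_card_of_isPGroup hp hq hqp hx.isPGroup_zpowers hy.isPGroup_zpowers)⟩

theorem IsSSTGroup.smallerNormalizes [Group.IsSolvable G] (hG : IsSSTGroup G) :
    SmallerNormalizes G :=
  hG.hasLocalStructure.smallerNormalizes fun _ _ hp hq hqp _ _ hx hy =>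
    (hG.ssPermIn_of_isPGroup hG.hasLocalStructure hp hx.isPGroup_zpowers).exists_permutes
      hp hq hqp hx.isPGroup_zpowers hy

end SmallerNormalizes

/-! ### Sufficient conditions for transitivity -/

section Sufficiency

variable {G : Type*} [Group G] [Finite G]

theorem Permutes.of_forall_isSylowIn {H R : Subgroup G}
    (h : ∀ p : ℕ, p.Prime → ∃ P, IsSylowIn p P H ∧ Permutes P R) : Permutes H R := by
  have hle : H ≤ MulAction.stabilizer G ((R : Set G) * (H : Set G)) := by
    refine Subgroup.le_of_forall_isSylowIn fun p hp => ?_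
    obtain ⟨P, hP, hPR⟩ := h p hp
    refine ⟨P, hP, fun x hx => ?_⟩
    rw [MulAction.mem_stabilizer_set_iff_smul_set_subset (Set.toFinite _)]
    rintro _ ⟨_, ⟨r, hr, g, hg, rfl⟩, rfl⟩
    obtain ⟨r', hr', x', hx', e⟩ := hPR.symm r hr x hx
    exact ⟨r', hr', x' * g, H.mul_mem (hP.le hx') hg, by simp [← mul_assoc, e]⟩
  refine Permutes.symm fun r hr g hg => ?_
  have h1 : g • (r * 1) ∈ (R : Set G) * (H : Set G) := by
    have h2 := MulAction.mem_stabilizer_iff.1 (hle hg)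
    rw [← h2]
    exact Set.smul_mem_smul_set ⟨r, hr, 1, H.one_mem, rfl⟩
  obtain ⟨r', hr', g', hg', e⟩ := h1
  exact ⟨r', hr', g', hg', by simpa using e.symm⟩

theorem SmallerNormalizes.permutes (h : SmallerNormalizes G) {p q : ℕ} (hp : p.Prime)
    (hq : q.Prime) (hqp : q ≠ p) {A B : Subgroup G} (hA : IsPGroup p A) (hB : IsPGroup q B) :
    Permutes A B := by
  rcases lt_or_gt_of_ne hqp with hlt | hlt
  · exact .of_normalizes fun b hb a ha => Subgroup.zpowers_le.2 ha
      (h p q hp hq hlt a b (.of_mem hA ha) (.of_mem hB hb))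
  · exact Permutes.symm <| .of_normalizes fun b hb a ha => Subgroup.zpowers_le.2 ha
      (h q p hq hp hlt a b (.of_mem hB ha) (.of_mem hA hb))

theorem SmallerNormalizes.isBTGroup (h : SmallerNormalizes G) : IsBTGroup G := by
  rw [isBTGroup_iff]
  intro H _ _ _ _ X _ hc
  refine Permutes.of_forall_isSylowIn fun p hp => ?_
  obtain ⟨P, hP, -⟩ := (IsPGroup.of_bot (p := p) (G := G)).exists_isSylowIn hp (bot_le (a := H))
  refine ⟨P, hP, Permutes.symm (Permutes.of_forall_isSylowIn fun q hq => ?_)⟩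
  obtain ⟨Q, hQ, -⟩ := (IsPGroup.of_bot (p := q) (G := G)).exists_isSylowIn hq (bot_le (a := X))
  refine ⟨Q, hQ, ?_⟩
  rcases eq_or_ne q p with rfl | hqp
  · rcases eq_or_ne Q ⊥ with rfl | hQ1
    · exact Permutes.of_normal _ _
    obtain rfl : P = ⊥ := by
      by_contra hP1
      obtain ⟨a, ha, ha1⟩ := P.bot_or_exists_ne_one.resolve_left hP1
      obtain ⟨b, hb, hb1⟩ := Q.bot_or_exists_ne_one.resolve_left hQ1
      exact Nat.not_coprime_of_dvd_of_dvd hp.one_lt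
        ((IsPElement.of_mem hP.isPGroup ha).dvd_card hp (hP.le ha) ha1)
        ((IsPElement.of_mem hQ.isPGroup hb).dvd_card hp (hQ.le hb) hb1) hc
    exact (Permutes.of_normal _ _).symm
  · exact (h.permutes hp hq hqp hP.isPGroup hQ.isPGroup).symm

theorem relIndex_eq_index_iff {H L : Subgroup G} :
    L.relIndex H = L.index ↔ ∀ k : G, ∃ a ∈ H, ∃ l ∈ L, k = a * l := by
  have hst : MulAction.stabilizer H (QuotientGroup.mk (1 : G) : G ⧸ L) = L.subgroupOf H := by
    ext a
    rw [MulAction.mem_stabilizer_iff, Subgroup.mem_subgroupOf]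
    change ((a * 1 : G) : G ⧸ L) = _ ↔ _
    rw [eq_comm, QuotientGroup.eq]
    simp
  rw [Subgroup.relIndex, ← hst, MulAction.index_stabilizer, Subgroup.index, ← Set.ncard_univ]
  have h1 : (MulAction.orbit H (QuotientGroup.mk (1 : G) : G ⧸ L)).ncard =
      (Set.univ : Set (G ⧸ L)).ncard ↔ MulAction.orbit H (QuotientGroup.mk (1 : G) : G ⧸ L) =
        Set.univ :=
    ⟨fun h => Set.eq_of_subset_of_ncard_le (Set.subset_univ _) h.ge, fun h => by rw [h]⟩
  rw [h1, Set.eq_univ_iff_forall]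
  constructor
  · intro h k
    obtain ⟨a, ha⟩ := h (QuotientGroup.mk k)
    refine ⟨a, a.2, (a : G)⁻¹ * k, ?_, by group⟩
    change ((a * 1 : G) : G ⧸ L) = _ at ha
    rw [QuotientGroup.eq] at ha
    simpa using ha
  · intro h x
    obtain ⟨g, rfl⟩ := QuotientGroup.mk_surjective x
    obtain ⟨a, ha, l, hl, rfl⟩ := h g
    refine ⟨⟨a, ha⟩, ?_⟩
    change ((a * 1 : G) : G ⧸ L) = _
    rw [QuotientGroup.eq]
    simpa using hl

theorem index_iInf_eq_prod {ι : Type*} [DecidableEq ι] {K : ι → Subgroup G} (s : Finset ι)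
    (h : ∀ i ∈ s, ∀ j ∈ s, i ≠ j → Nat.Coprime (K i).index (K j).index) :
    (⨅ i ∈ s, K i).index = ∏ i ∈ s, (K i).index := by
  induction s using Finset.induction_on with
  | empty => simp
  | insert i s hi ih =>
    have ih := ih fun i hi j hj => h i (Finset.mem_insert_of_mem hi) j (Finset.mem_insert_of_mem hj)
    rw [Finset.iInf_insert, Finset.prod_insert hi, ← ih]
    refine le_antisymm (Subgroup.index_inf_le) (Nat.le_of_dvd
      (Nat.pos_of_ne_zero Subgroup.FiniteIndex.index_ne_zero) (Nat.Coprime.mul_dvd_of_dvd_of_dvd ?_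
        (Subgroup.index_dvd_of_le inf_le_left) (Subgroup.index_dvd_of_le inf_le_right)))
    rw [ih]
    exact Nat.Coprime.prod_right fun j hj => h i (Finset.mem_insert_self i s) j
      (Finset.mem_insert_of_mem hj) (fun e => hi (e ▸ hj))

theorem SmallerNormalizes.isSSTGroup (h : SmallerNormalizes G)
    (hss : ∀ p : ℕ, p.Prime → ∀ A : Subgroup G, IsPGroup p A → SSPermIn A ⊤) : IsSSTGroup G := by
  classical
  rw [isSSTGroup_iff]
  intro H _ _ _ _
  have hex : ∀ p : ℕ, ∃ P L : Subgroup G, p.Prime → IsSylowIn p P H ∧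
      (∀ k : G, ∃ a ∈ P, ∃ l ∈ L, k = a * l) ∧ SPermIn P L := by
    intro p
    by_cases hp : p.Prime
    · obtain ⟨P, hP, -⟩ := (IsPGroup.of_bot (p := p) (G := G)).exists_isSylowIn hp
        (bot_le (a := H))
      obtain ⟨L, -, hL, hperm⟩ := hss p hp P hP.isPGroup
      exact ⟨P, L, fun _ => ⟨hP, fun k => hL k trivial, hperm⟩⟩
    · exact ⟨⊥, ⊥, fun h => absurd h hp⟩
  choose P L hPL using hex
  let s := (Nat.card G).primeFactors
  have hs : ∀ p ∈ s, p.Prime := fun p hp => Nat.prime_of_mem_primeFactors hp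
  have hidx : ∀ p ∈ s, ∃ n, (L p).index = p ^ n := fun p hp =>
    ((hPL p (hs p hp)).1.isPGroup).index_eq_pow_of_mul (hs p hp) (hPL p (hs p hp)).2.1
  have hcop : ∀ i ∈ s, ∀ j ∈ s, i ≠ j → Nat.Coprime (L i).index (L j).index := by
    intro i hi j hj hij
    obtain ⟨n, hn⟩ := hidx i hi
    obtain ⟨m, hm⟩ := hidx j hj
    rw [hn, hm]
    exact Nat.Coprime.pow n m ((Nat.coprime_primes (hs i hi) (hs j hj)).2 hij)
  have hK := index_iInf_eq_prod s hcop
  set K := ⨅ i ∈ s, L i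
  have hKle : ∀ i ∈ s, K ≤ L i := fun i hi => iInf₂_le i hi
  refine ⟨K, le_top, fun k _ => ?_, fun q hq Q hQ => ?_⟩
  · refine relIndex_eq_index_iff.1 (le_antisymm ?_ (Nat.le_of_dvd
      (Nat.pos_of_ne_zero Subgroup.FiniteIndex.index_ne_zero) ?_)) k
    · rw [← K.relIndex_top_right]
      refine Subgroup.relIndex_le_of_le_right le_top ?_
      rw [K.relIndex_top_right]
      exact Subgroup.FiniteIndex.index_ne_zero
    · rw [hK]
      refine Finset.prod_dvd_of_isRelPrime
        (fun i hi j hj hij => Nat.coprime_iff_isRelPrime.1 (hcop i hi j hj hij)) fun i hi => ?_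
      have h1 : (L i).relIndex H = (L i).index := relIndex_eq_index_iff.2 fun k => by
        obtain ⟨a, ha, l, hl, e⟩ := (hPL i (hs i hi)).2.1 k
        exact ⟨a, (hPL i (hs i hi)).1.le ha, l, hl, e⟩
      rw [← h1]
      exact Subgroup.relIndex_dvd_of_le_left H (hKle i hi)
  · refine Permutes.of_forall_isSylowIn fun p hp => ⟨P p, (hPL p hp).1, ?_⟩
    rcases eq_or_ne q p with rfl | hqp
    · by_cases hqs : q ∈ s
      · refine (hPL q hq).2.2 q hq Q (hQ.trans hq (hKle q hqs) fun hd => ?_)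
        have h1 := Subgroup.relIndex_mul_index (hKle q hqs)
        rw [hK, ← Finset.prod_erase_mul _ _ hqs] at h1
        have h2 := Nat.eq_of_mul_eq_mul_right
          (Nat.pos_of_ne_zero Subgroup.FiniteIndex.index_ne_zero) h1
        rw [h2, hq.prime.dvd_finsetProd_iff] at hd
        obtain ⟨r, hr, hd⟩ := hd
        obtain ⟨hrq, hr⟩ := Finset.mem_erase.1 hr
        obtain ⟨n, hn⟩ := hidx r hr
        rw [hn] at hd
        exact hrq ((Nat.prime_dvd_prime_iff_eq hq (hs r hr)).1 (hq.dvd_of_dvd_pow hd)).symm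
      · obtain rfl : Q = ⊥ := by
          refine (Subgroup.eq_bot_iff_forall Q).2 fun x hx => ?_
          by_contra hx1
          exact hqs (Nat.mem_primeFactors.2 ⟨hq, ((IsPElement.of_mem hQ.isPGroup hx).dvd_card hq hx
            hx1).trans Q.card_subgroup_dvd_card, Nat.card_pos.ne'⟩)
        exact (Permutes.of_normal _ _).symm
    · exact h.permutes hp hq hqp (hPL p hp).1.isPGroup hQ.isPGroup

end Sufficiency

section Lifting

open scoped commutatorElement

variable {G : Type*} [Group G] [Finite G]

/-- At every prime `r`, the `r`-elements of `N` centralize the derived subgroup of `N` or `N` has a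
normal `r`-complement. -/
def HasLocalStructureIn (N : Subgroup G) : Prop :=
  ∀ r : ℕ, r.Prime → (∀ x ∈ N, IsPElement r x → ∀ v ∈ ⁅N, N⁆, Commute x v) ∨
    ∀ x ∈ primeToClosure r N, IsPElement r x → x = 1

theorem HasLocalStructure.hasLocalStructureIn {N : Subgroup G} (h : HasLocalStructure N) :
    HasLocalStructureIn N := by
  intro r hr
  rcases h r hr with h | ⟨K, hK⟩
  · left
    intro x hx hxr v hv
    rw [Subgroup.commutator_def] at hv
    refine commute_of_mem_closure ?_ hv
    rintro _ ⟨a, ha, b, hb, rfl⟩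
    have hn : ∀ g ∈ N, g⁻¹ * x * g⁻¹⁻¹ ∈ Subgroup.zpowers x := by
      intro g hg
      obtain ⟨k, hk⟩ := h.1 ⟨x, hx⟩ (IsPElement.coe_iff.1 hxr) ⟨g⁻¹, N.inv_mem hg⟩
      exact ⟨k, congrArg Subtype.val hk⟩
    have := commute_of_normalizes (hn a ha) (hn b hb)
    rw [inv_inv, inv_inv] at this
    exact this.symm
  · right
    intro x hx hxr
    have hle : primeToClosure r N ≤ K.map N.subtype := (Subgroup.closure_le _).2 (by
      rintro y ⟨hy, q, hq, hqr, hyq⟩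
      exact ⟨⟨y, hy⟩, hK.mem q hq hqr _ (IsPElement.coe_iff.1 hyq), rfl⟩)
    obtain ⟨z, hz, rfl⟩ := hle hx
    rw [hK.eq_one z hz (IsPElement.coe_iff.1 hxr), map_one]

/-- Elements of coprime prime power orders in `V` commute. -/
def CoprimeCommute (V : Subgroup G) : Prop :=
  ∀ r s : ℕ, r.Prime → s.Prime → r ≠ s → ∀ x ∈ V, ∀ y ∈ V, IsPElement r x → IsPElement s y →
    Commute x y

theorem HasLocalStructureIn.coprimeCommute {N : Subgroup G} [N.Normal]
    (h : HasLocalStructureIn N) : CoprimeCommute ⁅N, N⁆ := by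
  intro r s hr hs hrs x hx y hy hxr hys
  have hVN : ⁅N, N⁆ ≤ N := Subgroup.commutator_le_left N N
  rcases h r hr with h1 | -
  · exact h1 x (hVN hx) hxr y hy
  rcases h s hs with h1 | -
  · exact (h1 y (hVN hy) hys x hx).symm
  let Z : Subgroup G := N ⊓ ⨅ t : ℕ,
    ⨅ _ : ∀ x ∈ primeToClosure t N, IsPElement t x → x = 1, primeToClosure t N
  have hZ : ∀ v ∈ ⁅N, N⁆, Z ≤ Subgroup.centralizer {v} := by
    intro v hv
    refine Subgroup.le_of_forall_isPElement fun t ht z hz hzt => ?_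
    rw [Subgroup.mem_centralizer_singleton_iff]
    rcases h t ht with h1 | h1
    · exact (h1 z hz.1 hzt v hv).eq
    · have h2 := (Subgroup.mem_inf.1 hz).2
      simp only [Subgroup.mem_iInf] at h2
      rw [h1 z (h2 t h1) hzt, one_mul, mul_one]
  have hc : ⁅x, y⁆ ∈ Z := by
    refine Subgroup.mem_inf.2
      ⟨hVN (Subgroup.commutator_mem_commutator (hVN hx) (hVN hy)), ?_⟩
    simp only [Subgroup.mem_iInf]
    intro t _
    by_cases htr : r = t
    · subst htr
      have hyt : y ∈ primeToClosure r N := mem_primeToClosure (hVN hy) hs hrs.symm hys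
      exact mul_mem ((inferInstance : (primeToClosure r N).Normal).conj_mem y hyt x) (inv_mem hyt)
    · have hxt : x ∈ primeToClosure t N := mem_primeToClosure (hVN hx) hr htr hxr
      have h3 := mul_mem hxt
        ((inferInstance : (primeToClosure t N).Normal).conj_mem _ (inv_mem hxt) y)
      rwa [← mul_assoc, ← mul_assoc] at h3
  have hcx : Commute ⁅x, y⁆ x := Subgroup.mem_centralizer_singleton_iff.1 (hZ x hx hc)
  have hcy : Commute ⁅x, y⁆ y := Subgroup.mem_centralizer_singleton_iff.1 (hZ y hy hc)
  have e1 : ⁅x, y⁆ = x * (y * x⁻¹ * y⁻¹) := by rw [commutatorElement_def]; group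
  have e2 : ⁅x, y⁆ = (x * y * x⁻¹) * y⁻¹ := by rw [commutatorElement_def]
  have hcr : IsPElement r ⁅x, y⁆ := by
    have : y * x⁻¹ * y⁻¹ = x⁻¹ * ⁅x, y⁆ := by rw [e1]; group
    rw [e1]
    refine hxr.mul_of_commute (hxr.inv.conj y) ?_
    rw [this]
    exact (Commute.refl x).inv_right.mul_right hcx.symm
  have hcs : IsPElement s ⁅x, y⁆ := by
    have : x * y * x⁻¹ = ⁅x, y⁆ * y := by rw [e2]; group
    rw [e2]
    refine (hys.conj x).mul_of_commute hys.inv ?_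
    rw [this]
    exact (hcy.mul_left (Commute.refl y)).inv_right
  exact commutatorElement_eq_one_iff_commute.1 (hcr.eq_one hr hs hrs hcs)

theorem CoprimeCommute.isPGroup_pClosure {V : Subgroup G} (h : CoprimeCommute V) {r : ℕ}
    (hr : r.Prime) : IsPGroup r (pClosure r V) :=
  _root_.isPGroup_pClosure hr fun q hq hqr y hy hyq x hx hxr =>
    h q r hq hr hqr y (pClosure_le r V hy) x hx hyq hxr

theorem CoprimeCommute.mem_commutator_pClosure {V : Subgroup G} [V.Normal] (h : CoprimeCommute V)
    {r : ℕ} (hr : r.Prime) {u : G} (hu : u ∈ ⁅V, V⁆) (hur : IsPElement r u) :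
    u ∈ ⁅pClosure r V, pClosure r V⁆ := by
  have hV : V ≤ pClosure r V ⊔ primeToClosure r V :=
    Subgroup.le_of_forall_isPElement fun q hq x hx hxq => by
      by_cases hqr : q = r
      · subst hqr
        exact Subgroup.mem_sup_left (mem_pClosure hx hxq)
      · exact Subgroup.mem_sup_right (mem_primeToClosure hx hq hqr hxq)
  have hcomm : ∀ a ∈ pClosure r V, ∀ e ∈ primeToClosure r V, Commute a e := fun a ha e he =>
    commute_of_mem_closure (by
      rintro y ⟨hy, q, hq, hqr, hyq⟩
      exact h r q hr hq hqr.symm a (pClosure_le r V ha) y hy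
        (IsPElement.of_mem (h.isPGroup_pClosure hr) ha) hyq) he
  have hU : ⁅V, V⁆ ≤ ⁅pClosure r V, pClosure r V⁆ ⊔ primeToClosure r V := by
    rw [Subgroup.commutator_le]
    intro v hv w hw
    obtain ⟨a, ha, e, he, rfl⟩ := Subgroup.mem_sup_of_normal_right.1 (hV hv)
    obtain ⟨b, hb, f, hf, rfl⟩ := Subgroup.mem_sup_of_normal_right.1 (hV hw)
    have h1 : ⁅a * e, b * f⁆ = ⁅a, b⁆ * ⁅e, f⁆ := by
      have c1 := (hcomm a ha f hf).eq
      have c2 := (hcomm b hb e he).eq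
      have c3 := (hcomm _ (inv_mem ha) _ (mul_mem (mul_mem he hf) (inv_mem he))).eq
      have c4 := (hcomm _ (inv_mem hb) _
        (mul_mem (mul_mem (mul_mem he hf) (inv_mem he)) (inv_mem hf))).eq
      simp only [commutatorElement_def]
      calc a * e * (b * f) * (a * e)⁻¹ * (b * f)⁻¹
          = a * (e * b) * f * e⁻¹ * a⁻¹ * f⁻¹ * b⁻¹ := by group
        _ = a * b * (e * f * e⁻¹ * a⁻¹) * f⁻¹ * b⁻¹ := by rw [← c2]; group
        _ = a * b * a⁻¹ * (e * f * e⁻¹ * f⁻¹ * b⁻¹) := by rw [← c3]; group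
        _ = a * b * a⁻¹ * b⁻¹ * (e * f * e⁻¹ * f⁻¹) := by rw [← c4]; group
    rw [h1]
    exact mul_mem (Subgroup.mem_sup_left (Subgroup.commutator_mem_commutator ha hb))
      (Subgroup.mem_sup_right (mul_mem (mul_mem (mul_mem he hf) (inv_mem he)) (inv_mem hf)))
  obtain ⟨s, hs, e, he, rfl⟩ := Subgroup.mem_sup_of_normal_right.1 (hU hu)
  have hs' : s ∈ pClosure r V := Subgroup.commutator_le_left _ _ hs
  have hse := hcomm s hs' e he
  have her : IsPElement r e := by
    have := ((IsPElement.of_mem (h.isPGroup_pClosure hr) hs').inv).mul_of_commute hur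
      (((Commute.refl s).mul_right hse).inv_left)
    rwa [inv_mul_cancel_left] at this
  have he1 : e = 1 := eq_one_of_mem_primeToClosure hr (fun q hq hqr y hy hyq x hx hxr =>
    h q r hq hr hqr y hy x (primeToClosure_le r V hx) hyq hxr) he her
  rwa [he1, mul_one]

theorem IsSylowIn.exists_conj_mem {p : ℕ} (hp : p.Prime) {R : Subgroup G}
    (hR : IsSylowIn p R ⊤) {x : G} (hx : IsPElement p x) : ∃ g : G, g * x * g⁻¹ ∈ R := by
  have := Fact.mk hp
  have hd : ¬ p ∣ Nat.card (G ⧸ R) := by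
    have := hR.not_dvd
    rwa [Subgroup.relIndex_top_right] at this
  obtain ⟨c, hc⟩ := hx.isPGroup_zpowers.nonempty_fixed_point_of_prime_not_dvd_card (G ⧸ R) hd
  obtain ⟨g, rfl⟩ := QuotientGroup.mk_surjective c
  have h1 := hc ⟨x, Subgroup.mem_zpowers x⟩
  have h2 : ((x * g : G) : G ⧸ R) = (g : G ⧸ R) := h1
  rw [eq_comm, QuotientGroup.eq] at h2
  exact ⟨g⁻¹, by rwa [inv_inv, mul_assoc]⟩

theorem eq_top_of_sup_commutator_eq_top [Group.IsNilpotent G] {C : Subgroup G}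
    (h : C ⊔ commutator G = ⊤) : C = ⊤ := by
  by_contra hC
  obtain ⟨M, hM, hCM⟩ := (eq_top_or_exists_le_coatom C).resolve_left hC
  have hn : M.Normal :=
    Subgroup.NormalizerCondition.normal_of_coatom M Group.normalizerCondition_of_isNilpotent hM
  have h1 : (commutator G).map (QuotientGroup.mk' M) = ⊤ := by
    rw [← Subgroup.map_top_of_surjective _ (QuotientGroup.mk'_surjective M), ← h, Subgroup.map_sup,
      (Subgroup.map_eq_bot_iff C).2 (by rwa [QuotientGroup.ker_mk']), bot_sup_eq]
  rw [commutator_def, Subgroup.map_commutator,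
    Subgroup.map_top_of_surjective _ (QuotientGroup.mk'_surjective M)] at h1
  have h2 : (⊤ : Subgroup (G ⧸ M)) = ⊥ := by
    by_contra h2
    exact (Group.IsSolvable.commutator_lt_of_ne_bot h2).ne h1
  refine hM.1 ?_
  rw [← QuotientGroup.ker_mk' M, ← MonoidHom.comap_bot, ← h2, Subgroup.comap_top]

theorem IsPGroup.le_of_le_sup_commutator {p : ℕ} (hp : p.Prime) {P C : Subgroup G}
    (hP : IsPGroup p P) (h : ∀ v ∈ P, ∃ s ∈ ⁅P, P⁆, v * s ∈ C) : P ≤ C := by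
  have := Fact.mk hp
  have := hP.isNilpotent
  have h1 : C.subgroupOf P ⊔ commutator P = ⊤ := by
    rw [eq_top_iff]
    rintro ⟨v, hv⟩ -
    obtain ⟨s, hs, hvs⟩ := h v hv
    rw [← Subgroup.map_subtype_commutator] at hs
    obtain ⟨t, ht, rfl⟩ := hs
    have h2 : (⟨v, hv⟩ : P) * t ∈ C.subgroupOf P := hvs
    have h3 := mul_mem (Subgroup.mem_sup_left h2) (Subgroup.mem_sup_right (inv_mem ht))
    rwa [mul_inv_cancel_right] at h3
  exact Subgroup.subgroupOf_eq_top.1 (eq_top_of_sup_commutator_eq_top h1)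

theorem commutatorElement_mem_iff {U : Subgroup G} [U.Normal] {x y : G} :
    ⁅x, y⁆ ∈ U ↔ Commute (QuotientGroup.mk' U x) (QuotientGroup.mk' U y) := by
  rw [← commutatorElement_eq_one_iff_commute, ← map_commutatorElement, ← MonoidHom.mem_ker,
    QuotientGroup.ker_mk']

variable {N U : Subgroup G} [N.Normal] [U.Normal]

theorem HasLocalStructureIn.eq_one_of_commutator_not_mem [Group.IsSolvable G]
    (hN : HasLocalStructureIn N) (hU : U = ⁅⁅N, N⁆, ⁅N, N⁆⁆) (hS : SmallerNormalizes (G ⧸ U))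
    {r s : ℕ} (hr : r.Prime) (hs : s.Prime) (hsr : s < r) {x y : G} (hx : IsPElement r x)
    (hy : IsPElement s y) (hxy : ⁅y, x⁆ ∉ U) {u : G} (hu : u ∈ U) (hur : IsPElement r u) :
    u = 1 := by
  have hVN : ⁅N, N⁆ ≤ N := Subgroup.commutator_le_left N N
  rcases hN r hr with h1 | h1
  · rw [hU] at hu
    have h2 := hN.coprimeCommute.mem_commutator_pClosure hr hu hur
    have h3 : ⁅pClosure r ⁅N, N⁆, pClosure r ⁅N, N⁆⁆ = ⊥ := by
      rw [eq_bot_iff, Subgroup.commutator_le]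
      intro a ha b hb
      rw [Subgroup.mem_bot, commutatorElement_eq_one_iff_commute]
      exact h1 a (hVN (pClosure_le _ _ ha))
        (IsPElement.of_mem (hN.coprimeCommute.isPGroup_pClosure hr) ha) b (pClosure_le _ _ hb)
    rwa [h3, Subgroup.mem_bot] at h2
  · let π := QuotientGroup.mk' U
    obtain ⟨R₀, hR₀, -⟩ :=
      (IsPGroup.of_bot (p := r) (G := G)).exists_isSylowIn hr (bot_le (a := N))
    obtain ⟨R, hR, hRR⟩ := hR₀.isPGroup.exists_isSylowIn hr (le_top (a := R₀))
    obtain ⟨g, hg⟩ := hR.exists_conj_mem hr hx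
    have hRU : ⁅R, R⁆ ≤ U := by
      rcases commute_or_commute_of_isPGroup hr hs hsr.ne' (hR.isPGroup.map π)
        ((hy.conj g).map π) (fun z hz => hS r s hr hs hsr z _
          (IsPElement.of_mem (hR.isPGroup.map π) hz) ((hy.conj g).map π)) with h2 | h2
      · rw [Subgroup.commutator_le]
        intro a ha b hb
        exact commutatorElement_mem_iff.2
          (h2 _ (Subgroup.mem_map_of_mem π ha) _ (Subgroup.mem_map_of_mem π hb))
      · refine absurd ?_ hxy
        have h3 := commutatorElement_mem_iff.2 (h2 _ (Subgroup.mem_map_of_mem π hg))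
        have h4 := (inferInstance : U.Normal).conj_mem _ h3 g⁻¹
        convert h4 using 1
        simp only [commutatorElement_def]
        group
    let K := primeToClosure r N
    let κ := QuotientGroup.mk' K
    have hNR : N.map κ ≤ R.map κ := by
      have h2 : N ≤ R ⊔ K := Subgroup.le_of_forall_isSylowIn fun q hq => by
        by_cases hqr : q = r
        · subst hqr
          exact ⟨R₀, hR₀, hRR.trans le_sup_left⟩
        · obtain ⟨Q, hQ, -⟩ :=
            (IsPGroup.of_bot (p := q) (G := G)).exists_isSylowIn hq (bot_le (a := N))
          exact ⟨Q, hQ, fun z hz => Subgroup.mem_sup_right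
            (mem_primeToClosure (hQ.le hz) hq hqr (.of_mem hQ.isPGroup hz))⟩
      refine (Subgroup.map_mono h2).trans ?_
      rw [Subgroup.map_sup, (Subgroup.map_eq_bot_iff K).2 (by rw [QuotientGroup.ker_mk']),
        sup_bot_eq]
    have hV : ⁅N, N⁆.map κ ≤ ⁅⁅N, N⁆.map κ, ⁅N, N⁆.map κ⁆ :=
      calc ⁅N, N⁆.map κ = ⁅N.map κ, N.map κ⁆ := Subgroup.map_commutator _ _ _
        _ ≤ ⁅R.map κ, R.map κ⁆ := Subgroup.commutator_mono hNR hNR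
        _ = ⁅R, R⁆.map κ := (Subgroup.map_commutator _ _ _).symm
        _ ≤ U.map κ := Subgroup.map_mono hRU
        _ = _ := by rw [hU, Subgroup.map_commutator]
    have hbot : ⁅N, N⁆.map κ = ⊥ := by
      by_contra h2
      exact (Group.IsSolvable.commutator_lt_of_ne_bot h2).not_ge hV
    rw [Subgroup.map_eq_bot_iff, QuotientGroup.ker_mk'] at hbot
    refine h1 u (hbot ?_) hur
    rw [hU] at hu
    exact Subgroup.commutator_le_left _ _ hu

theorem HasLocalStructureIn.commute [Group.IsSolvable G] (hN : HasLocalStructureIn N)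
    (hU : U = ⁅⁅N, N⁆, ⁅N, N⁆⁆) (hS : SmallerNormalizes (G ⧸ U)) {p r : ℕ} (hp : p.Prime)
    (hr : r.Prime) (hrp : r ≠ p) {x u : G} (hx : IsPElement p x) (hu : u ∈ U)
    (hur : IsPElement r u) : Commute x u := by
  have := Fact.mk hr
  by_cases hu1 : u = 1
  · rw [hu1]
    exact Commute.one_right x
  let π := QuotientGroup.mk' U
  let W := pClosure r ⁅N, N⁆
  have hW : IsPGroup r W := hN.coprimeCommute.isPGroup_pClosure hr
  have hWn : W.Normal := inferInstance
  have hWS : ⁅W, W⁆ ≤ W := Subgroup.commutator_le_left W W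
  have hcU : ∀ v ∈ W, v⁻¹ * (x * v * x⁻¹) ∈ U := by
    intro v hv
    have hvr : IsPElement r v := .of_mem hW hv
    rcases lt_or_gt_of_ne hrp with hlt | hlt
    · have h1 := hS p r hp hr hlt (π x) (π v⁻¹) (hx.map π) (hvr.inv.map π)
      have h2 : IsPElement p (π (v⁻¹ * (x * v * x⁻¹))) := by
        refine (hx.map π).mem_of_mem_zpowers ?_
        have h3 := mul_mem h1 (inv_mem (Subgroup.mem_zpowers (π x)))
        rw [← map_inv, ← map_inv, inv_inv, ← map_mul, ← map_mul, ← map_mul] at h3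
        convert h3 using 2
        group
      have h4 : IsPElement r (π (v⁻¹ * (x * v * x⁻¹))) :=
        (IsPElement.of_mem hW (mul_mem (inv_mem hv) (hWn.conj_mem v hv x))).map π
      have h5 := h4.eq_one hr hp hrp h2
      rwa [← MonoidHom.mem_ker, QuotientGroup.ker_mk'] at h5
    · have h1 : ⁅x, v⁆ ∈ U := by
        by_contra h1
        exact hu1 (hN.eq_one_of_commutator_not_mem hU hS hr hp hlt hvr hx h1 hu hur)
      have h2 := (inferInstance : U.Normal).conj_mem _ h1 v⁻¹
      convert h2 using 1
      rw [commutatorElement_def]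
      group
  have hle : W ≤ Subgroup.centralizer {x} := by
    refine hW.le_of_le_sup_commutator hr fun v hv => ?_
    have hd : ¬ p ∣ Nat.card (⁅W, W⁆ : Subgroup G) := by
      obtain ⟨n, hn⟩ := IsPGroup.iff_card.1 (hW.to_le hWS)
      rw [hn]
      intro hd
      exact hrp ((Nat.prime_dvd_prime_iff_eq hp hr).1 (hp.dvd_of_dvd_pow hd)).symm
    have hv' : v⁻¹ * (x * v * x⁻¹) ∈ ⁅W, W⁆ := by
      have h1 := hcU v hv
      rw [hU] at h1
      exact hN.coprimeCommute.mem_commutator_pClosure hr h1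
        (.of_mem hW (mul_mem (inv_mem hv) (hWn.conj_mem v hv x)))
    obtain ⟨s, hs, hsx⟩ := hx.exists_commute_mul hp hd
      (fun s hs => (inferInstance : (⁅W, W⁆ : Subgroup G).Normal).conj_mem s hs x) hv'
    exact ⟨s, hs, Subgroup.mem_centralizer_singleton_iff.2 hsx.eq.symm⟩
  rw [hU] at hu
  have h1 := hle (hWS (hN.coprimeCommute.mem_commutator_pClosure hr hu hur))
  exact (Subgroup.mem_centralizer_singleton_iff.1 h1).symm

theorem HasLocalStructureIn.isPGroup_pClosure [Group.IsSolvable G] (hN : HasLocalStructureIn N)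
    (hU : U = ⁅⁅N, N⁆, ⁅N, N⁆⁆) (hS : SmallerNormalizes (G ⧸ U)) {p : ℕ} (hp : p.Prime)
    {T : Subgroup G} (hT : ∀ t ∈ T, IsPElement p (QuotientGroup.mk' U t)) :
    IsPGroup p (pClosure p T) := by
  refine _root_.isPGroup_pClosure hp fun q hq hqp y hy hyq x _ hxp => ?_
  have h1 := (hyq.map (QuotientGroup.mk' U)).eq_one hq hp hqp (hT y (pClosure_le p T hy))
  rw [← MonoidHom.mem_ker, QuotientGroup.ker_mk'] at h1
  exact (hN.commute hU hS hp hq hqp hxp h1 hyq).symm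

theorem HasLocalStructureIn.smallerNormalizes [Group.IsSolvable G] (hN : HasLocalStructureIn N)
    (hU : U = ⁅⁅N, N⁆, ⁅N, N⁆⁆) (hS : SmallerNormalizes (G ⧸ U)) : SmallerNormalizes G := by
  intro p q hp hq hqp x y hx hy
  let π := QuotientGroup.mk' U
  have hmem : ∀ g : G, g ∈ (Subgroup.zpowers (π g)).comap π := fun g => Subgroup.mem_zpowers (π g)
  have hcl : ∀ {t : ℕ} {g : G}, t.Prime → IsPElement t g →
      IsPGroup t (pClosure t ((Subgroup.zpowers (π g)).comap π)) := fun ht hg =>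
    hN.isPGroup_pClosure hU hS ht fun _ hz => (hg.map π).mem_of_mem_zpowers hz
  have hyx : π (y * x * y⁻¹) ∈ Subgroup.zpowers (π x) := by
    have := hS p q hp hq hqp (π x) (π y) (hx.map π) (hy.map π)
    rwa [← map_inv, ← map_mul, ← map_mul] at this
  have hxJ := mem_pClosure (hmem x) hx
  have hyxJ := mem_pClosure (T := (Subgroup.zpowers (π x)).comap π) hyx (hx.conj y)
  by_cases hc : ⁅y, x⁆ ∈ U
  · have hcp : IsPElement p ⁅y, x⁆ := .of_mem (hcl hp hx) (mul_mem hyxJ (inv_mem hxJ))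
    have hcq : IsPElement q ⁅y, x⁆ := by
      have hyJ := mem_pClosure (hmem y) hy
      have h1 : x * y⁻¹ * x⁻¹ ∈ (Subgroup.zpowers (π y)).comap π := by
        have h2 : π ⁅y, x⁆ = 1 := by rwa [← MonoidHom.mem_ker, QuotientGroup.ker_mk']
        have h3 : x * y⁻¹ * x⁻¹ = y⁻¹ * ⁅y, x⁆ := by
          rw [commutatorElement_def]
          group
        rw [Subgroup.mem_comap, h3, map_mul, h2, mul_one, map_inv]
        exact inv_mem (Subgroup.mem_zpowers _)
      have h4 := mul_mem hyJ (mem_pClosure h1 (hy.inv.conj x))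
      have h5 : y * (x * y⁻¹ * x⁻¹) = ⁅y, x⁆ := by
        rw [commutatorElement_def]
        group
      rw [h5] at h4
      exact .of_mem (hcl hq hy) h4
    have h1 := commutatorElement_eq_one_iff_commute.1 (hcp.eq_one hp hq hqp.ne' hcq)
    rw [h1.eq, mul_inv_cancel_right]
    exact Subgroup.mem_zpowers x
  · obtain ⟨k, hk⟩ := hyx
    simp only at hk
    have hu : (x ^ k)⁻¹ * (y * x * y⁻¹) ∈ U := by
      rw [← QuotientGroup.ker_mk' U, MonoidHom.mem_ker]
      change π _ = 1
      rw [map_mul, ← hk, map_inv, map_zpow, inv_mul_cancel]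
    have hup := IsPElement.of_mem (hcl hp hx) (mul_mem (inv_mem (zpow_mem hxJ k)) hyxJ)
    have h1 := hN.eq_one_of_commutator_not_mem hU hS hp hq hqp hx hy hc hu hup
    exact ⟨k, inv_mul_eq_one.1 h1⟩

theorem Permutes.isPGroup_sup {p : ℕ} (hp : p.Prime) {A B : Subgroup G} (h : Permutes A B)
    (hA : IsPGroup p A) (hB : IsPGroup p B) : IsPGroup p (A ⊔ B : Subgroup G) := by
  have := Fact.mk hp
  have hmul : ∀ k : (A ⊔ B : Subgroup G), ∃ a ∈ A.subgroupOf (A ⊔ B), ∃ b ∈ B.subgroupOf (A ⊔ B),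
      k = a * b := by
    rintro ⟨k, hk⟩
    let X : Subgroup G :=
      { carrier := {k | ∃ a ∈ A, ∃ b ∈ B, k = a * b}
        one_mem' := ⟨1, one_mem A, 1, one_mem B, (mul_one 1).symm⟩
        mul_mem' := by
          rintro _ _ ⟨a, ha, b, hb, rfl⟩ ⟨c, hc, d, hd, rfl⟩
          obtain ⟨c', hc', b', hb', e⟩ := h c hc b hb
          refine ⟨a * c', mul_mem ha hc', b' * d, mul_mem hb' hd, ?_⟩
          calc a * b * (c * d) = a * (b * c) * d := by group
            _ = a * c' * (b' * d) := by rw [e]; group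
        inv_mem' := by
          rintro _ ⟨a, ha, b, hb, rfl⟩
          rw [mul_inv_rev]
          exact h _ (inv_mem ha) _ (inv_mem hb) }
    have hle : A ⊔ B ≤ X := sup_le (fun a ha => ⟨a, ha, 1, one_mem B, (mul_one a).symm⟩)
      fun b hb => ⟨1, one_mem A, b, hb, (one_mul b).symm⟩
    obtain ⟨a, ha, b, hb, rfl⟩ := hle hk
    exact ⟨⟨a, Subgroup.mem_sup_left ha⟩, ha, ⟨b, Subgroup.mem_sup_right hb⟩, hb, rfl⟩
  obtain ⟨n, hn⟩ := (hA.comap_subtype (K := A ⊔ B)).index_eq_pow_of_mul hp hmul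
  obtain ⟨m, hm⟩ := IsPGroup.iff_card.1 (hB.comap_subtype (K := A ⊔ B))
  refine IsPGroup.of_card (n := m + n) ?_
  rw [← Subgroup.card_mul_index (B.subgroupOf (A ⊔ B)), pow_add]
  exact congrArg₂ _ hm hn

theorem HasLocalStructureIn.ssPermIn [Group.IsSolvable G] (hN : HasLocalStructureIn N)
    (hU : U = ⁅⁅N, N⁆, ⁅N, N⁆⁆) (hS : SmallerNormalizes (G ⧸ U)) {p : ℕ} (hp : p.Prime)
    {A : Subgroup G} (hA : IsPGroup p A) (h : SSPermIn (A.map (QuotientGroup.mk' U)) ⊤) :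
    SSPermIn A ⊤ := by
  let π := QuotientGroup.mk' U
  have hπ : Function.Surjective π := QuotientGroup.mk'_surjective U
  have hker : ∀ {g : G}, π g = 1 → g ∈ U := fun hg => by
    rwa [← MonoidHom.mem_ker, QuotientGroup.ker_mk'] at hg
  obtain ⟨L, -, hmul, hL⟩ := h
  refine ⟨L.comap π, le_top, fun k _ => ?_, fun q hq R hR => ?_⟩
  · obtain ⟨_, ⟨a, ha, rfl⟩, l, hl, e⟩ := hmul (π k) trivial
    refine ⟨a, ha, a⁻¹ * k, ?_, (mul_inv_cancel_left a k).symm⟩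
    rw [Subgroup.mem_comap, map_mul, e, map_inv, inv_mul_cancel_left]
    exact hl
  by_cases hqp : q = p
  swap
  · exact (hN.smallerNormalizes hU hS).permutes hp hq hqp hA hR.isPGroup
  subst hqp
  have hRL := hR.map π
  rw [Subgroup.map_comap_eq_self_of_surjective hπ] at hRL
  have hperm := hL q hq _ hRL
  have hX := hperm.isPGroup_sup hq (hA.map π) hRL.isPGroup
  have hT := hN.isPGroup_pClosure hU hS hq (T := (A.map π ⊔ R.map π).comap π)
    fun t ht => .of_mem hX ht
  have hUp : IsPGroup q (pClosure q U) := hN.isPGroup_pClosure hU hS hq fun t ht => by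
    rw [← QuotientGroup.ker_mk' U, MonoidHom.mem_ker] at ht
    rw [ht]
    exact .one q
  have hUR : pClosure q U ≤ R := hR.le_of_normal hq hUp fun u hu => by
    have h1 := pClosure_le q U hu
    rw [← QuotientGroup.ker_mk' U, MonoidHom.mem_ker] at h1
    change π u ∈ L
    rw [h1]
    exact one_mem L
  have hAT : ∀ a ∈ A, a ∈ pClosure q ((A.map π ⊔ R.map π).comap π) := fun a ha =>
    mem_pClosure (Subgroup.mem_sup_left (Subgroup.mem_map_of_mem π ha)) (.of_mem hA ha)
  have hRT : ∀ b ∈ R, b ∈ pClosure q ((A.map π ⊔ R.map π).comap π) := fun b hb =>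
    mem_pClosure (Subgroup.mem_sup_right (Subgroup.mem_map_of_mem π hb)) (.of_mem hR.isPGroup hb)
  intro a ha b hb
  obtain ⟨_, ⟨a', ha', rfl⟩, _, ⟨b', hb', rfl⟩, e⟩ :=
    hperm _ (Subgroup.mem_map_of_mem π ha) _ (Subgroup.mem_map_of_mem π hb)
  have hu : (a' * b')⁻¹ * (b * a) ∈ U := hker (by
    rw [map_mul, map_inv, map_mul, map_mul]
    exact inv_mul_eq_one.2 e.symm)
  have hup : IsPElement q ((a' * b')⁻¹ * (b * a)) := .of_mem hT
    (mul_mem (inv_mem (mul_mem (hAT a' ha') (hRT b' hb'))) (mul_mem (hRT b hb) (hAT a ha)))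
  refine ⟨a', ha', b' * ((a' * b')⁻¹ * (b * a)), mul_mem hb' (hUR (mem_pClosure hu hup)), ?_⟩
  rw [← mul_assoc, mul_inv_cancel_left]

end Lifting

section Final

variable {G : Type*} [Group G]

theorem isPSTGroup_of_subsingleton (G : Type*) [Group G] [Subsingleton G] : IsPSTGroup G := by
  intro H K _ _ hK
  have : H = K := SetLike.ext fun x => by
    rw [Subsingleton.elim x 1]
    exact iff_of_true (one_mem H) (one_mem K)
  rwa [this]

theorem map_subtype_derivedSeries_two (N : Subgroup G) :
    (derivedSeries N 2).map N.subtype = ⁅⁅N, N⁆, ⁅N, N⁆⁆ := by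
  rw [derivedSeries_succ, derivedSeries_one, Subgroup.map_commutator,
    Subgroup.map_subtype_commutator]

theorem isSolvable_of_quotient_derivedSeries (N : Subgroup G) [Group.IsSolvable N]
    [((derivedSeries N 2).map N.subtype).Normal]
    [Group.IsSolvable (G ⧸ (derivedSeries N 2).map N.subtype)] : Group.IsSolvable G := by
  refine Group.isSolvable_of_ker_le_range N.subtype
    (QuotientGroup.mk' ((derivedSeries N 2).map N.subtype)) ?_
  rw [QuotientGroup.ker_mk', N.range_subtype]
  exact Subgroup.map_subtype_le _

end Final

/-- Theorem I. -/
theorem theoremI {G : Type*} [Group G] [Finite G] :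
    ((IsSolvable G ∧ IsSSTGroup G) ↔
      ∃ (N : Subgroup G) (_ : N.Normal)
        (hM : ((derivedSeries N 2).map N.subtype).Normal),
        (IsSolvable N ∧ IsPSTGroup N) ∧
          (letI := hM
           IsSolvable (G ⧸ (derivedSeries N 2).map N.subtype) ∧
             IsSSTGroup (G ⧸ (derivedSeries N 2).map N.subtype))) ∧
    ((IsSolvable G ∧ IsBTGroup G) ↔
      ∃ (N : Subgroup G) (_ : N.Normal)
        (hM : ((derivedSeries N 2).map N.subtype).Normal),
        (IsSolvable N ∧ IsPSTGroup N) ∧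
          (letI := hM
           IsSolvable (G ⧸ (derivedSeries N 2).map N.subtype) ∧
             IsBTGroup (G ⧸ (derivedSeries N 2).map N.subtype))) := by
  constructor
  · constructor
    · rintro ⟨hs, h⟩
      have : Group.IsSolvable G := hs
      refine ⟨⊥, inferInstance, inferInstance,
        ⟨(inferInstance : Group.IsSolvable _), isPSTGroup_of_subsingleton _⟩,
        (inferInstance : Group.IsSolvable _), ?_⟩
      exact h.of_surjective (QuotientGroup.mk'_surjective _)
    · rintro ⟨N, hN, hM, ⟨hNs, hNp⟩, hs, h⟩
      have : Group.IsSolvable N := hNs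
      have : Group.IsSolvable (G ⧸ (derivedSeries N 2).map N.subtype) := hs
      have hG := isSolvable_of_quotient_derivedSeries N
      have hU := map_subtype_derivedSeries_two N
      have hL := hNp.hasLocalStructure.hasLocalStructureIn
      have hS := h.smallerNormalizes
      exact ⟨hG, (hL.smallerNormalizes hU hS).isSSTGroup fun p hp A hA =>
        hL.ssPermIn hU hS hp hA (h.ssPermIn_of_isPGroup h.hasLocalStructure hp (hA.map _))⟩
  · constructor
    · rintro ⟨hs, h⟩
      have : Group.IsSolvable G := hs
      refine ⟨⊥, inferInstance, inferInstance,
        ⟨(inferInstance : Group.IsSolvable _), isPSTGroup_of_subsingleton _⟩,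
        (inferInstance : Group.IsSolvable _), ?_⟩
      refine h.of_surjective (QuotientGroup.mk'_surjective _) ?_
      rw [QuotientGroup.ker_mk', Subsingleton.elim (derivedSeries _ 2) ⊥, Subgroup.map_bot,
        Subgroup.card_bot]
      exact Nat.coprime_one_left _
    · rintro ⟨N, hN, hM, ⟨hNs, hNp⟩, hs, h⟩
      have : Group.IsSolvable N := hNs
      have : Group.IsSolvable (G ⧸ (derivedSeries N 2).map N.subtype) := hs
      have hG := isSolvable_of_quotient_derivedSeries N
      have hL := hNp.hasLocalStructure.hasLocalStructureIn
      exact ⟨hG, (hL.smallerNormalizes (map_subtype_derivedSeries_two N)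
        h.smallerNormalizes).isBTGroup⟩
end

section
/- If a subgroup H of a finite group G is SS-permutable in G, then H is S-semipermutable in G, i.e., H permutes with every Sylow q-subgroup of G for every prime q not dividing |H|. -/
open scoped Pointwise

/-- The index of a supplement of `H` divides the order of `H`. -/
theorem Subgroup.index_dvd_card_of_mul_eq_univ {G : Type*} [Group G] {H K : Subgroup G}
    (h : (H : Set G) * (K : Set G) = Set.univ) : K.index ∣ Nat.card H := by
  have : MulAction.IsPretransitive H (G ⧸ K) := by
    refine (MulAction.isPretransitive_iff_base (G := H) ((1 : G) : G ⧸ K)).2 fun x => ?_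
    induction x using QuotientGroup.induction_on with | H g => ?_
    obtain ⟨a, ha, k, hk, rfl⟩ := Set.mem_mul.1 (h ▸ Set.mem_univ g)
    refine ⟨⟨a, ha⟩, ?_⟩
    change ((a * 1 : G) : G ⧸ K) = _
    rw [mul_one, QuotientGroup.mk_mul_of_mem _ hk]
  rw [Subgroup.index, ← MulAction.index_stabilizer_of_transitive H ((1 : G) : G ⧸ K)]
  exact Subgroup.index_dvd_card _

/-- A subgroup permuting with `P` permutes with the conjugates of `P` by its own elements. -/
theorem Subgroup.mul_conj_smul_comm {G : Type*} [Group G] {H P : Subgroup G}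
    (hP : (H : Set G) * (P : Set G) = (P : Set G) * (H : Set G)) {a : G} (ha : a ∈ H) :
    (H : Set G) * ((MulAut.conj a • P : Subgroup G) : Set G) =
      ((MulAut.conj a • P : Subgroup G) : Set G) * (H : Set G) := by
  have hconj : ((MulAut.conj a • P : Subgroup G) : Set G) = {a} * (P : Set G) * {a⁻¹} := by
    ext x
    simp only [Subgroup.coe_pointwise_smul, Set.mem_smul_set, Set.singleton_mul,
      Set.mul_singleton, Set.image_image, Set.mem_image, MulAut.smul_def, MulAut.conj_apply]
  rw [hconj, mul_assoc _ _ (H : Set G), Subgroup.singleton_mul_subgroup (H.inv_mem ha),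
    mul_assoc _ _ (H : Set G),
    ← hP, ← mul_assoc, ← mul_assoc, ← mul_assoc, Subgroup.subgroup_mul_singleton ha,
    Subgroup.singleton_mul_subgroup ha, hP, mul_assoc,
    Subgroup.subgroup_mul_singleton (H.inv_mem ha)]

/-- A Sylow `p`-subgroup of a subgroup of index prime to `p` is one of the whole group. -/
theorem Sylow.exists_coe_eq_map_subtype {G : Type*} [Group G] [Finite G] {p : ℕ} [Fact p.Prime]
    {K : Subgroup G} (hK : ¬ p ∣ K.index) (P : Sylow p K) :
    ∃ Q : Sylow p G, (Q : Subgroup G) = P.toSubgroup.map K.subtype := by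
  refine ⟨(P.isPGroup'.map K.subtype).toSylow ?_, rfl⟩
  rw [Subgroup.index_map_subtype]
  exact Nat.Prime.not_dvd_mul Fact.out P.not_dvd_index hK

/-- Lemma 2.1(4): every SS-permutable subgroup is S-semipermutable. -/
theorem isSSemipermutable_of_isSSPermutable {G : Type*} [Group G] [Finite G]
    (H : Subgroup G) (h : IsSSPermutable H) : IsSSemipermutable H := by
  obtain ⟨K, hHK, hperm⟩ := h
  intro q _ hq Q
  obtain ⟨P⟩ : Nonempty (Sylow q K) := inferInstance
  obtain ⟨R, hR⟩ := Sylow.exists_coe_eq_map_subtype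
    (fun hd => hq (hd.trans (Subgroup.index_dvd_card_of_mul_eq_univ hHK))) P
  obtain ⟨g, rfl⟩ := MulAction.exists_smul_eq G R Q
  obtain ⟨a, ha, k, hk, rfl⟩ := Set.mem_mul.1 (hHK ▸ Set.mem_univ g)
  have hconj : MulAut.conj k • (R : Subgroup G) =
      ((⟨k, hk⟩ : K) • P).toSubgroup.map K.subtype := by
    rw [hR, Sylow.coe_subgroup_smul]
    exact (Subgroup.map_map P.toSubgroup (MulAut.conj k).toMonoidHom K.subtype).trans
      (Subgroup.map_map P.toSubgroup K.subtype (MulAut.conj (⟨k, hk⟩ : K)).toMonoidHom).symm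
  rw [Sylow.coe_subgroup_smul, map_mul, mul_smul, hconj]
  exact Subgroup.mul_conj_smul_comm (hperm q _) ha
end

section
/- Let H be a p-subgroup of a finite group G, for a prime p dividing |G|, and suppose H is SS-permutable in G with SS-permutable supplement K. Then HK_p is a Sylow p-subgroup of G for every Sylow p-subgroup K_p of K. -/
open scoped Pointwise

namespace Subgroup

variable {G : Type*} [Group G]

theorem relIndex_eq_relIndex_of_le_mul {A L M : Subgroup G} (hAM : A ≤ M)
    (h : (M : Set G) ⊆ (A : Set G) * (L : Set G)) : L.relIndex A = L.relIndex M := by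
  refine Nat.card_congr (Equiv.ofBijective (quotientSubgroupOfEmbeddingOfLE L hAM)
    ⟨(quotientSubgroupOfEmbeddingOfLE L hAM).injective, fun x => ?_⟩)
  induction x using QuotientGroup.induction_on with
  | H m =>
    obtain ⟨a, ha, l, hl, hal⟩ := h m.2
    refine ⟨QuotientGroup.mk ⟨a, ha⟩, ?_⟩
    rw [quotientSubgroupOfEmbeddingOfLE_apply_mk, QuotientGroup.eq, mem_subgroupOf]
    simpa [← hal] using hl

theorem coe_sup_of_mul_comm {H K : Subgroup G}
    (h : (H : Set G) * (K : Set G) = (K : Set G) * (H : Set G)) :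
    ((H ⊔ K : Subgroup G) : Set G) = (H : Set G) * (K : Set G) := by
  let L : Subgroup G :=
    { carrier := (H : Set G) * (K : Set G)
      one_mem' := ⟨1, H.one_mem, 1, K.one_mem, one_mul 1⟩
      mul_mem' := fun {a b} ha hb => by
        have : a * b ∈ ((H : Set G) * K) * ((H : Set G) * K) := Set.mul_mem_mul ha hb
        rwa [mul_assoc, ← mul_assoc (K : Set G), ← h, mul_assoc, coe_mul_coe, ← mul_assoc,
          coe_mul_coe] at this
      inv_mem' := fun {a} ha => by
        have : a⁻¹ ∈ ((H : Set G) * K)⁻¹ := Set.inv_mem_inv.2 ha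
        rwa [mul_inv_rev, inv_coe_set, inv_coe_set, ← h] at this }
  refine subset_antisymm ?_ ?_
  · exact (sup_le (fun x hx => ⟨x, hx, 1, K.one_mem, mul_one x⟩)
      (fun x hx => ⟨1, H.one_mem, x, hx, one_mul x⟩) : H ⊔ K ≤ L)
  · rintro _ ⟨a, ha, b, hb, rfl⟩
    exact mul_mem_sup ha hb

end Subgroup

theorem IsPGroup.sup_of_mul_comm {G : Type*} [Group G] [Finite G] {p : ℕ} [Fact p.Prime]
    {H K : Subgroup G} (hH : IsPGroup p H) (hK : IsPGroup p K)
    (h : (H : Set G) * (K : Set G) = (K : Set G) * (H : Set G)) :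
    IsPGroup p (H ⊔ K : Subgroup G) := by
  obtain ⟨m, hm⟩ := IsPGroup.iff_card.1 hH
  obtain ⟨n, hn⟩ := IsPGroup.iff_card.1 hK
  have hindex : K.relIndex H = K.relIndex (H ⊔ K) :=
    Subgroup.relIndex_eq_relIndex_of_le_mul le_sup_left
      (Subgroup.coe_sup_of_mul_comm h).subset
  have hdvd : K.relIndex H ∣ p ^ m := hm ▸ Subgroup.relIndex_dvd_card K H
  obtain ⟨k, -, hk⟩ := (Nat.dvd_prime_pow Fact.out).1 hdvd
  refine IsPGroup.of_card (n := n + k) ?_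
  rw [← Subgroup.relIndex_bot_left,
    ← Subgroup.relIndex_mul_relIndex ⊥ K (H ⊔ K) bot_le le_sup_right, Subgroup.relIndex_bot_left,
    hn, ← hindex, hk, pow_add]

/-- Lemma 2.1(8): if `H` is an SS-permutable `p`-subgroup with SS-permutable supplement
`K`, then `H·K_p` is a Sylow `p`-subgroup of `G` for every Sylow `p`-subgroup `K_p` of `K`. -/
theorem mul_sylow_of_supplement_is_sylow {G : Type*} [Group G] [Finite G]
    (p : ℕ) (hp : p.Prime) (hdvd : p ∣ Nat.card G)
    (H : Subgroup G) (hH : IsPGroup p H) (K : Subgroup G) (hK : IsSSSupplement H K)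
    (Kp : Sylow p K) :
    ∃ Q : Sylow p G,
      (H : Set G) * ((Kp.toSubgroup.map K.subtype : Subgroup G) : Set G) =
        ((Q : Subgroup G) : Set G) := by
  have : Fact p.Prime := ⟨hp⟩
  set P : Subgroup G := Kp.toSubgroup.map K.subtype with hP
  have hcomm := hK.2 p Kp
  have hPK : ¬ p ∣ P.relIndex K := by
    rw [Subgroup.relIndex, hP, Subgroup.subgroupOf,
      Subgroup.comap_map_eq_self_of_injective K.subtype_injective]
    exact Kp.not_dvd_index
  have hKH : (Set.univ : Set G) ⊆ (K : Set G) * ((H ⊔ P : Subgroup G) : Set G) := by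
    have hinv := congrArg (·⁻¹) hK.1
    simp only [mul_inv_rev, inv_coe_set, Set.inv_univ] at hinv
    rw [← hinv]
    exact Set.mul_subset_mul_left (SetLike.coe_subset_coe.2 le_sup_left)
  have hindex : (H ⊔ P).relIndex K = (H ⊔ P).index := by
    rw [Subgroup.relIndex_eq_relIndex_of_le_mul le_top hKH, Subgroup.relIndex_top_right]
  have hsup : IsPGroup p (H ⊔ P : Subgroup G) :=
    hH.sup_of_mul_comm (Kp.isPGroup'.map K.subtype) hcomm
  refine ⟨hsup.toSylow fun hdiv => hPK ?_, (Subgroup.coe_sup_of_mul_comm hcomm).symm⟩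
  rw [← hindex] at hdiv
  exact hdiv.trans (Subgroup.relIndex_dvd_of_le_left K le_sup_right)
end

section
/- A finite solvable group G is a BT-group if and only if every cyclic subgroup of G of prime power order is S-semipermutable in G. -/
open scoped Pointwise

section Semipermutability

variable {G : Type*} [Group G]

/-- One inclusion between the products of two subgroups already makes them permute. -/
theorem Subgroup.mul_comm_of_forall_mem {H X : Subgroup G}
    (h : ∀ x ∈ X, ∀ a ∈ H, x * a ∈ (H : Set G) * (X : Set G)) :
    (H : Set G) * (X : Set G) = (X : Set G) * (H : Set G) := by
  apply Set.Subset.antisymm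
  · rintro _ ⟨a, ha, x, hx, rfl⟩
    obtain ⟨b, hb, y, hy, hby⟩ := h x⁻¹ (X.inv_mem hx) a⁻¹ (H.inv_mem ha)
    refine ⟨y⁻¹, X.inv_mem hy, b⁻¹, H.inv_mem hb, ?_⟩
    have := congrArg (·⁻¹) hby
    simpa using this
  · rintro _ ⟨x, hx, a, ha, rfl⟩
    exact h x hx a ha

/-- A subgroup `X` permutes with `H` as soon as it permutes with every cyclic subgroup of
prime power order of `H`. -/
theorem Subgroup.mul_comm_of_forall_zpowers [Finite G] {H X : Subgroup G}
    (h : ∀ p k : ℕ, p.Prime → ∀ a ∈ H, a ^ p ^ k = 1 →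
      (zpowers a : Set G) * (X : Set G) = (X : Set G) * (zpowers a : Set G)) :
    (H : Set G) * (X : Set G) = (X : Set G) * (H : Set G) := by
  have key : ∀ n : ℕ, 0 < n → ∀ a ∈ H, a ^ n = 1 → ∀ x ∈ X,
      x * a ∈ (H : Set G) * (X : Set G) := by
    intro n
    induction n using Nat.recOnPosPrimePosCoprime with
    | zero => intro hn; exact absurd hn (lt_irrefl 0)
    | one =>
      intro _ a _ ha1 x hx
      rw [pow_one] at ha1
      exact ⟨1, H.one_mem, x, hx, by simp [ha1]⟩
    | prime_pow p k hp hk =>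
      intro _ a ha ha1 x hx
      have hmem : x * a ∈ (X : Set G) * (zpowers a : Set G) := ⟨x, hx, a, mem_zpowers a, rfl⟩
      rw [← h p k hp a ha ha1] at hmem
      exact Set.mul_subset_mul_right ((zpowers_le (H := H)).2 ha) hmem
    | coprime m n hm hn hmn ihm ihn =>
      intro _ a ha ha1 x hx
      have hsplit : a = (a ^ (m * m.gcdA n : ℤ)) * a ^ (n * m.gcdB n : ℤ) := by
        rw [← zpow_add, ← Nat.gcd_eq_gcd_ab, hmn.gcd_eq_one]
        simp
      have ha1' : a ^ (m * n : ℤ) = 1 := by exact_mod_cast ha1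
      obtain ⟨b, hb, y, hy, hby⟩ := ihn (by lia) (a ^ (m * m.gcdA n : ℤ)) (H.zpow_mem ha _)
        (by rw [← zpow_natCast, ← zpow_mul, show (m * m.gcdA n * n : ℤ) = m * n * m.gcdA n by ring,
              zpow_mul, ha1', one_zpow]) x hx
      obtain ⟨c, hc, z, hz, hcz⟩ := ihm (by lia) (a ^ (n * m.gcdB n : ℤ)) (H.zpow_mem ha _)
        (by rw [← zpow_natCast, ← zpow_mul, show (n * m.gcdB n * m : ℤ) = m * n * m.gcdB n by ring,
              zpow_mul, ha1', one_zpow]) y hy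
      refine ⟨b * c, H.mul_mem hb hc, z, hz, ?_⟩
      simp only at hby hcz ⊢
      rw [mul_assoc, hcz, ← mul_assoc, hby, mul_assoc, ← hsplit]
  exact mul_comm_of_forall_mem fun x hx a ha =>
    key (orderOf a) (orderOf_pos a) a ha (pow_orderOf_eq_one a) x hx

/-- Nontrivial elements of prime power order belonging to subgroups of coprime orders have
orders that are powers of distinct primes. -/
theorem Subgroup.ne_of_coprime_card {H X : Subgroup G}
    (hHX : Nat.Coprime (Nat.card H) (Nat.card X)) {p q k l : ℕ} (hp : p.Prime) (hq : q.Prime)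
    {a b : G} (ha : a ∈ H) (hb : b ∈ X) (hak : a ^ p ^ k = 1) (hbl : b ^ q ^ l = 1)
    (ha1 : a ≠ 1) (hb1 : b ≠ 1) : p ≠ q := by
  have dvd : ∀ {r m : ℕ} {c : G} {K : Subgroup G}, r.Prime → c ∈ K → c ^ r ^ m = 1 → c ≠ 1 →
      r ∣ Nat.card K := by
    intro r m c K hr hc hcm hc1
    obtain ⟨j, -, hj⟩ := (Nat.dvd_prime_pow hr).1 (orderOf_dvd_of_pow_eq_one hcm)
    have hj0 : j ≠ 0 := by
      rintro rfl
      exact hc1 (orderOf_eq_one_iff.1 (by simpa using hj))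
    exact ((dvd_pow_self r hj0).trans hj.symm.dvd).trans (K.orderOf_dvd_natCard hc)
  rintro rfl
  exact Nat.not_coprime_of_dvd_of_dvd hp.one_lt (dvd hp ha hak ha1) (dvd hp hb hbl hb1) hHX

/-- If cyclic subgroups of prime power orders for distinct primes permute, then every
subgroup is semipermutable. -/
theorem isSemipermutable_of_zpowers_mul_comm [Finite G]
    (h : ∀ p q k l : ℕ, p.Prime → q.Prime → p ≠ q → ∀ a b : G, a ^ p ^ k = 1 → b ^ q ^ l = 1 →
      (Subgroup.zpowers a : Set G) * (Subgroup.zpowers b : Set G) =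
        (Subgroup.zpowers b : Set G) * (Subgroup.zpowers a : Set G))
    (H : Subgroup G) : IsSemipermutable H := by
  intro X hHX
  refine Subgroup.mul_comm_of_forall_zpowers fun p k hp a ha hak => Eq.symm ?_
  refine Subgroup.mul_comm_of_forall_zpowers fun q l hq b hb hbl => Eq.symm ?_
  rcases eq_or_ne a 1 with rfl | ha1
  · simp
  rcases eq_or_ne b 1 with rfl | hb1
  · simp
  exact h p q k l hp hq (Subgroup.ne_of_coprime_card hHX hp hq ha hb hak hbl ha1 hb1) a b hak hbl

theorem Subgroup.Normal.isSemipermutable {N : Subgroup G} (hN : N.Normal) :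
    IsSemipermutable N := fun X _ => by
  rw [← Subgroup.normal_mul, ← Subgroup.mul_normal, sup_comm]

theorem IsSemipermutable.zpowers_mul_comm {a b : G} {p q k l : ℕ} (hp : p.Prime) (hq : q.Prime)
    (hpq : p ≠ q) (hak : a ^ p ^ k = 1) (hbl : b ^ q ^ l = 1)
    (ha : IsSemipermutable (Subgroup.zpowers a)) :
    (Subgroup.zpowers a : Set G) * (Subgroup.zpowers b : Set G) =
      (Subgroup.zpowers b : Set G) * (Subgroup.zpowers a : Set G) := by
  apply ha
  rw [Nat.card_zpowers, Nat.card_zpowers]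
  exact Nat.Coprime.of_dvd (orderOf_dvd_of_pow_eq_one hak) (orderOf_dvd_of_pow_eq_one hbl)
    (Nat.coprime_pow_primes k l hp hq hpq)

/-- A nontrivial finite solvable group has a proper normal subgroup containing all elements
of order prime to some prime `r`. -/
theorem Group.IsSolvable.exists_normal_ne_top_forall_coprime_mem [Finite G] [Nontrivial G]
    [Group.IsSolvable G] :
    ∃ r : ℕ, r.Prime ∧ ∃ N : Subgroup G, N.Normal ∧ N ≠ ⊤ ∧
      ∀ g : G, ∀ n : ℕ, n.Coprime r → g ^ n = 1 → g ∈ N := by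
  have hcomm : commutator G ≠ ⊤ := (Group.IsSolvable.commutator_lt_top_of_nontrivial G).ne
  have hnt : Nontrivial (Abelianization G) := QuotientGroup.nontrivial_iff.2 hcomm
  obtain ⟨r, hr, hrdvd⟩ := Nat.exists_prime_and_dvd
    (Finite.one_lt_card (α := Abelianization G)).ne'
  have : Fact r.Prime := ⟨hr⟩
  refine ⟨r, hr, (powMonoidHom r : Abelianization G →* Abelianization G).range.comap
    Abelianization.of, inferInstance, fun htop => ?_, fun g n hn hg => ?_⟩
  · have hsurj : Function.Surjective (powMonoidHom r : Abelianization G →* Abelianization G) := by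
      rw [← MonoidHom.range_eq_top, eq_top_iff]
      intro y _
      obtain ⟨g, rfl⟩ := QuotientGroup.mk_surjective y
      exact Subgroup.mem_comap.1 (htop.ge (Subgroup.mem_top g))
    have hinj := Finite.injective_iff_surjective.2 hsurj
    obtain ⟨x, hx⟩ := exists_prime_orderOf_dvd_card' r hrdvd
    have hx1 : x = 1 := hinj (by simp [← hx, pow_orderOf_eq_one])
    rw [hx1, orderOf_one] at hx
    exact hr.ne_one hx.symm
  · obtain ⟨m, hm⟩ := exists_pow_eq_self_of_coprime
      (Nat.Coprime.of_dvd_right (orderOf_dvd_of_pow_eq_one hg) hn.symm)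
    refine Subgroup.mem_comap.2 ⟨Abelianization.of (g ^ m), ?_⟩
    rw [powMonoidHom_apply, ← map_pow, ← pow_mul, mul_comm, pow_mul, hm]

/-- In a finite solvable BT-group every subgroup of a semipermutable subgroup is
semipermutable. -/
theorem IsBTGroup.isSemipermutable_of_le [Finite G] [Group.IsSolvable G] (hG : IsBTGroup G)
    {H K : Subgroup G} (hHK : H ≤ K) (hK : IsSemipermutable K) : IsSemipermutable H := by
  induction hn : Nat.card K using Nat.strong_induction_on generalizing H K with
  | _ n ih =>
  refine hG H K hHK (isSemipermutable_of_zpowers_mul_comm ?_ _) hK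
  rcases subsingleton_or_nontrivial K with hsub | hnt
  · intro p q k l _ _ _ a b _ _
    rw [Subsingleton.elim a b]
  obtain ⟨r, hr, N, hN, hNtop, hmem⟩ :=
    Group.IsSolvable.exists_normal_ne_top_forall_coprime_mem (G := K)
  have hNK : N.map K.subtype ≤ K := Subgroup.map_subtype_le N
  have hNsub : (N.map K.subtype).subgroupOf K = N :=
    Subgroup.comap_map_eq_self_of_injective K.subtype_injective N
  have hNsemi : IsSemipermutable (N.map K.subtype) :=
    hG _ K hNK (hNsub.symm ▸ hN.isSemipermutable) hK
  have hcard : Nat.card (N.map K.subtype) < n := by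
    rw [← hn, Subgroup.card_map_of_injective K.subtype_injective]
    exact lt_of_le_of_ne N.card_le_card_group fun h => hNtop (Subgroup.eq_top_of_card_eq N h)
  have comm_of_ne : ∀ p q k l : ℕ, p.Prime → q.Prime → p ≠ q → p ≠ r → ∀ a b : K,
      a ^ p ^ k = 1 → b ^ q ^ l = 1 →
      (Subgroup.zpowers a : Set K) * (Subgroup.zpowers b : Set K) =
        (Subgroup.zpowers b : Set K) * (Subgroup.zpowers a : Set K) := by
    intro p q k l hp hq hpq hpr a b hak hbl
    have haN : a ∈ N := hmem a _ (((Nat.coprime_primes hp hr).2 hpr).pow_left k) hak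
    have hasemi : IsSemipermutable (Subgroup.zpowers (a : G)) :=
      ih _ hcard (Subgroup.zpowers_le.2 (Subgroup.mem_map_of_mem K.subtype haN)) hNsemi rfl
    have hab := hasemi.zpowers_mul_comm (b := (b : G)) hp hq hpq
      (by exact_mod_cast congrArg Subtype.val hak) (by exact_mod_cast congrArg Subtype.val hbl)
    have himage : ∀ c : K, (Subgroup.zpowers (c : G) : Set G) =
        K.subtype '' (Subgroup.zpowers c : Set K) := fun c => by
      rw [← Subgroup.coe_map, MonoidHom.map_zpowers, Subgroup.coe_subtype]
    rw [himage, himage, ← Set.image_mul, ← Set.image_mul] at hab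
    exact K.subtype_injective.image_injective hab
  intro p q k l hp hq hpq a b hak hbl
  rcases eq_or_ne p r with rfl | hpr
  · exact (comm_of_ne q p l k hq hp hpq.symm hpq.symm b a hbl hak).symm
  · exact comm_of_ne p q k l hp hq hpq hpr a b hak hbl

/-- If `A ≤ P` and `B ≤ Q` with `P` and `Q` disjoint, and if `A` permutes with `Q` and `B`
with `P`, then `A` permutes with `B`. -/
theorem Subgroup.mul_comm_of_disjoint {A B P Q : Subgroup G} (hAP : A ≤ P) (hBQ : B ≤ Q)
    (hPQ : Disjoint P Q) (hAQ : (A : Set G) * (Q : Set G) = (Q : Set G) * (A : Set G))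
    (hBP : (B : Set G) * (P : Set G) = (P : Set G) * (B : Set G)) :
    (A : Set G) * (B : Set G) = (B : Set G) * (A : Set G) := by
  refine mul_comm_of_forall_mem fun b hb a ha => ?_
  obtain ⟨c, hc, x, hx, hcx⟩ : b * a ∈ (A : Set G) * (Q : Set G) := hAQ ▸ ⟨b, hBQ hb, a, ha, rfl⟩
  obtain ⟨y, hy, d, hd, hyd⟩ : b * a ∈ (P : Set G) * (B : Set G) := hBP ▸ ⟨b, hb, a, hAP ha, rfl⟩
  simp only at hcx hyd
  have heq : y⁻¹ * c = d * x⁻¹ := by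
    rw [eq_mul_inv_iff_mul_eq, mul_assoc, hcx, ← hyd, inv_mul_cancel_left]
  have hone : d * x⁻¹ = 1 := Subgroup.disjoint_def.1 hPQ
    (heq ▸ P.mul_mem (P.inv_mem hy) (hAP hc)) (Q.mul_mem (hBQ hd) (Q.inv_mem hx))
  exact ⟨c, hc, x, mul_inv_eq_one.1 hone ▸ hd, hcx⟩

/-- If every cyclic subgroup of prime power order is S-semipermutable, then every subgroup is
semipermutable. -/
theorem isSemipermutable_of_cyclic_isSSemipermutable [Finite G]
    (h : ∀ H : Subgroup G, IsCyclic H → (∃ p k : ℕ, p.Prime ∧ Nat.card H = p ^ k) →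
      IsSSemipermutable H) (H : Subgroup G) : IsSemipermutable H := by
  have hzpowers : ∀ p k : ℕ, p.Prime → ∀ a : G, a ^ p ^ k = 1 →
      IsPGroup p (Subgroup.zpowers a) ∧ ∀ q : ℕ, ∀ hq : q.Prime, p ≠ q →
        ∀ Q : Sylow q G, (Subgroup.zpowers a : Set G) * ((Q : Subgroup G) : Set G) =
          ((Q : Subgroup G) : Set G) * (Subgroup.zpowers a : Set G) := by
    intro p k hp a hak
    obtain ⟨j, -, hj⟩ := (Nat.dvd_prime_pow hp).1 (orderOf_dvd_of_pow_eq_one hak)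
    rw [← Nat.card_zpowers] at hj
    refine ⟨IsPGroup.of_card hj, fun q hq hpq Q => ?_⟩
    have : Fact q.Prime := ⟨hq⟩
    refine h _ inferInstance ⟨p, j, hp, hj⟩ q (fun hdvd => hpq ?_) Q
    exact ((Nat.prime_dvd_prime_iff_eq hq hp).1 (hq.dvd_of_dvd_pow (hj ▸ hdvd))).symm
  refine isSemipermutable_of_zpowers_mul_comm (fun p q k l hp hq hpq a b hak hbl => ?_) H
  have : Fact p.Prime := ⟨hp⟩
  have : Fact q.Prime := ⟨hq⟩
  obtain ⟨hapgroup, hacomm⟩ := hzpowers p k hp a hak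
  obtain ⟨hbqgroup, hbcomm⟩ := hzpowers q l hq b hbl
  obtain ⟨P, hP⟩ := hapgroup.exists_le_sylow
  obtain ⟨Q, hQ⟩ := hbqgroup.exists_le_sylow
  exact Subgroup.mul_comm_of_disjoint hP hQ
    (IsPGroup.disjoint_of_ne p q hpq _ _ P.isPGroup' Q.isPGroup')
    (hacomm q hq hpq Q) (hbcomm p hp hpq.symm P)

theorem IsSemipermutable.isSSemipermutable [Finite G] {H : Subgroup G}
    (hH : IsSemipermutable H) : IsSSemipermutable H := by
  intro q hq hdvd Q
  apply hH
  obtain ⟨n, hn⟩ := IsPGroup.iff_card.1 Q.isPGroup'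
  rw [hn]
  exact (((hq.out.coprime_iff_not_dvd).2 hdvd).pow_left n).symm

end Semipermutability

/-- Lemma 2.4: a finite solvable group is a BT-group iff every cyclic subgroup of
prime power order is S-semipermutable. -/
theorem bt_group_iff_cyclic_prime_power_sSemipermutable {G : Type*} [Group G] [Finite G]
    (hsol : IsSolvable G) :
    IsBTGroup G ↔
      ∀ H : Subgroup G, IsCyclic H → (∃ p k : ℕ, p.Prime ∧ Nat.card H = p ^ k) →
        IsSSemipermutable H := by
  refine ⟨fun hG H _ _ => ?_, fun h H _ _ _ _ => isSemipermutable_of_cyclic_isSSemipermutable h H⟩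
  have htop : IsSemipermutable (⊤ : Subgroup G) :=
    Subgroup.Normal.isSemipermutable inferInstance
  have : Group.IsSolvable G := hsol
  exact (hG.isSemipermutable_of_le le_top htop).isSSemipermutable
end

section
/- Let G be a finite group such that G/F(G) is abelian, where F(G) is the Fitting subgroup, and let H be a subgroup of G. Then H is SS-permutable in G if and only if H is NSS-permutable in G. -/
open scoped Pointwise

namespace Subgroup

variable {G : Type*} [Group G]

/-- The index of a normal subgroup `O` in `N ⊔ M`, for `N` normal, divides the product of
the indices in `N` and in `M`. -/
lemma relIndex_sup_dvd_mul (O N M : Subgroup G) [O.Normal] [N.Normal] :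
    O.relIndex (N ⊔ M) ∣ O.relIndex N * O.relIndex M := by
  have h : O.relIndex (O ⊔ N) * (O ⊔ N).relIndex (O ⊔ N ⊔ M) = O.relIndex (O ⊔ (N ⊔ M)) := by
    rw [relIndex_mul_relIndex O (O ⊔ N) (O ⊔ N ⊔ M) le_sup_left le_sup_left, sup_assoc]
  rw [relIndex_sup_left, relIndex_sup_left, relIndex_sup_left] at h
  rw [← h]
  exact mul_dvd_mul_left _ (relIndex_dvd_of_le_left M le_sup_left)

/-- Joining with a normal subgroup can only decrease a relative index, with respect to
divisibility. -/
lemma relIndex_sup_sup_dvd [Finite G] (O : Subgroup G) [O.Normal] {P K : Subgroup G}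
    (hPK : P ≤ K) : (O ⊔ P).relIndex (O ⊔ K) ∣ P.relIndex K := by
  have h₁ : O.relIndex P * (O ⊔ P).relIndex (O ⊔ K) = O.relIndex K := by
    rw [← relIndex_sup_left, relIndex_mul_relIndex O (O ⊔ P) (O ⊔ K) le_sup_left
      (sup_le_sup_left hPK O), relIndex_sup_left]
  have h₂ : O.relIndex P * P.relIndex K = (O ⊓ P).relIndex K := by
    rw [← relIndex_inf_mul_relIndex, inf_eq_left.2 hPK]
  have h₃ : O.relIndex K ∣ (O ⊓ P).relIndex K := relIndex_dvd_of_le_left K inf_le_left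
  rw [← h₁, ← h₂] at h₃
  exact Nat.dvd_of_mul_dvd_mul_left (Nat.pos_of_ne_zero index_ne_zero_of_finite) h₃

/-- The second isomorphism theorem for indices, with the non-normal factor on the bottom. -/
lemma relIndex_sup_of_normal [Finite G] (F A : Subgroup G) [F.Normal] :
    A.relIndex (F ⊔ A) = A.relIndex F := by
  have h₁ : (F ⊓ A).relIndex (F ⊔ A) = F.relIndex A * A.relIndex (F ⊔ A) := by
    rw [← relIndex_inf_mul_relIndex, inf_eq_left.2 (le_sup_right : A ≤ F ⊔ A)]
  have h₂ : (F ⊓ A).relIndex (F ⊔ A) = A.relIndex F * F.relIndex A := by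
    rw [inf_comm, ← relIndex_inf_mul_relIndex, inf_eq_left.2 (le_sup_left : F ≤ F ⊔ A),
      relIndex_sup_left]
  rw [h₁, mul_comm] at h₂
  exact Nat.eq_of_mul_eq_mul_right (Nat.pos_of_ne_zero index_ne_zero_of_finite) h₂

/-- A subgroup generated by normal subgroups in which the normal subgroup `O` has index prime
to `p` also contains `O` with index prime to `p`. -/
lemma not_dvd_relIndex_sSup [Finite G] {p : ℕ} (hp : p.Prime) (O : Subgroup G) [O.Normal]
    (S : Set (Subgroup G)) (hS : ∀ N ∈ S, N.Normal ∧ ¬ p ∣ O.relIndex N) :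
    ¬ p ∣ O.relIndex (sSup S) := by
  induction S, Set.toFinite S using Set.Finite.induction_on with
  | empty => simpa using hp.one_lt.ne'
  | @insert N S _ _ ih =>
    rw [sSup_insert]
    have := (hS N (Set.mem_insert _ _)).1
    intro h
    rcases hp.dvd_mul.1 (h.trans (relIndex_sup_dvd_mul O N (sSup S))) with h | h
    · exact (hS N (Set.mem_insert _ _)).2 h
    · exact ih (fun M hM => hS M (Set.mem_insert_of_mem _ hM)) h

/-- The Fitting subgroup contains a normal `p`-subgroup of `G` of index prime to `p`. -/
lemma exists_normal_isPGroup_not_dvd_relIndex_fitting [Finite G] (p : ℕ) [hp : Fact p.Prime] :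
    ∃ O : Subgroup G, O.Normal ∧ IsPGroup p O ∧
      O ≤ sSup {N : Subgroup G | N.Normal ∧ Group.IsNilpotent N} ∧
      ¬ p ∣ O.relIndex (sSup {N : Subgroup G | N.Normal ∧ Group.IsNilpotent N}) := by
  have hO : (sSup {N : Subgroup G | N.Normal ∧ IsPGroup p N}).Normal :=
    sSup_normal _ fun N hN => hN.1
  refine ⟨sSup {N : Subgroup G | N.Normal ∧ IsPGroup p N}, hO,
    Sylow.sSup_of_normal _ (fun N hN => hN.2) (fun N hN => hN.1),
    sSup_le_sSup fun N hN => ⟨hN.1, hN.2.isNilpotent⟩, ?_⟩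
  refine not_dvd_relIndex_sSup hp.out _ _ ?_
  rintro N ⟨hN, hnil⟩
  refine ⟨hN, fun h => ?_⟩
  obtain ⟨P⟩ : Nonempty (Sylow p N) := inferInstance
  have hPc : (P : Subgroup N).Characteristic := P.characteristic_of_normal inferInstance
  have hPN : ((P : Subgroup N).map N.subtype).Normal := inferInstance
  have hle : (P : Subgroup N).map N.subtype ≤ sSup {N : Subgroup G | N.Normal ∧ IsPGroup p N} :=
    le_sSup ⟨hPN, P.2.map _⟩
  have h' := h.trans (relIndex_dvd_of_le_left N hle)
  rw [relIndex, subgroupOf, comap_map_eq_self_of_injective (subtype_injective _)] at h'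
  exact P.not_dvd_index h'

/-- Mapping a conjugate in `K` to `G` gives the conjugate of the image. -/
lemma map_subtype_conj_smul {K : Subgroup G} (k : K) (P : Subgroup K) :
    (MulAut.conj k • P).map K.subtype = MulAut.conj (k : G) • P.map K.subtype := by
  ext x
  simp only [pointwise_smul_def, mem_map]
  constructor
  · rintro ⟨_, ⟨y, hy, rfl⟩, rfl⟩
    exact ⟨y, ⟨y, hy, rfl⟩, rfl⟩
  · rintro ⟨_, ⟨y, hy, rfl⟩, rfl⟩
    exact ⟨_, ⟨y, hy, rfl⟩, rfl⟩

/-- If `O` is a normal `p`-subgroup of `G` contained in the normal subgroup `F` with index prime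
to `p`, then every Sylow `p`-subgroup of `F ⊔ K` is conjugate to `O ⊔ P`, where `P` is a given
Sylow `p`-subgroup of `K`. -/
lemma exists_sylow_sup_eq_conj_smul [Finite G] {p : ℕ} [hp : Fact p.Prime]
    {O F : Subgroup G} [O.Normal] [F.Normal] (hO : IsPGroup p O) (hOF : O ≤ F)
    (hpF : ¬ p ∣ O.relIndex F) (K : Subgroup G) (P : Sylow p K)
    (Q : Sylow p (F ⊔ K : Subgroup G)) :
    ∃ g : G, (Q : Subgroup (F ⊔ K : Subgroup G)).map (F ⊔ K).subtype =
      MulAut.conj g • (O ⊔ (P : Subgroup K).map K.subtype) := by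
  set R : Subgroup G := O ⊔ (P : Subgroup K).map K.subtype
  have hPK : (P : Subgroup K).map K.subtype ≤ K := map_subtype_le _
  have hRK : R ≤ O ⊔ K := sup_le_sup_left hPK O
  have hKF : O ⊔ K ≤ F ⊔ K := sup_le_sup_right hOF K
  have hRp : IsPGroup p R := hO.to_sup_of_normal_left (P.2.map _)
  have hind : ¬ p ∣ R.relIndex (F ⊔ K) := by
    rw [← relIndex_mul_relIndex R _ _ hRK hKF, hp.out.dvd_mul, not_or]
    constructor
    · intro h
      have h' := h.trans (relIndex_sup_sup_dvd O hPK)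
      rw [relIndex, subgroupOf, comap_map_eq_self_of_injective (subtype_injective _)] at h'
      exact P.not_dvd_index h'
    · have hFK : F ⊔ K = F ⊔ (O ⊔ K) := by rw [← sup_assoc, sup_eq_left.2 hOF]
      rw [hFK, relIndex_sup_of_normal]
      exact fun h => hpF (h.trans (relIndex_dvd_of_le_left F le_sup_left))
  have hRs : IsPGroup p (R.subgroupOf (F ⊔ K)) := hRp.comap_subtype
  rw [relIndex] at hind
  obtain ⟨g, hg⟩ := MulAction.exists_smul_eq (F ⊔ K : Subgroup G) (hRs.toSylow hind) Q
  refine ⟨g, ?_⟩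
  rw [← hg, Sylow.coe_subgroup_smul, IsPGroup.toSylow_coe, map_subtype_conj_smul,
    subgroupOf_map_subtype, inf_eq_left.2 (hRK.trans hKF)]

end Subgroup

section Permute

variable {G : Type*} [Group G]

/-- If `H` permutes with a set, then it permutes with its conjugates under `H`. -/
lemma Subgroup.mul_conj_smul_comm_s15 {H : Subgroup G} {X : Set G}
    (hX : (H : Set G) * X = X * (H : Set G)) {h : G} (hh : h ∈ H) :
    (H : Set G) * (MulAut.conj h • X) = (MulAut.conj h • X) * (H : Set G) := by
  have hH : MulAut.conj h • (H : Set G) = H := by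
    rw [← Subgroup.coe_pointwise_smul, Subgroup.conj_smul_eq_self_of_mem hh]
  calc (H : Set G) * (MulAut.conj h • X)
      = MulAut.conj h • ((H : Set G) * X) := by rw [smul_mul', hH]
    _ = (MulAut.conj h • X) * (H : Set G) := by rw [hX, smul_mul', hH]

/-- If `K` is an SS-permutable supplement of `H`, then `H` permutes with every conjugate of
the product of a normal subgroup and a Sylow subgroup of `K`. -/
lemma IsSSSupplement.mul_conj_smul_sup_comm {H K : Subgroup G} (hK : IsSSSupplement H K)
    {p : ℕ} [Fact p.Prime] (P : Sylow p K) (O : Subgroup G) [O.Normal] (g : G) :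
    (H : Set G) *
        ((MulAut.conj g • (O ⊔ (P : Subgroup K).map K.subtype) : Subgroup G) : Set G) =
      ((MulAut.conj g • (O ⊔ (P : Subgroup K).map K.subtype) : Subgroup G) : Set G) *
        (H : Set G) := by
  obtain ⟨h, hh, k, hk, rfl⟩ : g ∈ (H : Set G) * (K : Set G) := hK.1 ▸ Set.mem_univ g
  have hconj : MulAut.conj k • (P : Subgroup K).map K.subtype =
      (((⟨k, hk⟩ : K) • P : Sylow p K) : Subgroup K).map K.subtype :=
    (Subgroup.map_subtype_conj_smul ⟨k, hk⟩ P).symm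
  have hsup : MulAut.conj k • (O ⊔ (P : Subgroup K).map K.subtype) =
      O ⊔ (((⟨k, hk⟩ : K) • P : Sylow p K) : Subgroup K).map K.subtype := by
    rw [Subgroup.smul_sup, Subgroup.Normal.conj_smul_eq_self, hconj]
  simp only [map_mul, mul_smul]
  rw [hsup, Subgroup.coe_pointwise_smul]
  refine Subgroup.mul_conj_smul_comm_s15 ?_ hh
  rw [Subgroup.normal_mul, ← mul_assoc, Subgroup.set_mul_normal_comm (H : Set G) O, mul_assoc, hK.2 p,
    ← mul_assoc]

end Permute

/-- Lemma 2.5: in a finite group with `G/F(G)` abelian, SS-permutability and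
NSS-permutability coincide. -/
theorem isSSPermutable_iff_isNSSPermutable_of_nilpotent_by_abelian
    {G : Type*} [Group G] [Finite G] (F : Subgroup G) [F.Normal]
    (hF : F = sSup {N : Subgroup G | N.Normal ∧ Group.IsNilpotent N})
    (hab : ∀ a b : G ⧸ F, a * b = b * a) (H : Subgroup G) :
    IsSSPermutable H ↔ IsNSSPermutable H := by
  refine ⟨?_, fun ⟨K, _, hK⟩ => ⟨K, hK⟩⟩
  rintro ⟨K, hK⟩
  refine ⟨F ⊔ K, ⟨fun x hx g => ?_⟩, ?_, fun p _ Q => ?_⟩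
  · have hc : g * x * g⁻¹ * x⁻¹ ∈ F := by
      rw [← QuotientGroup.eq_one_iff]
      simp only [QuotientGroup.mk_mul, QuotientGroup.mk_inv]
      rw [hab (g : G ⧸ F) x]
      group
    simpa using mul_mem (le_sup_left (b := K) hc) hx
  · exact Set.eq_univ_of_univ_subset
      (hK.1 ▸ Set.mul_subset_mul_left (le_sup_right : K ≤ F ⊔ K))
  · obtain ⟨O, hO, hOp, hOF, hind⟩ :=
      Subgroup.exists_normal_isPGroup_not_dvd_relIndex_fitting (G := G) p
    rw [← hF] at hOF hind
    obtain ⟨P⟩ : Nonempty (Sylow p K) := inferInstance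
    obtain ⟨g, hg⟩ := Subgroup.exists_sylow_sup_eq_conj_smul hOp hOF hind K P Q
    rw [hg]
    exact hK.mul_conj_smul_sup_comm P O g
end
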